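/- arXiv:2210.09700 — 3 statements merged into one kernel-verified Lean document; each statement's English description precedes it below -/
import Mathlib

section
/- Let d, ℓ, g be positive integers. Suppose a : {1,...,p} → ℤ>0 and b : {1,...,q} → ℤ>0 are partitions of d (i.e. a₁ + ⋯ + a_p = d and b₁ + ⋯ + b_q = d), and m : {1,...,ℓ} → ℤ>0 satisfies m₁ + ⋯ + m_ℓ = p + q − 2 + 2g and mᵢ + 1 ≤ d for every i. Then there exist ℓ + 2 permutations τ₁, τ₂, σ₁, …, σ_ℓ in the symmetric group S_d such that: (1) τ₁ τ₂ σ₁ ⋯ σ_ℓ = id; (2) the cycle type of τ₁ (as a partition of d, counting each fixed point as a part equal to 1) is (a₁, …, a_p), the cycle type of τ₂ is (b₁, …, b_q), and for each i the permutation σᵢ is a single cycle of length mᵢ + 1 (its cycle type is (mᵢ+1, 1, …, 1)); (3) the subgroup of S_d generated by τ₁, τ₂, σ₁, …, σ_ℓ acts transitively on {1, 2, …, d}. -/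
/-- The cycle type of a permutation of `Fin n`, as a partition of `n`:
the lengths of the cycles in the disjoint cycle decomposition, counting
each fixed point as a part equal to `1`. -/
def fullCycleType {n : ℕ} (σ : Equiv.Perm (Fin n)) : Multiset ℕ :=
  σ.cycleType + Multiset.replicate (n - σ.support.card) 1

/-!
Starting from `τ₂`, the cycles `σ₁, …, σ_ℓ` are multiplied on one after the other until `τ₁⁻¹` is
reached, so everything reduces to single steps between conjugacy classes. These can be chosen
independently because a step can be conjugated to start at any permutation of the given type.

An `(m + 1)`-cycle either merges `m + 1` parts of a partition into one, or, if the partition has at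
most `m` parts, can lead to `{d}` or `{1, d - 1}`, depending on parity. A chain is shortened in this
way from both ends until one cycle is left. The merging steps are explicit. The others require two
permutations of given types whose product is a cycle through every orbit; such pairs are built from
a single point by three moves that each add one point: lengthening a cycle of both permutations,
lengthening a cycle of one and adding a fixed point to the other, and joining two cycles of one,
which raises the genus.
-/

open Equiv Equiv.Perm Finset

section SameCycle

variable {X Y : Type*}

theorem rel_of_sameCycle {σ : Perm X} (r : Setoid X) (hr : ∀ x, r x (σ x)) {x y : X}
    (h : SameCycle σ x y) : r x y := by
  obtain ⟨k, rfl⟩ := h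
  induction k using Int.induction_on with
  | zero => exact r.refl x
  | succ n ih =>
    rw [add_comm, zpow_one_add, Perm.mul_apply]
    exact r.trans ih (hr _)
  | pred n ih =>
    have h := hr ((σ ^ (-(n : ℤ) - 1)) x)
    rw [← Perm.mul_apply, ← zpow_one_add, add_sub_cancel] at h
    exact r.trans ih (r.symm h)

theorem sameCycle_map {σ : Perm X} {τ : Perm Y} (f : X → Y)
    (hf : ∀ x, SameCycle τ (f x) (f (σ x))) {x y : X} (h : SameCycle σ x y) :
    SameCycle τ (f x) (f y) :=
  rel_of_sameCycle ((SameCycle.setoid τ).comap f) hf h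

theorem sameCycle_permCongr (e : X ≃ Y) {σ : Perm X} {x y : X} :
    SameCycle (e.permCongr σ) (e x) (e y) ↔ SameCycle σ x y := by
  constructor <;> intro h
  · simpa using sameCycle_map (τ := σ) e.symm (fun z => ⟨1, by simp⟩) h
  · exact sameCycle_map e (fun z => ⟨1, by simp⟩) h

theorem optionCongr_mul (σ τ : Perm X) :
    optionCongr (σ * τ) = optionCongr σ * optionCongr τ := by
  ext1 (_ | x) <;> rfl

theorem swap_mul_optionCongr [DecidableEq X] (σ : Perm X) (y : X) :
    swap none (some y) * optionCongr σ = (optionCongr σ⁻¹ * swap none (some y))⁻¹ := by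
  rw [mul_inv_rev, swap_inv]
  congr 1

theorem sameCycle_optionCongr {σ : Perm X} {x y : X} :
    SameCycle (optionCongr σ) (some x) (some y) ↔ SameCycle σ x y := by
  constructor <;> intro h
  · refine sameCycle_map (τ := σ) (fun o => o.getD x) ?_ h
    rintro (_ | z)
    · exact SameCycle.refl _ _
    · exact ⟨1, by simp⟩
  · exact sameCycle_map some (fun z => ⟨1, by simp⟩) h

theorem not_sameCycle_none_some (σ : Perm X) (x : X) :
    ¬ SameCycle (optionCongr σ) none (some x) := by
  rintro ⟨k, hk⟩
  rw [zpow_apply_eq_self_of_apply_eq_self (by simp)] at hk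
  cases hk

variable [DecidableEq X] [Finite X] {σ : Perm X} {x y u v : X}

theorem sameCycle_mul_swap_self (h : ¬ SameCycle σ x y) : SameCycle (σ * swap x y) x y := by
  set T := σ * swap x y
  -- The `T`-orbit of `x` follows the `σ`-cycle of `y` until it reaches `y` itself.
  have follow (k : ℕ) : SameCycle T x y ∨ SameCycle T x ((σ ^ (k + 1)) y) := by
    induction k with
    | zero => exact .inr ⟨1, by simp [T]⟩
    | succ k ih =>
      refine ih.elim .inl fun ih => ?_
      set z := (σ ^ (k + 1)) y
      by_cases hy : z = y
      · exact .inl (hy ▸ ih)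
      have hx : z ≠ x := fun hx => h (SameCycle.symm ⟨k + 1, by exact_mod_cast hx⟩)
      refine .inr (ih.trans ⟨1, ?_⟩)
      rw [pow_succ' _ (k + 1), Perm.mul_apply, zpow_one, Perm.mul_apply,
        swap_apply_of_ne_of_ne hx hy]
  have hk := follow (orderOf σ - 1)
  rw [Nat.sub_add_cancel (orderOf_pos σ), pow_orderOf_eq_one] at hk
  exact hk.elim id id

theorem sameCycle_mul_swap_of_sameCycle (h : ¬ SameCycle σ x y) (huv : SameCycle σ u v) :
    SameCycle (σ * swap x y) u v := by
  have hxy := sameCycle_mul_swap_self h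
  refine sameCycle_map id (fun u => ?_) huv
  obtain rfl | hx := eq_or_ne u x
  · exact hxy.trans ⟨1, by simp⟩
  obtain rfl | hy := eq_or_ne u y
  · exact hxy.symm.trans ⟨1, by simp⟩
  exact ⟨1, by simp [swap_apply_of_ne_of_ne hx hy]⟩

theorem sameCycle_mul_swap_iff (h : ¬ SameCycle σ x y) :
    SameCycle (σ * swap x y) u v ↔ SameCycle σ u v ∨
      (SameCycle σ x u ∨ SameCycle σ y u) ∧ (SameCycle σ x v ∨ SameCycle σ y v) := by
  have closed {u v : X} (huv : SameCycle σ u v) (hu : SameCycle σ x u ∨ SameCycle σ y u) :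
      SameCycle σ x v ∨ SameCycle σ y v := hu.imp (·.trans huv) (·.trans huv)
  let r : Setoid X :=
    { r u v := SameCycle σ u v ∨
        (SameCycle σ x u ∨ SameCycle σ y u) ∧ (SameCycle σ x v ∨ SameCycle σ y v)
      iseqv.refl u := .inl (.refl σ u)
      iseqv.symm huv := huv.imp SameCycle.symm And.symm
      iseqv.trans := by
        rintro u v w (huv | ⟨hu, hv⟩) (hvw | ⟨hv', hw⟩)
        · exact .inl (huv.trans hvw)
        · exact .inr ⟨closed huv.symm hv', hw⟩
        · exact .inr ⟨hu, closed hvw hv⟩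
        · exact .inr ⟨hu, hw⟩ }
  constructor
  · refine rel_of_sameCycle r fun u => ?_
    obtain rfl | hx := eq_or_ne u x
    · exact .inr ⟨.inl (.refl _ _), .inr ⟨1, by simp⟩⟩
    obtain rfl | hy := eq_or_ne u y
    · exact .inr ⟨.inr (.refl _ _), .inl ⟨1, by simp⟩⟩
    exact .inl ⟨1, by simp [swap_apply_of_ne_of_ne hx hy]⟩
  · have join {w : X} (hw : SameCycle σ x w ∨ SameCycle σ y w) :
        SameCycle (σ * swap x y) x w :=
      hw.elim (sameCycle_mul_swap_of_sameCycle h) fun hw =>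
        (sameCycle_mul_swap_self h).trans (sameCycle_mul_swap_of_sameCycle h hw)
    rintro (huv | ⟨hu, hv⟩)
    · exact sameCycle_mul_swap_of_sameCycle h huv
    · exact (join hu).symm.trans (join hv)

theorem sameCycle_swap_mul_iff (h : ¬ SameCycle σ x y) :
    SameCycle (swap x y * σ) u v ↔ SameCycle σ u v ∨
      (SameCycle σ x u ∨ SameCycle σ y u) ∧ (SameCycle σ x v ∨ SameCycle σ y v) := by
  have h' : ¬ SameCycle σ⁻¹ x y := by rwa [sameCycle_inv]
  rw [← sameCycle_inv, mul_inv_rev, swap_inv, sameCycle_mul_swap_iff h']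
  simp only [sameCycle_inv]

theorem sameCycle_optionCongr_mul_swap (y : X) (h : SameCycle σ u v) :
    SameCycle (optionCongr σ * swap none (some y)) (some u) (some v) :=
  sameCycle_mul_swap_of_sameCycle (not_sameCycle_none_some σ y) (sameCycle_optionCongr.2 h)

theorem sameCycle_swap_mul_optionCongr (y : X) (h : SameCycle σ u v) :
    SameCycle (swap none (some y) * optionCongr σ) (some u) (some v) := by
  rw [swap_mul_optionCongr, sameCycle_inv]
  exact sameCycle_optionCongr_mul_swap y h.inv

end SameCycle

section CycleSizes

theorem map_card_image_map {X Y : Type*} [DecidableEq Y] (f : X ↪ Y) (S : Finset (Finset X)) :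
    (S.image (map f)).val.map card = S.val.map card := by
  rw [image_val_of_injOn (map_injective f).injOn, Multiset.map_map]
  simp only [Function.comp_def, card_map]

variable {X Y : Type*} [Fintype X] [DecidableEq X] [Fintype Y] [DecidableEq Y]

/-- The orbit of `x` under `σ`, a singleton if `x` is fixed. -/
def cycleSet (σ : Perm X) (x : X) : Finset X := {y | SameCycle σ x y}

/-- The sizes of all orbits of `σ`. This agrees with `Equiv.Perm.partition`, but it is symmetric in
fixed points and longer cycles, so that it behaves well under multiplication by transpositions. -/
def cycleSizes (σ : Perm X) : Multiset ℕ := (univ.image (cycleSet σ)).val.map card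

variable {σ τ : Perm X} {x y : X} {A : Multiset ℕ}

@[simp]
theorem mem_cycleSet : y ∈ cycleSet σ x ↔ SameCycle σ x y := by simp [cycleSet]

theorem cycleSet_eq_iff : cycleSet σ x = cycleSet σ y ↔ SameCycle σ x y := by
  refine ⟨fun h => ?_, fun h => ?_⟩
  · rw [← mem_cycleSet, h, mem_cycleSet]
  · ext z
    simp only [mem_cycleSet]
    exact ⟨h.symm.trans, h.trans⟩

theorem cycleSet_inv : cycleSet σ⁻¹ = cycleSet σ := by
  ext x y
  simp only [mem_cycleSet, sameCycle_inv]

theorem cycleSizes_inv : cycleSizes σ⁻¹ = cycleSizes σ := by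
  rw [cycleSizes, cycleSet_inv, cycleSizes]

theorem cycleSet_eq_support_cycleOf (hx : x ∈ σ.support) :
    cycleSet σ x = (σ.cycleOf x).support := by
  ext y
  simp only [mem_cycleSet, mem_support_cycleOf_iff, hx, and_true]

theorem card_cycleSet_of_notMem_support (hx : x ∉ σ.support) : #(cycleSet σ x) = 1 := by
  refine card_eq_one.2 ⟨x, ?_⟩
  ext y
  rw [mem_cycleSet, mem_singleton]
  exact ⟨fun h => (h.eq_of_left (notMem_support.1 hx)).symm, fun h => h ▸ .refl _ _⟩

theorem image_cycleSet_support (σ : Perm X) :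
    σ.support.image (cycleSet σ) = σ.cycleFactorsFinset.image support := by
  ext s
  simp only [mem_image]
  constructor
  · rintro ⟨x, hx, rfl⟩
    exact ⟨σ.cycleOf x, cycleOf_mem_cycleFactorsFinset_iff.2 hx,
      (cycleSet_eq_support_cycleOf hx).symm⟩
  · rintro ⟨c, hc, rfl⟩
    obtain ⟨x, hx⟩ := (mem_cycleFactorsFinset_iff.1 hc).1.nonempty_support
    have hxσ := mem_cycleFactorsFinset_support_le hc hx
    exact ⟨x, hxσ, by rw [cycleSet_eq_support_cycleOf hxσ, cycle_is_cycleOf hx hc]⟩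

theorem injOn_support_cycleFactorsFinset (σ : Perm X) :
    Set.InjOn support (σ.cycleFactorsFinset : Set (Perm X)) := by
  intro c hc c' hc' h
  obtain ⟨x, hx⟩ := (mem_cycleFactorsFinset_iff.1 hc).1.nonempty_support
  rw [cycle_is_cycleOf hx hc, cycle_is_cycleOf (h ▸ hx) hc']

theorem cycleSizes_eq_parts_partition (σ : Perm X) : cycleSizes σ = σ.partition.parts := by
  have hfixed : (σ.supportᶜ.image (cycleSet σ)).val.map card =
      Multiset.replicate (Fintype.card X - #σ.support) 1 := by
    rw [Multiset.eq_replicate, Multiset.card_map, ← card_compl]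
    constructor
    · refine card_image_of_injOn fun x hx y _ h => ?_
      exact (cycleSet_eq_iff.1 h).eq_of_left (notMem_support.1 (mem_compl.1 hx))
    · simp only [Multiset.mem_map, mem_val, mem_image, mem_compl]
      rintro _ ⟨_, ⟨x, hx, rfl⟩, rfl⟩
      exact card_cycleSet_of_notMem_support hx
  have hdisj : Disjoint (σ.support.image (cycleSet σ)) (σ.supportᶜ.image (cycleSet σ)) := by
    simp only [disjoint_left, mem_image, mem_compl]
    rintro _ ⟨x, hx, rfl⟩ ⟨y, hy, hxy⟩
    exact hy ((cycleSet_eq_iff.1 hxy.symm).mem_support_iff.1 hx)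
  rw [cycleSizes, ← union_compl σ.support, image_union, ← disjUnion_eq_union _ _ hdisj,
    disjUnion_val, Multiset.map_add, hfixed, image_cycleSet_support,
    image_val_of_injOn (injOn_support_cycleFactorsFinset σ), Multiset.map_map, ← cycleType_def,
    parts_partition]

theorem isConj_iff_cycleSizes_eq : IsConj σ τ ↔ cycleSizes σ = cycleSizes τ := by
  rw [partition_eq_of_isConj, cycleSizes_eq_parts_partition, cycleSizes_eq_parts_partition,
    Nat.Partition.ext_iff]

theorem fullCycleType_eq_cycleSizes {d : ℕ} (σ : Perm (Fin d)) :
    fullCycleType σ = cycleSizes σ := by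
  rw [fullCycleType, cycleSizes_eq_parts_partition, parts_partition, Fintype.card_fin]

theorem sum_cycleSizes (σ : Perm X) : (cycleSizes σ).sum = Fintype.card X := by
  rw [cycleSizes_eq_parts_partition, σ.partition.parts_sum]

theorem exists_of_mem_cycleSizes {u : ℕ} (h : u ∈ cycleSizes σ) : ∃ x, #(cycleSet σ x) = u := by
  simpa [cycleSizes] using h

theorem card_cycleSet_mem_cycleSizes (σ : Perm X) (x : X) : #(cycleSet σ x) ∈ cycleSizes σ :=
  Multiset.mem_map_of_mem _ (mem_image_of_mem _ (mem_univ x))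

theorem cycleSizes_eq_cons_erase (σ : Perm X) (x : X) : cycleSizes σ =
    #(cycleSet σ x) ::ₘ ((univ.image (cycleSet σ)).erase (cycleSet σ x)).val.map card := by
  rw [cycleSizes, ← Multiset.map_cons, ← insert_val_of_notMem (notMem_erase _ _),
    insert_erase (mem_image_of_mem _ (mem_univ x))]

theorem exists_not_sameCycle {v : ℕ} (h : cycleSizes σ = #(cycleSet σ x) ::ₘ v ::ₘ A) :
    ∃ y, ¬ SameCycle σ x y ∧ #(cycleSet σ y) = v := by
  have hv : v ∈ ((univ.image (cycleSet σ)).erase (cycleSet σ x)).val.map card := by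
    rw [cycleSizes_eq_cons_erase σ x, Multiset.cons_inj_right] at h
    exact h ▸ Multiset.mem_cons_self v A
  obtain ⟨s, hs, rfl⟩ := Multiset.mem_map.1 hv
  obtain ⟨hne, hs⟩ := mem_erase.1 hs
  obtain ⟨y, -, rfl⟩ := mem_image.1 hs
  exact ⟨y, fun hxy => hne (cycleSet_eq_iff.2 hxy.symm), rfl⟩

theorem cycleSizes_permCongr (e : X ≃ Y) (σ : Perm X) :
    cycleSizes (e.permCongr σ) = cycleSizes σ := by
  have hset : cycleSet (e.permCongr σ) ∘ e = map e.toEmbedding ∘ cycleSet σ := by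
    ext x y
    obtain ⟨y, rfl⟩ := e.surjective y
    simp [sameCycle_permCongr]
  rw [cycleSizes, ← image_univ_equiv e, image_image, hset, ← image_image, map_card_image_map,
    cycleSizes]

theorem disjoint_cycleSet (h : ¬ SameCycle σ x y) : Disjoint (cycleSet σ x) (cycleSet σ y) :=
  disjoint_left.2 fun _ hx hy => h ((mem_cycleSet.1 hx).trans (mem_cycleSet.1 hy).symm)

theorem cycleSet_mul_swap_left (h : ¬ SameCycle σ x y) :
    cycleSet (σ * swap x y) x = cycleSet σ x ∪ cycleSet σ y := by
  ext z
  simp only [mem_cycleSet, sameCycle_mul_swap_iff h, mem_union, SameCycle.refl, true_or, true_and]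
  tauto

theorem cycleSet_mul_swap_of_not_sameCycle {z : X} (h : ¬ SameCycle σ x y)
    (hx : ¬ SameCycle σ x z) (hy : ¬ SameCycle σ y z) :
    cycleSet (σ * swap x y) z = cycleSet σ z := by
  ext w
  simp [sameCycle_mul_swap_iff h, hx, hy]

theorem card_cycleSet_mul_swap_left (h : ¬ SameCycle σ x y) :
    #(cycleSet (σ * swap x y) x) = #(cycleSet σ x) + #(cycleSet σ y) := by
  rw [cycleSet_mul_swap_left h, card_union_of_disjoint (disjoint_cycleSet h)]

theorem cycleSizes_mul_swap (h : ¬ SameCycle σ x y)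
    (hσ : cycleSizes σ = #(cycleSet σ x) ::ₘ #(cycleSet σ y) ::ₘ A) :
    cycleSizes (σ * swap x y) = (#(cycleSet σ x) + #(cycleSet σ y)) ::ₘ A := by
  have hrest : (univ.image (cycleSet (σ * swap x y))).erase (cycleSet (σ * swap x y) x) =
      ((univ.image (cycleSet σ)).erase (cycleSet σ x)).erase (cycleSet σ y) := by
    have joined (z : X) : SameCycle (σ * swap x y) z x ↔ SameCycle σ z x ∨ SameCycle σ z y := by
      rw [sameCycle_comm, ← mem_cycleSet, cycleSet_mul_swap_left h, mem_union, mem_cycleSet,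
        mem_cycleSet, sameCycle_comm, @sameCycle_comm _ _ y]
    ext s
    simp only [mem_erase, mem_image, mem_univ, true_and]
    constructor
    · rintro ⟨hne, z, rfl⟩
      rw [Ne, cycleSet_eq_iff, joined, not_or] at hne
      rw [cycleSet_mul_swap_of_not_sameCycle h (mt .symm hne.1) (mt .symm hne.2)]
      simp only [Ne, cycleSet_eq_iff]
      exact ⟨hne.2, hne.1, z, .refl _ _⟩
    · rintro ⟨hy, hx, z, rfl⟩
      rw [Ne, cycleSet_eq_iff] at hx hy
      rw [← cycleSet_mul_swap_of_not_sameCycle h (mt .symm hx) (mt .symm hy), Ne,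
        cycleSet_eq_iff, joined, not_or]
      exact ⟨⟨hx, hy⟩, z, rfl⟩
  have hy : cycleSet σ y ∈ (univ.image (cycleSet σ)).erase (cycleSet σ x) :=
    mem_erase.2 ⟨mt cycleSet_eq_iff.1 (mt .symm h), mem_image_of_mem _ (mem_univ y)⟩
  rw [cycleSizes_eq_cons_erase _ x, card_cycleSet_mul_swap_left h, hrest]
  rw [cycleSizes_eq_cons_erase _ x, Multiset.cons_inj_right, ← insert_erase hy,
    insert_val_of_notMem (notMem_erase _ _), Multiset.map_cons, Multiset.cons_inj_right] at hσ
  rw [hσ]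

theorem cycleSet_optionCongr_some (σ : Perm X) (x : X) :
    cycleSet (optionCongr σ) (some x) = (cycleSet σ x).map .some := by
  ext (_ | y)
  · simpa using fun h => not_sameCycle_none_some σ x (SameCycle.symm h)
  · simp [sameCycle_optionCongr]

theorem cycleSet_optionCongr_none (σ : Perm X) : cycleSet (optionCongr σ) none = {none} := by
  ext (_ | y)
  · simp [SameCycle.refl]
  · simpa using not_sameCycle_none_some σ y

theorem cycleSizes_optionCongr (σ : Perm X) :
    cycleSizes (optionCongr σ) = 1 ::ₘ cycleSizes σ := by
  have herase : (univ.image (cycleSet (optionCongr σ))).erase {none} =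
      (univ.image (cycleSet σ)).image (map .some) := by
    ext s
    simp only [mem_erase, mem_image, mem_univ, true_and, Option.exists, cycleSet_optionCongr_none,
      cycleSet_optionCongr_some, exists_exists_eq_and]
    constructor
    · rintro ⟨hne, h | h⟩
      exacts [absurd h.symm hne, h]
    · rintro ⟨x, rfl⟩
      refine ⟨fun h => ?_, .inr ⟨x, rfl⟩⟩
      simpa using h.symm.subset (mem_singleton_self none)
  rw [cycleSizes_eq_cons_erase _ none, cycleSet_optionCongr_none, card_singleton, herase,
    map_card_image_map, cycleSizes]

/-- `none` is inserted into the cycle of `y`, just after `y`. -/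
theorem cycleSizes_optionCongr_mul_swap (hσ : cycleSizes σ = #(cycleSet σ y) ::ₘ A) :
    cycleSizes (optionCongr σ * swap none (some y)) = (#(cycleSet σ y) + 1) ::ₘ A := by
  have h := cycleSizes_mul_swap (A := A) (not_sameCycle_none_some σ y)
  rw [cycleSet_optionCongr_none, cycleSet_optionCongr_some, card_map, card_singleton,
    cycleSizes_optionCongr, hσ, add_comm] at h
  exact h rfl

theorem card_cycleSet_optionCongr_mul_swap :
    #(cycleSet (optionCongr σ * swap none (some y)) none) = #(cycleSet σ y) + 1 := by
  rw [card_cycleSet_mul_swap_left (not_sameCycle_none_some σ y), cycleSet_optionCongr_none,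
    cycleSet_optionCongr_some, card_map, card_singleton, add_comm]

theorem cycleSizes_swap_mul_optionCongr
    (hσ : cycleSizes σ = #(cycleSet σ y) ::ₘ A) :
    cycleSizes (swap none (some y) * optionCongr σ) = (#(cycleSet σ y) + 1) ::ₘ A := by
  rw [← cycleSet_inv, ← cycleSizes_inv] at hσ
  rw [swap_mul_optionCongr, cycleSizes_inv, cycleSizes_optionCongr_mul_swap hσ, cycleSet_inv]

theorem card_cycleSet_swap_mul_optionCongr :
    #(cycleSet (swap none (some y) * optionCongr σ) none) = #(cycleSet σ y) + 1 := by
  rw [swap_mul_optionCongr, cycleSet_inv, card_cycleSet_optionCongr_mul_swap, cycleSet_inv]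

end CycleSizes

section SingleCycle

variable {X Y : Type*}

/-- `Q` is a single cycle through all the elements of `s` and fixes everything else. In contrast to
`Equiv.Perm.IsCycle`, the set `s` may be a singleton. -/
structure IsSingleCycle (Q : Perm X) (s : Finset X) : Prop where
  apply_eq_self : ∀ x ∉ s, Q x = x
  sameCycle : ∀ x ∈ s, ∀ y ∈ s, SameCycle Q x y

variable {Q : Perm X} {s : Finset X} {x y w : X}

theorem IsSingleCycle.inv (h : IsSingleCycle Q s) : IsSingleCycle Q⁻¹ s where
  apply_eq_self x hx := inv_eq_iff_eq.2 (h.apply_eq_self x hx).symm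
  sameCycle x hx y hy := (h.sameCycle x hx y hy).inv

theorem IsSingleCycle.permCongr (h : IsSingleCycle Q s) (e : X ≃ Y) :
    IsSingleCycle (e.permCongr Q) (s.map e.toEmbedding) where
  apply_eq_self y hy := by
    rw [mem_map_equiv] at hy
    simp [h.apply_eq_self _ hy]
  sameCycle y hy z hz := by
    rw [mem_map_equiv] at hy hz
    simpa using (sameCycle_permCongr e).2 (h.sameCycle _ hy _ hz)

theorem IsSingleCycle.optionCongr (h : IsSingleCycle Q s) :
    IsSingleCycle (optionCongr Q) (s.map .some) where
  apply_eq_self := by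
    rintro (_ | x) hx
    · simp
    · simp [h.apply_eq_self x (by simpa using hx)]
  sameCycle x hx y hy := by
    rw [mem_map] at hx hy
    obtain ⟨x, hx, rfl⟩ := hx
    obtain ⟨y, hy, rfl⟩ := hy
    exact sameCycle_optionCongr.2 (h.sameCycle x hx y hy)

theorem IsSingleCycle.isCycle (h : IsSingleCycle Q s) (hs : 2 ≤ #s) : IsCycle Q := by
  obtain ⟨x, hx, y, hy, hxy⟩ := one_lt_card.1 hs
  refine ⟨x, fun hfix => hxy ((h.sameCycle x hx y hy).eq_of_left hfix), fun z hz => ?_⟩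
  exact h.sameCycle x hx z (by_contra fun hzs => hz (h.apply_eq_self z hzs))

variable [DecidableEq X]

theorem IsSingleCycle.mul_swap_apply_eq_self (h : IsSingleCycle Q s) (hx : x ∈ s) (hy : y ∈ s) :
    ∀ z ∉ s, (Q * swap x y) z = z := fun z hz => by
  rw [Perm.mul_apply, swap_apply_of_ne_of_ne (by rintro rfl; exact hz hx)
    (by rintro rfl; exact hz hy), h.apply_eq_self z hz]

theorem IsSingleCycle.support_eq [Fintype X] (h : IsSingleCycle Q s) (hs : 2 ≤ #s) :
    Q.support = s := by
  ext x
  rw [mem_support]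
  refine ⟨fun hx => by_contra fun hxs => hx (h.apply_eq_self x hxs), fun hxs hx => ?_⟩
  obtain ⟨y, hy, hyx⟩ := exists_mem_ne hs x
  exact hyx ((h.sameCycle x hxs y hy).eq_of_left hx).symm

variable [Finite X]

theorem IsSingleCycle.sameCycle_mul_swap_or (h : IsSingleCycle Q s) (hx : x ∈ s) {z : X}
    (hz : z ∈ s) : SameCycle (Q * swap x y) x z ∨ SameCycle (Q * swap x y) y z := by
  obtain ⟨k, rfl⟩ := (h.sameCycle x hx z hz).exists_nat_pow_eq
  clear hz
  induction k with
  | zero => exact .inl (.refl _ _)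
  | succ k ih =>
    rw [pow_succ', Perm.mul_apply]
    set z := (Q ^ k) x
    obtain hzx | hzx := eq_or_ne z x
    · exact .inr ⟨1, by simp [hzx]⟩
    obtain hzy | hzy := eq_or_ne z y
    · exact .inl ⟨1, by simp [hzy]⟩
    have hstep : SameCycle (Q * swap x y) z (Q z) :=
      ⟨1, by simp [swap_apply_of_ne_of_ne hzx hzy]⟩
    exact ih.imp (·.trans hstep) (·.trans hstep)

theorem IsSingleCycle.not_sameCycle_mul_swap (h : IsSingleCycle Q s) (hx : x ∈ s) (hy : y ∈ s)
    (hxy : x ≠ y) : ¬ SameCycle (Q * swap x y) x y := by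
  intro hR
  cases nonempty_fintype X
  have hs : 2 ≤ #s := one_lt_card.2 ⟨x, hx, y, hy, hxy⟩
  have join {z : X} (hz : z ∈ s) : SameCycle (Q * swap x y) x z :=
    (h.sameCycle_mul_swap_or hx hz).elim id hR.trans
  have hQ : IsSingleCycle (Q * swap x y) s :=
    ⟨h.mul_swap_apply_eq_self hx hy, fun _ hz _ hw => (join hz).symm.trans (join hw)⟩
  -- Both permutations would be cycles of length `#s`, but their signs differ.
  have hsign : sign (Q * swap x y) = sign Q := by
    rw [(hQ.isCycle hs).sign, (h.isCycle hs).sign, hQ.support_eq hs, h.support_eq hs]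
  rw [Perm.sign_mul, sign_swap hxy] at hsign
  simp at hsign

theorem IsSingleCycle.mul_swap (h : IsSingleCycle Q s) (hx : x ∈ s) (hy : y ∉ s) :
    IsSingleCycle (Q * swap x y) (insert y s) where
  apply_eq_self z hz := by
    rw [mem_insert, not_or] at hz
    rw [Perm.mul_apply, swap_apply_of_ne_of_ne (by rintro rfl; exact hz.2 hx) hz.1,
      h.apply_eq_self z hz.2]
  sameCycle := by
    have hxy : ¬ SameCycle Q x y := fun hxy =>
      hy (hxy.symm.eq_of_left (h.apply_eq_self y hy) ▸ hx)
    have join {z : X} (hz : z ∈ insert y s) : SameCycle Q x z ∨ SameCycle Q y z := by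
      rcases mem_insert.1 hz with rfl | hz
      exacts [.inr (.refl _ _), .inl (h.sameCycle x hx z hz)]
    exact fun z hz w hw => (sameCycle_mul_swap_iff hxy).2 (.inr ⟨join hz, join hw⟩)

theorem IsSingleCycle.optionCongr_mul_swap (h : IsSingleCycle Q s) (hy : y ∈ s) :
    IsSingleCycle (Equiv.optionCongr Q * swap none (some y)) (insertNone s) := by
  have hnone : none ∉ s.map (.some : X ↪ Option X) := by simp
  have hinsert : insertNone s = insert none (s.map .some) := by
    ext (_ | x) <;> simp
  rw [swap_comm, hinsert]
  exact h.optionCongr.mul_swap (mem_map_of_mem _ hy) hnone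

theorem isSingleCycle_swap_mul_optionCongr_mul_swap (hfix : ∀ z ∉ s, Q z = z)
    (hcover : ∀ z ∈ s, SameCycle Q y z ∨ SameCycle Q w z) (hyw : ¬ SameCycle Q y w) (hy : y ∈ s)
    (hw : w ∈ s) :
    IsSingleCycle (swap none (some w) * (Equiv.optionCongr Q * swap none (some y)))
      (insertNone s) where
  apply_eq_self := by
    rintro (_ | x) hx
    · simp at hx
    · rw [some_mem_insertNone] at hx
      have hxy : x ≠ y := by rintro rfl; exact hx hy
      have hxw : x ≠ w := by rintro rfl; exact hx hw
      simp [swap_apply_of_ne_of_ne, hxy, hxw, hfix x hx]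
  sameCycle u hu v hv := by
    set P := Equiv.optionCongr Q * swap none (some y) with hP
    have hnone := not_sameCycle_none_some Q y
    have hsplit : ¬ SameCycle P none (some w) := by
      simp [hP, sameCycle_mul_swap_iff hnone, not_sameCycle_none_some, sameCycle_optionCongr, hyw]
    have join {u : Option X} (hu : u ∈ insertNone s) :
        SameCycle P none u ∨ SameCycle P (some w) u := by
      cases u with
      | none => exact .inl (.refl _ _)
      | some x =>
        refine (hcover x (some_mem_insertNone.1 hu)).imp (fun hx => ?_) fun hx => ?_
        · exact (sameCycle_mul_swap_iff hnone).2
            (.inr ⟨.inl (.refl _ _), .inr (sameCycle_optionCongr.2 hx)⟩)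
        · exact sameCycle_mul_swap_of_sameCycle hnone (sameCycle_optionCongr.2 hx)
    exact (sameCycle_swap_mul_iff hsplit).2 (.inr ⟨join hu, join hv⟩)

end SingleCycle

section Realizable

theorem meets_insertNone {X : Type*} {s : Finset X} {σ : Perm X} {τ : Perm (Option X)}
    (hτ : ∀ {x y}, SameCycle σ x y → SameCycle τ (some x) (some y))
    (h : ∀ x, ∃ y ∈ s, SameCycle σ x y) (o : Option X) : ∃ y ∈ insertNone s, SameCycle τ o y := by
  cases o with
  | none => exact ⟨none, none_mem_insertNone, .refl _ _⟩
  | some x =>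
    obtain ⟨y, hy, hxy⟩ := h x
    exact ⟨some y, some_mem_insertNone.2 hy, hτ hxy⟩

theorem meets_map_some {X : Type*} {s : Finset X} {z : X} {σ : Perm X} {τ : Perm (Option X)}
    (hτ : ∀ {x y}, SameCycle σ x y → SameCycle τ (some x) (some y)) (hz : SameCycle τ none (some z))
    (h : ∀ x, ∃ y ∈ s, SameCycle σ x y) (o : Option X) :
    ∃ y ∈ s.map .some, SameCycle τ o y := by
  cases o with
  | none =>
    obtain ⟨y, hy, hzy⟩ := h z
    exact ⟨some y, mem_map_of_mem _ hy, hz.trans (hτ hzy)⟩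
  | some x =>
    obtain ⟨y, hy, hxy⟩ := h x
    exact ⟨some y, mem_map_of_mem _ hy, hτ hxy⟩

variable {X : Type} [Finite X] [DecidableEq X] {t₁ t₂ : Perm X} {s : Finset X} {y y₁ y₂ z w : X}

/-- The product `t₂ * t₁` is a single cycle on `s`, and `s` meets all cycles of `t₁` and `t₂`. The
last two conditions make the group generated by `t₁` and `t₂` transitive. -/
structure IsRealization {X : Type} (t₁ t₂ : Perm X) (s : Finset X) : Prop where
  isSingleCycle : IsSingleCycle (t₂ * t₁) s
  meets_left : ∀ x, ∃ y ∈ s, SameCycle t₁ x y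
  meets_right : ∀ x, ∃ y ∈ s, SameCycle t₂ x y

/-- There is a realization whose permutations have cycle sizes `a` and `b` and whose product is a
cycle of length `n`. -/
def Realizable (a b : Multiset ℕ) (n : ℕ) : Prop :=
  ∃ (X : Type) (_ : Fintype X) (_ : DecidableEq X) (t₁ t₂ : Perm X) (s : Finset X),
    IsRealization t₁ t₂ s ∧ cycleSizes t₁ = a ∧ cycleSizes t₂ = b ∧ #s = n

/-- `Realizable (u ::ₘ A) (v ::ₘ B) n`, with some point lying both in a cycle of length `u` and in a
cycle of length `v`. -/
def RealizableAt (u : ℕ) (A : Multiset ℕ) (v : ℕ) (B : Multiset ℕ) (n : ℕ) : Prop :=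
  ∃ (X : Type) (_ : Fintype X) (_ : DecidableEq X) (t₁ t₂ : Perm X) (s : Finset X) (z : X),
    IsRealization t₁ t₂ s ∧ #(cycleSet t₁ z) = u ∧ #(cycleSet t₂ z) = v ∧
      cycleSizes t₁ = u ::ₘ A ∧ cycleSizes t₂ = v ::ₘ B ∧ #s = n

theorem RealizableAt.realizable {u v n : ℕ} {A B : Multiset ℕ} (h : RealizableAt u A v B n) :
    Realizable (u ::ₘ A) (v ::ₘ B) n := by
  obtain ⟨X, i, j, t₁, t₂, s, -, h, -, -, h₁, h₂, hs⟩ := h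
  exact ⟨X, i, j, t₁, t₂, s, h, h₁, h₂, hs⟩

theorem IsRealization.symm {X : Type} {t₁ t₂ : Perm X} {s : Finset X}
    (h : IsRealization t₁ t₂ s) : IsRealization t₂⁻¹ t₁⁻¹ s where
  isSingleCycle := mul_inv_rev t₂ t₁ ▸ h.isSingleCycle.inv
  meets_left x := by simpa only [sameCycle_inv] using h.meets_right x
  meets_right x := by simpa only [sameCycle_inv] using h.meets_left x

theorem IsRealization.permCongr {X Y : Type} {t₁ t₂ : Perm X} {s : Finset X}
    (h : IsRealization t₁ t₂ s) (e : X ≃ Y) :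
    IsRealization (e.permCongr t₁) (e.permCongr t₂) (s.map e.toEmbedding) where
  isSingleCycle := (map_mul e.permCongrHom t₂ t₁) ▸ h.isSingleCycle.permCongr e
  meets_left := e.surjective.forall.2 fun x => by
    obtain ⟨y, hy, hxy⟩ := h.meets_left x
    exact ⟨e y, mem_map_of_mem _ hy, (sameCycle_permCongr e).2 hxy⟩
  meets_right := e.surjective.forall.2 fun x => by
    obtain ⟨y, hy, hxy⟩ := h.meets_right x
    exact ⟨e y, mem_map_of_mem _ hy, (sameCycle_permCongr e).2 hxy⟩

theorem Realizable.symm {a b : Multiset ℕ} {n : ℕ} (h : Realizable a b n) : Realizable b a n := by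
  obtain ⟨X, i, j, t₁, t₂, s, h, h₁, h₂, hs⟩ := h
  exact ⟨X, i, j, t₂⁻¹, t₁⁻¹, s, h.symm, by rwa [cycleSizes_inv], by rwa [cycleSizes_inv], hs⟩

theorem RealizableAt.symm {u v n : ℕ} {A B : Multiset ℕ} (h : RealizableAt u A v B n) :
    RealizableAt v B u A n := by
  obtain ⟨X, i, j, t₁, t₂, s, z, h, hu, hv, h₁, h₂, hs⟩ := h
  refine ⟨X, i, j, t₂⁻¹, t₁⁻¹, s, z, h.symm, ?_, ?_, ?_, ?_, hs⟩ <;>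
    simpa only [cycleSizes_inv, cycleSet_inv]

theorem IsRealization.grow (h : IsRealization t₁ t₂ s) (z : X) :
    IsRealization (swap none (some z) * optionCongr t₁) (optionCongr t₂ * swap none (some z))
      (s.map .some) where
  isSingleCycle := by
    rw [mul_assoc, swap_mul_self_mul, ← optionCongr_mul]
    exact h.isSingleCycle.optionCongr
  meets_left := meets_map_some (sameCycle_swap_mul_optionCongr z)
    (by
      rw [swap_mul_optionCongr, sameCycle_inv]
      exact sameCycle_mul_swap_self (not_sameCycle_none_some _ _))
    h.meets_left
  meets_right := meets_map_some (sameCycle_optionCongr_mul_swap z)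
    (sameCycle_mul_swap_self (not_sameCycle_none_some _ _)) h.meets_right

theorem RealizableAt.grow {u v n : ℕ} {A B : Multiset ℕ} (h : RealizableAt u A v B n) :
    RealizableAt (u + 1) A (v + 1) B n := by
  obtain ⟨X, _, _, t₁, t₂, s, z, h, rfl, rfl, h₁, h₂, rfl⟩ := h
  exact ⟨Option X, inferInstance, inferInstance, _, _, _, none, h.grow z,
    card_cycleSet_swap_mul_optionCongr, card_cycleSet_optionCongr_mul_swap,
    cycleSizes_swap_mul_optionCongr h₁, cycleSizes_optionCongr_mul_swap h₂, card_map _⟩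

theorem IsRealization.leaf (h : IsRealization t₁ t₂ s) (hy : y ∈ s) :
    IsRealization (optionCongr t₁ * swap none (some y)) (optionCongr t₂) (insertNone s) where
  isSingleCycle := by
    rw [← mul_assoc, ← optionCongr_mul]
    exact h.isSingleCycle.optionCongr_mul_swap hy
  meets_left := meets_insertNone (sameCycle_optionCongr_mul_swap y) h.meets_left
  meets_right := meets_insertNone sameCycle_optionCongr.2 h.meets_right

theorem exists_mem_card_cycleSet_eq {X : Type*} [Fintype X] [DecidableEq X] {s : Finset X}
    {σ : Perm X} {u : ℕ} (hσ : u ∈ cycleSizes σ) (h : ∀ x, ∃ y ∈ s, SameCycle σ x y) :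
    ∃ y ∈ s, #(cycleSet σ y) = u := by
  obtain ⟨x, rfl⟩ := exists_of_mem_cycleSizes hσ
  obtain ⟨y, hy, hxy⟩ := h x
  exact ⟨y, hy, by rw [cycleSet_eq_iff.2 hxy]⟩

theorem Realizable.leaf {u n : ℕ} {A B : Multiset ℕ} (h : Realizable (u ::ₘ A) B n) :
    RealizableAt (u + 1) A 1 B (n + 1) := by
  obtain ⟨X, _, _, t₁, t₂, s, h, h₁, rfl, rfl⟩ := h
  obtain ⟨y, hy, rfl⟩ :=
    exists_mem_card_cycleSet_eq (h₁ ▸ Multiset.mem_cons_self u A) h.meets_left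
  exact ⟨Option X, inferInstance, inferInstance, _, _, _, none, h.leaf hy,
    card_cycleSet_optionCongr_mul_swap, by rw [cycleSet_optionCongr_none, card_singleton],
    cycleSizes_optionCongr_mul_swap h₁, cycleSizes_optionCongr t₂, card_insertNone s⟩

/-- Multiplying by `swap y₁ y₂` joins two cycles of `t₁` but splits the cycle `t₂ * t₁` into the
parts of `y` and `w`; the new point `none` reconnects them. -/
theorem IsRealization.raise (h : IsRealization t₁ t₂ s) (h₁ : y₁ ∈ s) (h₂ : y₂ ∈ s) (hw : w ∈ s)
    (hy₁₂ : ¬ SameCycle t₁ y₁ y₂) : ∃ y, SameCycle (t₁ * swap y₁ y₂) y₁ y ∧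
    IsRealization (optionCongr (t₁ * swap y₁ y₂) * swap none (some y))
      (swap none (some w) * optionCongr t₂) (insertNone s) := by
  set R := t₂ * t₁ * swap y₁ y₂ with hR
  have hne : y₁ ≠ y₂ := by rintro rfl; exact hy₁₂ (.refl _ _)
  have hcover {z : X} (hz : z ∈ s) : SameCycle R y₁ z ∨ SameCycle R y₂ z :=
    h.isSingleCycle.sameCycle_mul_swap_or h₁ hz
  have hsplit : ¬ SameCycle R y₁ y₂ := h.isSingleCycle.not_sameCycle_mul_swap h₁ h₂ hne
  obtain ⟨y, hy, hty, hcover', hyw⟩ : ∃ y ∈ s, SameCycle (t₁ * swap y₁ y₂) y₁ y ∧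
      (∀ z ∈ s, SameCycle R y z ∨ SameCycle R w z) ∧ ¬ SameCycle R y w := by
    rcases hcover hw with hw | hw
    · exact ⟨y₂, h₂, sameCycle_mul_swap_self hy₁₂,
        fun z hz => (hcover hz).symm.imp_right hw.symm.trans, fun h => hsplit (hw.trans h.symm)⟩
    · exact ⟨y₁, h₁, .refl _ _,
        fun z hz => (hcover hz).imp_right hw.symm.trans, fun h => hsplit (h.trans hw.symm)⟩
  refine ⟨y, hty, ?_, ?_, ?_⟩
  · rw [mul_assoc, ← mul_assoc (optionCongr t₂), ← optionCongr_mul, ← mul_assoc t₂]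
    exact isSingleCycle_swap_mul_optionCongr_mul_swap
      (h.isSingleCycle.mul_swap_apply_eq_self h₁ h₂) hcover' hyw hy hw
  · exact meets_insertNone (fun hxy => sameCycle_optionCongr_mul_swap y
      (sameCycle_mul_swap_of_sameCycle hy₁₂ hxy)) h.meets_left
  · exact meets_insertNone (sameCycle_swap_mul_optionCongr w) h.meets_right

theorem Realizable.raise {u₁ u₂ v n : ℕ} {A B : Multiset ℕ}
    (h : Realizable (u₁ ::ₘ u₂ ::ₘ A) (v ::ₘ B) n) :
    RealizableAt (u₁ + u₂ + 1) A (v + 1) B (n + 1) := by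
  obtain ⟨X, _, _, t₁, t₂, s, h, h₁, h₂, rfl⟩ := h
  obtain ⟨x₁, rfl⟩ := exists_of_mem_cycleSizes (h₁ ▸ Multiset.mem_cons_self u₁ _)
  obtain ⟨x₂, hx, rfl⟩ := exists_not_sameCycle h₁
  obtain ⟨y₁, hy₁, hxy₁⟩ := h.meets_left x₁
  obtain ⟨y₂, hy₂, hxy₂⟩ := h.meets_left x₂
  obtain ⟨w, hw, rfl⟩ :=
    exists_mem_card_cycleSet_eq (h₂ ▸ Multiset.mem_cons_self v B) h.meets_right
  have hy : ¬ SameCycle t₁ y₁ y₂ := fun hy => hx (hxy₁.trans (hy.trans hxy₂.symm))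
  rw [cycleSet_eq_iff.2 hxy₁, cycleSet_eq_iff.2 hxy₂] at h₁ ⊢
  obtain ⟨y, hty, hraise⟩ := h.raise hy₁ hy₂ hw hy
  have hcard : #(cycleSet (t₁ * swap y₁ y₂) y) = #(cycleSet t₁ y₁) + #(cycleSet t₁ y₂) := by
    rw [← cycleSet_eq_iff.2 hty, card_cycleSet_mul_swap_left hy]
  rw [← hcard]
  exact ⟨Option X, inferInstance, inferInstance, _, _, _, none, hraise,
    card_cycleSet_optionCongr_mul_swap, card_cycleSet_swap_mul_optionCongr,
    cycleSizes_optionCongr_mul_swap (by rw [hcard, cycleSizes_mul_swap hy h₁]),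
    cycleSizes_swap_mul_optionCongr h₂, card_insertNone s⟩

theorem realizableAt_one : RealizableAt 1 0 1 0 1 :=
  ⟨Unit, inferInstance, inferInstance, 1, 1, univ, (),
    ⟨⟨by simp, fun _ _ _ _ => .refl _ _⟩, fun x => ⟨x, mem_univ x, .refl _ _⟩,
      fun x => ⟨x, mem_univ x, .refl _ _⟩⟩, rfl, rfl, rfl, rfl, rfl⟩

end Realizable

section Existence

/-- `a` is the multiset of parts of a partition of `d`. -/
structure IsPartition (a : Multiset ℕ) (d : ℕ) : Prop where
  pos : ∀ x ∈ a, 0 < x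
  sum_eq : a.sum = d

variable {a b A B : Multiset ℕ} {d n u v g : ℕ}

theorem IsPartition.of_cons (h : IsPartition (u ::ₘ A) (u + d)) : IsPartition A d where
  pos x hx := h.pos x (Multiset.mem_cons_of_mem hx)
  sum_eq := add_left_cancel ((Multiset.sum_cons u A).symm.trans h.sum_eq)

theorem IsPartition.le_of_mem (h : IsPartition a d) (hu : u ∈ a) : u ≤ d :=
  h.sum_eq ▸ Multiset.le_sum_of_mem hu

theorem IsPartition.exists_eq_cons (h : IsPartition a d) (hd : 0 < d) : ∃ u A, a = u ::ₘ A := by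
  obtain ⟨u, hu⟩ := Multiset.exists_mem_of_ne_zero (s := a)
    (by rintro rfl; exact hd.ne h.sum_eq)
  exact ⟨u, Multiset.exists_cons_of_mem hu⟩

theorem isPartition_singleton (hd : 0 < d) : IsPartition {d} d :=
  ⟨by simpa using hd, Multiset.sum_singleton d⟩

/-- The condition on `e` is `e = d - u + v`, written without subtraction. -/
theorem IsPartition.replace {e : ℕ} (h : IsPartition (u ::ₘ A) d) (hv : 0 < v)
    (he : u + e = v + d) : IsPartition (v ::ₘ A) e where
  pos := Multiset.forall_mem_cons.2 ⟨hv, fun x hx => h.pos x (Multiset.mem_cons_of_mem hx)⟩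
  sum_eq := by
    have hs := h.sum_eq
    rw [Multiset.sum_cons] at hs ⊢
    omega

theorem IsPartition.split {w e : ℕ} (h : IsPartition (u ::ₘ A) d) (hv : 0 < v) (hw : 0 < w)
    (he : u + e = v + w + d) : IsPartition (v ::ₘ w ::ₘ A) e where
  pos := Multiset.forall_mem_cons.2 ⟨hv, (h.replace (e := w + d - u) hw
    (Nat.add_sub_cancel' ((h.le_of_mem (Multiset.mem_cons_self u A)).trans
      (Nat.le_add_left d w)))).pos⟩
  sum_eq := by
    have hs := h.sum_eq
    rw [Multiset.sum_cons] at hs ⊢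
    rw [Multiset.sum_cons]
    omega

theorem IsPartition.card_mul_le (h : IsPartition a d) {k : ℕ} (hk : ∀ x ∈ a, k ≤ x) :
    a.card * k ≤ d := by
  simpa [← h.sum_eq] using Multiset.card_nsmul_le_sum hk

theorem IsPartition.card_le (h : IsPartition a d) : a.card ≤ d := by
  simpa using h.card_mul_le h.pos

theorem IsPartition.le_card_mul (h : IsPartition a d) {k : ℕ} (hk : ∀ x ∈ a, x ≤ k) :
    d ≤ a.card * k := by
  simpa [← h.sum_eq] using Multiset.sum_le_card_nsmul a k hk

theorem IsPartition.exists_lt (h : IsPartition a d) {k : ℕ} (hd : a.card * k < d) :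
    ∃ u A, a = u ::ₘ A ∧ k < u := by
  by_contra! hk
  exact hd.not_ge (h.le_card_mul fun x hx => hk x (a.erase x) (Multiset.cons_erase hx).symm)

theorem IsPartition.eq_of_forall_eq (ha : IsPartition a d) (hb : IsPartition b d)
    (h : ∀ x ∈ a, ∀ y ∈ b, x = y) : a = b := by
  rcases a.empty_or_exists_mem with rfl | ⟨u, hu⟩
  · exact (Multiset.card_eq_zero.1 (Nat.le_zero.1 (hb.card_le.trans ha.sum_eq.symm.le))).symm
  rcases b.empty_or_exists_mem with rfl | ⟨v, hv⟩
  · exact Multiset.card_eq_zero.1 (Nat.le_zero.1 (ha.card_le.trans hb.sum_eq.symm.le))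
  have hau := Multiset.eq_replicate_card.2 fun x hx => (h x hx v hv).trans (h u hu v hv).symm
  have hbu := Multiset.eq_replicate_card.2 fun y hy => (h u hu y hy).symm
  have hcard : a.card = b.card := by
    have hsum := ha.sum_eq.trans hb.sum_eq.symm
    rw [hau, hbu, Multiset.sum_replicate, Multiset.sum_replicate] at hsum
    exact Nat.eq_of_mul_eq_mul_right (ha.pos u hu) hsum
  rw [hau, hbu, hcard]

theorem RealizableAt.grow_add (h : RealizableAt u A v B n) (k : ℕ) :
    RealizableAt (u + k) A (v + k) B n := by
  induction k with
  | zero => exact h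
  | succ k ih => exact ih.grow

theorem Realizable.addLeaf (h : Realizable (u ::ₘ A) B n) (hv : 0 < v) :
    Realizable ((u + v) ::ₘ A) (v ::ₘ B) (n + 1) := by
  obtain ⟨k, rfl⟩ := Nat.exists_eq_add_of_le hv
  simpa only [add_assoc] using (h.leaf.grow_add k).realizable

theorem realizable_singleton (hd : 0 < d) : Realizable {d} {d} 1 := by
  obtain ⟨k, rfl⟩ := Nat.exists_eq_add_of_le hd
  exact (realizableAt_one.grow_add k).realizable

theorem IsPartition.eq_singleton (h : IsPartition a d) (ha : a.card = 1) : a = {d} := by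
  obtain ⟨x, rfl⟩ := Multiset.card_eq_one.1 ha
  rw [← h.sum_eq, Multiset.sum_singleton]

theorem IsPartition.realizable_star (h : IsPartition a d) (hd : 0 < d) :
    Realizable a {d} a.card := by
  induction a using Multiset.induction generalizing d with
  | empty => exact absurd h.sum_eq hd.ne
  | cons u A ih =>
    have hu := h.pos u (Multiset.mem_cons_self u A)
    obtain ⟨e, rfl⟩ := Nat.exists_eq_add_of_le (h.le_of_mem (Multiset.mem_cons_self u A))
    rcases e.eq_zero_or_pos with rfl | he
    · obtain rfl : A = 0 := Multiset.card_eq_zero.1 (Nat.le_zero.1 h.of_cons.card_le)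
      exact realizable_singleton hu
    · rw [Multiset.card_cons, add_comm u]
      exact ((ih h.of_cons he).symm.addLeaf hu).symm

theorem IsPartition.realizable_hook (h : IsPartition a d) (hd : a.card < d) :
    Realizable a {1, d - 1} (a.card + 1) := by
  obtain ⟨u, A, rfl, hu⟩ := h.exists_lt (k := 1) (by simpa using hd)
  have hud := h.le_of_mem (Multiset.mem_cons_self u A)
  have h' : IsPartition ((u - 1) ::ₘ A) (d - 1) := h.replace (by omega) (by omega)
  have hleaf := (h'.realizable_star (by omega)).leaf.realizable
  rwa [Nat.sub_add_cancel hu.le, Multiset.card_cons, ← Multiset.card_cons u] at hleaf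

theorem realizable_cons_self (hu : 0 < u) (hA : ∀ x ∈ A, u < x) :
    Realizable (u ::ₘ A) (u ::ₘ A) (2 * A.card + 1) := by
  induction A using Multiset.induction with
  | empty => exact realizable_singleton hu
  | cons x A ih =>
    obtain ⟨hx, hA⟩ := Multiset.forall_mem_cons.1 hA
    have h := ((ih hA).addLeaf (Nat.sub_pos_of_lt hx)).symm.addLeaf hu
    rwa [Nat.add_sub_cancel' hx.le, Nat.sub_add_cancel hx.le, Multiset.cons_swap x u, add_assoc,
      add_right_comm, ← mul_add_one, ← Multiset.card_cons x] at h

theorem realizable_cons_one (ih : ∀ a b g, IsPartition a d → IsPartition b d →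
      a.card + b.card + 2 * g = d + 1 → Realizable a b d)
    (ha : IsPartition a (d + 1)) (hb : IsPartition (1 ::ₘ B) (d + 1))
    (hg : a.card + B.card + 2 * g = d + 1) : Realizable a (1 ::ₘ B) (d + 1) := by
  have hB : IsPartition B d := (add_comm d 1 ▸ hb).of_cons
  rcases d.eq_zero_or_pos with rfl | hd
  · obtain rfl : B = 0 := Multiset.card_eq_zero.1 (Nat.le_zero.1 hB.card_le)
    rw [ha.eq_singleton (by rw [Multiset.card_zero] at hg; omega)]
    exact realizable_singleton one_pos
  · obtain ⟨v, C, rfl⟩ := hB.exists_eq_cons hd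
    rw [Multiset.card_cons] at hg
    obtain ⟨u, A, rfl, hu⟩ := ha.exists_lt (k := 1) (by omega)
    have h := ih ((u - 1) ::ₘ A) (v ::ₘ C) g (ha.replace (by omega) (by omega)) hB
      (by simp only [Multiset.card_cons] at hg ⊢; omega)
    simpa only [Nat.sub_add_cancel hu.le] using h.leaf.realizable

theorem realizable_cons_cons_of_two_lt (ih : ∀ a b g, IsPartition a d → IsPartition b d →
      a.card + b.card + 2 * g = d + 1 → Realizable a b d)
    (ha : IsPartition (u ::ₘ A) (d + 1)) (hb : IsPartition (v ::ₘ B) (d + 1)) (hu : 2 < u)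
    (hv : 1 < v) (hg : A.card + B.card + 2 * (g + 1) = d) :
    Realizable (u ::ₘ A) (v ::ₘ B) (d + 1) := by
  have h := ih (1 ::ₘ (u - 2) ::ₘ A) ((v - 1) ::ₘ B) g
    (ha.split one_pos (by omega) (by omega)) (hb.replace (by omega) (by omega))
    (by simp only [Multiset.card_cons] at hg ⊢; omega)
  rw [← Nat.sub_add_cancel hv.le, show u = 1 + (u - 2) + 1 by omega]
  exact h.raise.realizable

theorem realizable_of_card_add_card_eq (ha : IsPartition a d) (hb : IsPartition b d)
    (hg : a.card + b.card + 2 * g = d + 1) : Realizable a b d := by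
  induction d generalizing a b g with
  | zero =>
    have := ha.card_le
    have := hb.card_le
    omega
  | succ d ih =>
    have ih' := fun a b g => @ih a b g
    by_cases hb1 : 1 ∈ b
    · obtain ⟨B, rfl⟩ := Multiset.exists_cons_of_mem hb1
      exact realizable_cons_one ih' ha hb (g := g) (by rw [Multiset.card_cons] at hg; omega)
    by_cases ha1 : 1 ∈ a
    · obtain ⟨A, rfl⟩ := Multiset.exists_cons_of_mem ha1
      exact (realizable_cons_one ih' hb ha (g := g) (by rw [Multiset.card_cons] at hg; omega)).symm
    have two_le {c : Multiset ℕ} (hc : IsPartition c (d + 1)) (h1 : 1 ∉ c) : ∀ x ∈ c, 2 ≤ x :=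
      fun x hx => Nat.lt_of_le_of_ne (hc.pos x hx) fun h => h1 (h ▸ hx)
    have ha2 := ha.card_mul_le (two_le ha ha1)
    have hb2 := hb.card_mul_le (two_le hb hb1)
    obtain ⟨g, rfl⟩ := Nat.exists_eq_add_of_le' (show 1 ≤ g by omega)
    obtain ⟨u, A, rfl⟩ := ha.exists_eq_cons d.succ_pos
    obtain ⟨v, B, rfl⟩ := hb.exists_eq_cons d.succ_pos
    have hu := two_le ha ha1 u (Multiset.mem_cons_self u A)
    have hv := two_le hb hb1 v (Multiset.mem_cons_self v B)
    rcases lt_or_ge ((u ::ₘ A).card * 2) (d + 1) with hlt | hge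
    · obtain ⟨w, C, hC, hw⟩ := ha.exists_lt hlt
      rw [hC] at ha hg ⊢
      simp only [Multiset.card_cons] at hg
      exact realizable_cons_cons_of_two_lt ih' ha hb hw hv (g := g) (by omega)
    · obtain ⟨w, C, hC, hw⟩ := hb.exists_lt (k := 2) (by omega)
      rw [hC] at hb hg ⊢
      simp only [Multiset.card_cons] at hg
      exact (realizable_cons_cons_of_two_lt ih' hb ha hw hu (g := g) (by omega)).symm

theorem realizable_cons_self_of_forall_eq
    (ih : ∀ a b g n, IsPartition a d → IsPartition b d → 0 < g →
      a.card + b.card + 2 * g = n + 1 → n ≤ d → Realizable a b n)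
    (ha : IsPartition ((u + 2) ::ₘ A) (d + 2)) (hu : 0 < u) (hA : ∀ x ∈ A, x = u + 2)
    (hg : 2 * A.card + 2 * g + 1 = n) (hn : n ≤ d) :
    Realizable ((u + 2) ::ₘ A) ((u + 2) ::ₘ A) (n + 2) := by
  have hcore : Realizable (u ::ₘ A) (u ::ₘ A) n := by
    rcases g.eq_zero_or_pos with rfl | hg0
    · rw [← hg]
      exact realizable_cons_self hu fun x hx => by rw [hA x hx]; omega
    · have hP : IsPartition (u ::ₘ A) d := ha.replace hu (by omega)
      exact ih _ _ g n hP hP hg0 (by simp only [Multiset.card_cons]; omega) hn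
  have h := hcore.leaf.realizable.symm.raise.realizable
  rwa [add_comm 1 u] at h

theorem realizable_cons_cons_of_lt
    (ih : ∀ e < d, ∀ a b g n, IsPartition a e → IsPartition b e → 0 < g →
      a.card + b.card + 2 * g = n + 1 → n ≤ e → Realizable a b n)
    (ha : IsPartition (u ::ₘ A) d) (hb : IsPartition (v ::ₘ B) d) (huv : v < u)
    (hg : A.card + B.card + 2 * (g + 1) = n) (hn : n + 1 ≤ d) :
    Realizable (u ::ₘ A) (v ::ₘ B) (n + 1) := by
  have hv := hb.pos v (Multiset.mem_cons_self v B)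
  have hvd := hb.le_of_mem (Multiset.mem_cons_self v B)
  by_cases hcut : v + n ≤ d
  · have h := ih (d - v) (by omega) ((u - v) ::ₘ A) B (g + 1) n
      (ha.replace (by omega) (by omega)) (IsPartition.of_cons (u := v) (by convert hb; omega))
      g.succ_pos (by rw [Multiset.card_cons]; omega) (by omega)
    simpa only [Nat.sub_add_cancel huv.le] using h.addLeaf hv
  · obtain ⟨k, rfl⟩ := Nat.exists_eq_add_of_le hn
    have h : Realizable (1 ::ₘ (u - k - 2) ::ₘ A) ((v - k - 1) ::ₘ B) n :=
      realizable_of_card_add_card_eq (g := g) (ha.split one_pos (by omega) (by omega))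
        (hb.replace (by omega) (by omega))
        (by simp only [Multiset.card_cons]; omega)
    convert (h.raise.grow_add k).realizable using 2 <;> omega

theorem realizable_of_genus_pos (ha : IsPartition a d) (hb : IsPartition b d) (hg0 : 0 < g)
    (hg : a.card + b.card + 2 * g = n + 1) (hn : n ≤ d) : Realizable a b n := by
  induction d using Nat.strong_induction_on generalizing a b g n with
  | _ d ih =>
    have ih' := fun e he a b g n => @ih e he a b n g
    obtain ⟨g, rfl⟩ := Nat.exists_eq_add_of_le' hg0
    by_cases hne : ∃ u ∈ a, ∃ v ∈ b, u ≠ v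
    · obtain ⟨u, hu, v, hv, huv⟩ := hne
      obtain ⟨A, rfl⟩ := Multiset.exists_cons_of_mem hu
      obtain ⟨B, rfl⟩ := Multiset.exists_cons_of_mem hv
      simp only [Multiset.card_cons] at hg
      obtain ⟨n, rfl⟩ := Nat.exists_eq_add_of_le' (show 1 ≤ n by omega)
      rcases huv.lt_or_gt with huv | huv
      · exact (realizable_cons_cons_of_lt ih' hb ha huv (g := g) (by omega) hn).symm
      · exact realizable_cons_cons_of_lt ih' ha hb huv (g := g) (by omega) hn
    · push Not at hne
      obtain rfl := ha.eq_of_forall_eq hb hne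
      obtain ⟨u, A, rfl⟩ := ha.exists_eq_cons (by omega)
      have hu (x) (hx : x ∈ u ::ₘ A) : x = u := hne x hx u (Multiset.mem_cons_self u A)
      have hu2 : 2 < u := by
        by_contra! hu2
        have := ha.le_card_mul fun x hx => (hu x hx).trans_le hu2
        omega
      obtain ⟨d, rfl⟩ := Nat.exists_eq_add_of_le' (hu2.le.trans (ha.le_of_mem (by simp)))
      simp only [Multiset.card_cons] at hg
      obtain ⟨n, rfl⟩ := Nat.exists_eq_add_of_le' (show 2 ≤ n by omega)
      obtain ⟨u, rfl⟩ := Nat.exists_eq_add_of_le' hu2.le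
      exact realizable_cons_self_of_forall_eq (g := g) (ih' d (by omega)) ha (by omega)
        (fun x hx => hu x (Multiset.mem_cons_of_mem hx)) (by omega) (by omega)

end Existence

section Merge

variable {X : Type*} [Fintype X] [DecidableEq X] {τ : Perm X} {u : ℕ} {A C : Multiset ℕ}

theorem exists_isSingleCycle_mul (hτ : cycleSizes τ = (u ::ₘ A) + C) :
    ∃ (σ : Perm X) (s : Finset X) (x : X), IsSingleCycle σ s ∧ #s = A.card + 1 ∧ x ∈ s ∧
      (∀ y ∈ s, SameCycle (τ * σ) x y) ∧ #(cycleSet (τ * σ) x) = u + A.sum ∧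
      cycleSizes (τ * σ) = (u + A.sum) ::ₘ C := by
  induction A using Multiset.induction generalizing C with
  | empty =>
    obtain ⟨x, hx⟩ := exists_of_mem_cycleSizes (hτ ▸ (by simp) : u ∈ cycleSizes τ)
    exact ⟨1, {x}, x, ⟨fun _ _ => rfl, by simp⟩, by simp, by simp, by simp [SameCycle.refl],
      by simpa, by simpa⟩
  | cons v A ih =>
    obtain ⟨σ, s, x, hσ, hs, hx, hxs, hcard, hsizes⟩ := ih (C := v ::ₘ C) (by
      rw [hτ, Multiset.cons_swap, Multiset.cons_add v, Multiset.add_cons])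
    obtain ⟨y, hxy, rfl⟩ : ∃ y, ¬ SameCycle (τ * σ) x y ∧ #(cycleSet (τ * σ) y) = v :=
      exists_not_sameCycle (hcard.symm ▸ hsizes)
    have hys : y ∉ s := fun hy => hxy (hxs y hy)
    have hsum : u + (#(cycleSet (τ * σ) y) ::ₘ A).sum = u + A.sum + #(cycleSet (τ * σ) y) := by
      rw [Multiset.sum_cons]
      ring
    refine ⟨σ * swap x y, insert y s, x, hσ.mul_swap hx hys, ?_, mem_insert_of_mem hx, ?_, ?_, ?_⟩
    · rw [card_insert_of_notMem hys, hs, Multiset.card_cons]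
    · rw [← mul_assoc]
      intro z hz
      rcases mem_insert.1 hz with rfl | hz
      exacts [sameCycle_mul_swap_self hxy, sameCycle_mul_swap_of_sameCycle hxy (hxs z hz)]
    · rw [← mul_assoc, card_cycleSet_mul_swap_left hxy, hcard, hsum]
    · rw [← mul_assoc, cycleSizes_mul_swap hxy (hcard.symm ▸ hsizes), hcard, hsum]

end Merge

section Step

variable {d m : ℕ} {a b c : Multiset ℕ} {ms : List ℕ}

/-- Some permutation with cycle sizes `a` gets cycle sizes `b` when multiplied by a cycle of length
`m + 1`. -/
def CycleStep (d : ℕ) (a b : Multiset ℕ) (m : ℕ) : Prop :=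
  ∃ τ σ : Perm (Fin d), cycleSizes τ = a ∧ cycleSizes (τ * σ) = b ∧ σ.IsCycle ∧
    #σ.support = m + 1

/-- Some permutation with cycle sizes `a` gets cycle sizes `b` when multiplied by successive cycles
of lengths `m + 1` for `m ∈ ms`, and all these permutations generate a transitive group. -/
def CycleChain (d : ℕ) (a b : Multiset ℕ) (ms : List ℕ) : Prop :=
  ∃ (τ : Perm (Fin d)) (L : List (Perm (Fin d))), cycleSizes τ = a ∧
    cycleSizes (τ * L.prod) = b ∧ List.Forall₂ (fun σ m => σ.IsCycle ∧ #σ.support = m + 1) L ms ∧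
    ∀ x y, ∃ π ∈ Subgroup.closure (insert τ {σ | σ ∈ L}), π x = y

theorem CycleStep.symm (h : CycleStep d a b m) : CycleStep d b a m := by
  obtain ⟨τ, σ, ha, hb, hσ, hm⟩ := h
  exact ⟨τ * σ, σ⁻¹, hb, by rwa [mul_inv_cancel_right], hσ.inv, by rwa [support_inv]⟩

theorem CycleStep.exists_mul (h : CycleStep d a b m) {τ : Perm (Fin d)} (hτ : cycleSizes τ = a) :
    ∃ σ, cycleSizes (τ * σ) = b ∧ σ.IsCycle ∧ #σ.support = m + 1 := by
  obtain ⟨τ', σ, hτ', rfl, hσ, hm⟩ := h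
  obtain ⟨c, rfl⟩ := isConj_iff.1 (isConj_iff_cycleSizes_eq.2 (hτ'.trans hτ.symm))
  refine ⟨c * σ * c⁻¹, ?_, hσ.conj, by rwa [card_support_conj]⟩
  exact isConj_iff_cycleSizes_eq.1 (isConj_iff.2 ⟨c⁻¹, by group⟩)

theorem CycleChain.cons (h : CycleChain d c b ms) (hs : CycleStep d a c m) :
    CycleChain d a b (m :: ms) := by
  obtain ⟨τ, L, hτ, hb, hL, htrans⟩ := h
  obtain ⟨σ, ha, hcycle, hcard⟩ := hs.symm.exists_mul hτ
  refine ⟨τ * σ, σ⁻¹ :: L, ha, by rwa [List.prod_cons, ← mul_assoc, mul_inv_cancel_right],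
    .cons ⟨hcycle.inv, by rwa [support_inv]⟩ hL, fun x y => ?_⟩
  obtain ⟨π, hπ, hxy⟩ := htrans x y
  refine ⟨π, (Subgroup.closure_le _).2 ?_ hπ, hxy⟩
  set H := Subgroup.closure (insert (τ * σ) {ρ | ρ ∈ σ⁻¹ :: L})
  have hσ : σ ∈ H := inv_mem_iff.1 (Subgroup.subset_closure (.inr List.mem_cons_self))
  rintro ρ (rfl | hρ)
  · exact (mul_mem_cancel_right hσ).1 (Subgroup.subset_closure (.inl rfl))
  · exact Subgroup.subset_closure (.inr (List.mem_cons_of_mem _ hρ))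

theorem CycleChain.reverse (h : CycleChain d a b ms) : CycleChain d b a ms.reverse := by
  obtain ⟨τ, L, ha, hb, hL, htrans⟩ := h
  refine ⟨τ * L.prod, (L.map (·⁻¹)).reverse, hb, ?_, ?_, fun x y => ?_⟩
  · rwa [← List.prod_inv_reverse, mul_inv_cancel_right]
  · rw [List.forall₂_reverse_iff, List.forall₂_map_left_iff]
    exact hL.imp fun σ m h => ⟨h.1.inv, by rw [support_inv, h.2]⟩
  · obtain ⟨π, hπ, hxy⟩ := htrans x y
    refine ⟨π, (Subgroup.closure_le _).2 ?_ hπ, hxy⟩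
    set H := Subgroup.closure (insert (τ * L.prod) {σ | σ ∈ (L.map (·⁻¹)).reverse})
    have hmem : ∀ σ ∈ L, σ ∈ H := fun σ hσ =>
      inv_mem_iff.1 (Subgroup.subset_closure (.inr (by simpa using hσ)))
    rintro ρ (rfl | hρ)
    · exact (mul_mem_cancel_right (list_prod_mem hmem)).1 (Subgroup.subset_closure (.inl rfl))
    · exact hmem ρ hρ

theorem IsPartition.exists_cycleSizes_eq (h : IsPartition a d) (hd : 0 < d) :
    ∃ τ : Perm (Fin d), cycleSizes τ = a := by
  obtain ⟨X, _, _, t, -, -, -, ht, -⟩ := h.realizable_star hd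
  have e : X ≃ Fin d := Fintype.equivFinOfCardEq (by rw [← sum_cycleSizes t, ht, h.sum_eq])
  exact ⟨e.permCongr t, by rw [cycleSizes_permCongr, ht]⟩

theorem cycleChain_singleton_nil (hd : 0 < d) : CycleChain d {d} {d} [] := by
  obtain ⟨τ, hτ⟩ := (isPartition_singleton hd).exists_cycleSizes_eq hd
  refine ⟨τ, [], hτ, by simpa using hτ, .nil, fun x y => ?_⟩
  have hcard : #(cycleSet τ x) = d :=
    Multiset.mem_singleton.1 (hτ ▸ card_cycleSet_mem_cycleSizes τ x)
  have hxy : y ∈ cycleSet τ x := by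
    rw [(card_eq_iff_eq_univ _).1 (hcard.trans (Fintype.card_fin d).symm)]
    exact mem_univ y
  obtain ⟨k, hk⟩ := mem_cycleSet.1 hxy
  exact ⟨τ ^ k, zpow_mem (Subgroup.subset_closure (.inl rfl)) k, hk⟩

theorem Realizable.exists_isRealization (h : Realizable a b m) (ha : a.sum = d) :
    ∃ (t₁ t₂ : Perm (Fin d)) (s : Finset (Fin d)),
      IsRealization t₁ t₂ s ∧ cycleSizes t₁ = a ∧ cycleSizes t₂ = b ∧ #s = m := by
  obtain ⟨X, _, _, t₁, t₂, s, h, h₁, h₂, hs⟩ := h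
  have e : X ≃ Fin d := Fintype.equivFinOfCardEq (by rw [← sum_cycleSizes t₁, h₁, ha])
  exact ⟨_, _, _, h.permCongr e, by rwa [cycleSizes_permCongr], by rwa [cycleSizes_permCongr],
    by rwa [card_map]⟩

theorem IsRealization.isCycle_inv {t₁ t₂ : Perm (Fin d)} {s : Finset (Fin d)} (hm : 0 < m)
    (h : IsRealization t₁ t₂ s) (hs : #s = m + 1) :
    (t₂ * t₁)⁻¹.IsCycle ∧ #(t₂ * t₁)⁻¹.support = m + 1 :=
  ⟨h.isSingleCycle.inv.isCycle (by omega), by rw [h.isSingleCycle.inv.support_eq (by omega), hs]⟩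

theorem Realizable.cycleStep (h : Realizable a b (m + 1)) (ha : a.sum = d) (hm : 0 < m) :
    CycleStep d a b m := by
  obtain ⟨t₁, t₂, s, h, h₁, h₂, hs⟩ := h.exists_isRealization ha
  refine ⟨t₁, (t₂ * t₁)⁻¹, h₁, ?_, h.isCycle_inv hm hs⟩
  rw [mul_inv_rev, mul_inv_cancel_left, cycleSizes_inv, h₂]

theorem Realizable.cycleChain (h : Realizable a b (m + 1)) (ha : a.sum = d) (hm : 0 < m) :
    CycleChain d a b [m] := by
  obtain ⟨t₁, t₂, s, h, h₁, h₂, hs⟩ := h.exists_isRealization ha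
  refine ⟨t₁, [(t₂ * t₁)⁻¹], h₁, ?_, .cons (h.isCycle_inv hm hs) .nil, fun x y => ?_⟩
  · rw [List.prod_singleton, mul_inv_rev, mul_inv_cancel_left, cycleSizes_inv, h₂]
  obtain ⟨x', hx', i, hi⟩ := h.meets_left x
  obtain ⟨y', hy', hyy'⟩ := h.meets_left y
  obtain ⟨j, hj⟩ := hyy'.symm
  obtain ⟨k, hk⟩ := h.isSingleCycle.inv.sameCycle x' hx' y' hy'
  refine ⟨t₁ ^ j * ((t₂ * t₁)⁻¹ ^ k * t₁ ^ i), ?_, by simp only [Perm.mul_apply, hi, hk, hj]⟩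
  have h₁ : t₁ ∈ Subgroup.closure (insert t₁ {σ | σ ∈ [(t₂ * t₁)⁻¹]}) :=
    Subgroup.subset_closure (.inl rfl)
  exact mul_mem (zpow_mem h₁ j) (mul_mem
    (zpow_mem (Subgroup.subset_closure (.inr List.mem_cons_self)) k) (zpow_mem h₁ i))

theorem cycleStep_add {u : ℕ} {A C : Multiset ℕ} (h : IsPartition (u ::ₘ A + C) d)
    (hA : 0 < A.card) : CycleStep d (u ::ₘ A + C) ((u + A.sum) ::ₘ C) A.card := by
  have hd : 0 < d := (h.pos u (by simp)).trans_le (h.le_of_mem (by simp))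
  obtain ⟨τ, hτ⟩ := h.exists_cycleSizes_eq hd
  obtain ⟨σ, s, -, hσ, hs, -, -, -, hsizes⟩ := exists_isSingleCycle_mul hτ
  exact ⟨τ, σ, hτ, hsizes, hσ.isCycle (by omega), by rw [hσ.support_eq (by omega), hs]⟩

end Step

section Chains

variable {d m : ℕ} {a b : Multiset ℕ} {ms : List ℕ}

/-- `a` is one of the two partitions of `d`, one for each parity of the number of parts, to which a
long cycle can lead, see `IsPartition.exists_cycleStep`. -/
def IsTerminal (d : ℕ) (a : Multiset ℕ) : Prop := a = {d} ∨ a = {1, d - 1}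

/-- The numerical conditions on `a`, `b` and `ms` under which a `CycleChain` exists: the
Riemann–Hurwitz formula holds in genus `g`, where `g = 0` is allowed at a terminal partition. -/
structure IsAdmissible (d : ℕ) (a b : Multiset ℕ) (ms : List ℕ) : Prop where
  left : IsPartition a d
  right : IsPartition b d
  pos : ∀ m ∈ ms, 0 < m
  lt : ∀ m ∈ ms, m < d
  genus : ∃ g, ms.sum + 2 = a.card + b.card + 2 * g ∧ (0 < g ∨ IsTerminal d a ∨ IsTerminal d b)

theorem IsTerminal.card_le (h : IsTerminal d a) : a.card ≤ 2 := by
  rcases h with rfl | rfl <;> simp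

theorem IsPartition.isTerminal (h : IsPartition a d) (ha : a.card = 1) : IsTerminal d a :=
  .inl (h.eq_singleton ha)

theorem IsPartition.card_pos (h : IsPartition a d) (hd : 0 < d) : 0 < a.card := by
  obtain ⟨u, A, rfl⟩ := h.exists_eq_cons hd
  simp

theorem isPartition_hook (hd : 1 < d) : IsPartition {1, d - 1} d where
  pos := by simp [hd]
  sum_eq := by simp; omega

theorem IsAdmissible.reverse (h : IsAdmissible d a b ms) : IsAdmissible d b a ms.reverse where
  left := h.right
  right := h.left
  pos := by simpa using h.pos
  lt := by simpa using h.lt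
  genus := by
    obtain ⟨g, hg, ht⟩ := h.genus
    exact ⟨g, by rw [List.sum_reverse, hg, add_comm b.card], ht.imp_right Or.symm⟩

theorem IsPartition.exists_merge (h : IsPartition a d) (hm : 0 < m) (hma : m < a.card) :
    ∃ c, IsPartition c d ∧ c.card + m = a.card ∧ CycleStep d a c m := by
  obtain ⟨A, hA, hAm⟩ : ∃ A ≤ a, A.card = m + 1 := by
    simp_rw [← Multiset.mem_powersetCard]
    refine Multiset.card_pos_iff_exists_mem.1 ?_
    rw [Multiset.card_powersetCard]
    exact Nat.choose_pos hma
  obtain ⟨C, rfl⟩ := Multiset.le_iff_exists_add.1 hA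
  obtain ⟨u, A, rfl, rfl⟩ := Multiset.card_eq_succ_iff.1 hAm
  refine ⟨(u + A.sum) ::ₘ C, ⟨?_, ?_⟩, ?_, cycleStep_add h hm⟩
  · have hu := h.pos u (by simp)
    exact Multiset.forall_mem_cons.2 ⟨by omega, fun x hx => h.pos x (by simp [hx])⟩
  · rw [← h.sum_eq, Multiset.sum_cons, Multiset.sum_add, Multiset.sum_cons]
  · simp only [Multiset.card_add, Multiset.card_cons]
    omega

theorem IsPartition.exists_cycleStep (h : IsPartition a d) (ham : a.card ≤ m) (hm : 0 < m)
    (hmd : m < d) : ∃ c k, IsPartition c d ∧ IsTerminal d c ∧ m + 2 = a.card + c.card + 2 * k ∧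
      CycleStep d a c m := by
  rcases Nat.even_or_odd' (m - a.card) with ⟨k, hk | hk⟩
  · refine ⟨{1, d - 1}, k, isPartition_hook (by omega), .inr rfl, ?_, ?_⟩
    · rw [Multiset.card_pair]
      omega
    refine Realizable.cycleStep ?_ h.sum_eq hm
    rcases k.eq_zero_or_pos with rfl | hk0
    · obtain rfl : m = a.card := by omega
      exact h.realizable_hook hmd
    · refine realizable_of_genus_pos h (isPartition_hook (by omega)) hk0 ?_ hmd
      rw [Multiset.card_pair]
      omega
  · have hd := isPartition_singleton (d := d) (by omega)
    refine ⟨{d}, k + 1, hd, .inl rfl, ?_, ?_⟩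
    · rw [Multiset.card_singleton]
      omega
    refine (realizable_of_genus_pos h hd k.succ_pos ?_ hmd).cycleStep h.sum_eq hm
    rw [Multiset.card_singleton]
    omega

theorem IsAdmissible.exists_cycleStep (h : IsAdmissible d a b (m :: ms))
    (hm : m < a.card ∨ b.card ≤ ms.sum) : ∃ c, CycleStep d a c m ∧ IsAdmissible d c b ms := by
  obtain ⟨hm0, hms0⟩ := List.forall_mem_cons.1 h.pos
  obtain ⟨hmd, hmsd⟩ := List.forall_mem_cons.1 h.lt
  obtain ⟨g, hg, ht⟩ := h.genus
  rw [List.sum_cons] at hg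
  by_cases hma : m < a.card
  · obtain ⟨c, hc, hcard, hstep⟩ := h.left.exists_merge hm0 hma
    refine ⟨c, hstep, hc, h.right, hms0, hmsd, g, by omega, ht.imp_right (.imp_left fun ht => ?_)⟩
    have := ht.card_le
    exact hc.isTerminal (by omega)
  · obtain ⟨c, k, hc, hct, hk, hstep⟩ := h.left.exists_cycleStep (not_lt.1 hma) hm0 hmd
    have := hct.card_le
    exact ⟨c, hstep, hc, h.right, hms0, hmsd, g - k + 1 - c.card, by omega, .inr (.inl hct)⟩

theorem IsAdmissible.cycleChain_singleton (h : IsAdmissible d a b [m]) (ha : a.card ≤ m)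
    (hb : b.card ≤ m) : CycleChain d a b [m] := by
  obtain ⟨g, hg, ht⟩ := h.genus
  have hm := h.pos m List.mem_cons_self
  have hmd := h.lt m List.mem_cons_self
  rw [List.sum_singleton] at hg
  refine Realizable.cycleChain ?_ h.left.sum_eq hm
  rcases g.eq_zero_or_pos with rfl | hg0
  · rcases ht with hg0 | (rfl | rfl) | (rfl | rfl)
    · exact absurd hg0 (lt_irrefl 0)
    all_goals simp only [Multiset.card_singleton, Multiset.card_pair] at hg
    · omega
    · obtain rfl : m = b.card := by omega
      exact (h.right.realizable_hook hmd).symm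
    · omega
    · obtain rfl : m = a.card := by omega
      exact h.left.realizable_hook hmd
  · exact realizable_of_genus_pos h.left h.right hg0 (by omega) hmd

theorem IsAdmissible.cycleChain_nil (h : IsAdmissible d a b []) (hd : 0 < d) :
    CycleChain d a b [] := by
  obtain ⟨g, hg, -⟩ := h.genus
  have ha := h.left.card_pos hd
  have hb := h.right.card_pos hd
  rw [List.sum_nil] at hg
  rw [h.left.eq_singleton (by omega), h.right.eq_singleton (by omega)]
  exact cycleChain_singleton_nil hd

theorem IsAdmissible.cycleChain (h : IsAdmissible d a b ms) (hd : 0 < d) :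
    CycleChain d a b ms := by
  induction hN : ms.length generalizing a b ms with
  | zero =>
    obtain rfl := List.length_eq_zero_iff.1 hN
    exact h.cycleChain_nil hd
  | succ N ih =>
    have peel {a b m ms} (h : IsAdmissible d a b (m :: ms)) (hN : ms.length = N)
        (hm : m < a.card ∨ b.card ≤ ms.sum) : CycleChain d a b (m :: ms) := by
      obtain ⟨c, hstep, hc⟩ := h.exists_cycleStep hm
      exact (ih hc hN).cons hstep
    obtain ⟨m, ms, rfl⟩ := List.exists_cons_of_length_eq_add_one hN
    rw [List.length_cons, Nat.add_right_cancel_iff] at hN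
    by_cases hm : m < a.card ∨ b.card ≤ ms.sum
    · exact peel h hN hm
    rw [not_or, not_lt, not_le] at hm
    rcases ms.eq_nil_or_concat' with rfl | ⟨ms, l, rfl⟩
    · by_cases hb : m < b.card
      · exact (peel h.reverse hN (.inl hb)).reverse
      · exact h.cycleChain_singleton hm.1 (not_lt.1 hb)
    · have hl : l < b.card := by
        rw [List.sum_append, List.sum_singleton] at hm
        omega
      have hrev : (m :: (ms ++ [l])).reverse = l :: (m :: ms).reverse := by simp
      rw [← List.reverse_reverse (m :: (ms ++ [l])), hrev]
      exact (peel (hrev ▸ h.reverse) (by simpa using hN) (.inl hl)).reverse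

end Chains

theorem isPartition_map {k : ℕ} {c : Fin k → ℕ} (hc : ∀ i, 0 < c i) :
    IsPartition (univ.val.map c) (∑ i, c i) where
  pos := by simpa using hc
  sum_eq := rfl

theorem prop_1_4_general {d ℓ g p q : ℕ} (hd : 0 < d)
    {a : Fin p → ℕ} {b : Fin q → ℕ} {m : Fin ℓ → ℕ}
    (ha : ∀ i, 0 < a i) (hb : ∀ i, 0 < b i) (hm : ∀ i, 0 < m i)
    (hsa : ∑ i, a i = d) (hsb : ∑ i, b i = d) (hsm : ∑ i, m i + 2 = p + q + 2 * g)
    (hmd : ∀ i, m i + 1 ≤ d)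
    (hg : 0 < g ∨ IsTerminal d (univ.val.map a) ∨ IsTerminal d (univ.val.map b)) :
    ∃ (τ₁ τ₂ : Perm (Fin d)) (σ : Fin ℓ → Perm (Fin d)),
      τ₁ * τ₂ * (List.ofFn σ).prod = 1 ∧
      fullCycleType τ₁ = univ.val.map a ∧
      fullCycleType τ₂ = univ.val.map b ∧
      (∀ i, (σ i).IsCycle ∧ #(σ i).support = m i + 1) ∧
      ∀ x y : Fin d, ∃ π ∈ Subgroup.closure ({τ₁, τ₂} ∪ Set.range σ), π x = y := by
  have h : IsAdmissible d (univ.val.map b) (univ.val.map a) (List.ofFn m) :=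
    { left := hsb ▸ isPartition_map hb
      right := hsa ▸ isPartition_map ha
      pos := List.forall_mem_ofFn_iff.2 hm
      lt := List.forall_mem_ofFn_iff.2 hmd
      genus := ⟨g, by simp [List.sum_ofFn, hsm, add_comm p], hg.imp_right Or.symm⟩ }
  obtain ⟨τ, L, hτ, hτL, hL, htrans⟩ := h.cycleChain hd
  obtain rfl : L.length = ℓ := by simpa using hL.length_eq
  refine ⟨(τ * L.prod)⁻¹, τ, L.get, ?_, ?_, ?_, fun i => ?_, fun x y => ?_⟩
  · rw [List.ofFn_get, mul_assoc, inv_mul_cancel]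
  · rw [fullCycleType_eq_cycleSizes, cycleSizes_inv, hτL]
  · rw [fullCycleType_eq_cycleSizes, hτ]
  · simpa using (List.forall₂_iff_get.1 hL).2 i i.2 (by simp)
  · obtain ⟨π, hπ, hxy⟩ := htrans x y
    refine ⟨π, Subgroup.closure_mono ?_ hπ, hxy⟩
    rintro ρ (rfl | hρ)
    exacts [.inl (.inr rfl), .inr (List.get_of_mem hρ)]

/-- Proposition 1.4: for positive integers `d, ℓ, g`, partitions
`(a₁,…,a_p)`, `(b₁,…,b_q)` of `d` and a partition `(m₁,…,m_ℓ)` of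
`p + q - 2 + 2g` with each `mᵢ + 1 ≤ d`, there exist permutations
`τ₁, τ₂, σ₁, …, σ_ℓ ∈ S_d` with `τ₁ τ₂ σ₁ ⋯ σ_ℓ = id`, prescribed cycle
types, each `σᵢ` an `(mᵢ+1)`-cycle, generating a transitive subgroup. -/
theorem prop_1_4 (d ℓ g p q : ℕ) (hd : 0 < d) (hℓ : 0 < ℓ) (hg : 0 < g)
    (hp : 0 < p) (hq : 0 < q)
    (a : Fin p → ℕ) (b : Fin q → ℕ) (m : Fin ℓ → ℕ)
    (ha : ∀ i, 0 < a i) (hb : ∀ i, 0 < b i) (hm : ∀ i, 0 < m i)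
    (hsa : ∑ i, a i = d) (hsb : ∑ i, b i = d)
    (hsm : ∑ i, m i = p + q - 2 + 2 * g)
    (hmd : ∀ i, m i + 1 ≤ d) :
    ∃ (τ₁ τ₂ : Equiv.Perm (Fin d)) (σ : Fin ℓ → Equiv.Perm (Fin d)),
      τ₁ * τ₂ * (List.ofFn σ).prod = 1 ∧
      fullCycleType τ₁ = Finset.univ.val.map a ∧
      fullCycleType τ₂ = Finset.univ.val.map b ∧
      (∀ i, (σ i).IsCycle ∧ (σ i).support.card = m i + 1) ∧
      (∀ x y : Fin d,
        ∃ π ∈ Subgroup.closure ({τ₁, τ₂} ∪ Set.range σ), π x = y) := by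
  exact prop_1_4_general hd ha hb hm hsa hsb (by omega) hmd (.inl hg)
end

section
/- Let d and g be positive integers. Suppose a : {1,...,p} → ℤ>0 and b : {1,...,q} → ℤ>0 are partitions of d (i.e. a₁ + ⋯ + a_p = d and b₁ + ⋯ + b_q = d), and m₁ is a positive integer with m₁ = p + q − 2 + 2g and m₁ + 1 ≤ d. Then there exist permutations τ₁, τ₂, σ₁ in the symmetric group S_d such that: (1) τ₁ τ₂ σ₁ = id; (2) the cycle type of τ₁ (as a partition of d, counting each fixed point as a part equal to 1) is (a₁, …, a_p), the cycle type of τ₂ is (b₁, …, b_q), and σ₁ is a single cycle of length m₁ + 1; (3) the subgroup of S_d generated by τ₁, τ₂, σ₁ acts transitively on {1, 2, …, d}. -/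
/-!
A pair of permutations `(τ₁, τ₂)` is a map on a surface whose graph is bipartite: the edges are the
points, the black and white vertices are the cycles of `τ₁` and `τ₂`, and the faces are the cycles
of `τ₁ * τ₂`. A fixed point of the product is a digon, so it arises by doubling an edge, which
lengthens one cycle of each permutation by one and leaves the product unchanged. We thus look for a
map with a single face, `n = m₁ + 1` edges and genus `g`, to be completed by doubling edges
`k = d - n` times.

Such maps are built by attaching a leaf, by attaching a handle (two new edges between the same
black and white vertices), and by attaching a black vertex of degree two at two corners of the face
after splitting one white vertex or merging two; each time, new doublings are made next to the new
edges. Every pair of partitions reduces to `{1}`, `{1}` by undoing these moves. A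
part `a ≤ k + 1` smaller than a part on the other side is a leaf, and parts `≥ k + 3` on both sides
allow undoing a handle. Otherwise all parts of one side, say `τ₁`, are at most `k + 2`. Then either
all parts of both sides are equal, or those of `τ₁` equal `k + 2` and those of `τ₂` are at least
`k + 2`; in both cases a bivalent black vertex, together with its doublings, can be removed.
-/

namespace Boccara

open Equiv Equiv.Perm Finset

variable {Ω : Type*} [DecidableEq Ω] {τ τ' : Perm Ω} {u v w x y z : Ω}

/-! ### Multiplication by a transposition -/

theorem swap_mul_swap_of_handle {z₁ z₂ : Ω} (hz : z₁ ≠ z₂) (hyz₂ : y ≠ z₂) (hwz₁ : w ≠ z₁) :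
    swap y z₂ * swap y z₁ * (swap w z₂ * swap w z₁) = swap y z₁ * swap w z₂ := by
  have hleft : swap y z₂ * swap y z₁ = swap y z₁ * swap z₁ z₂ := by
    ext u
    simp only [Perm.mul_apply, swap_apply_def]
    grind
  have hright : swap w z₂ * swap w z₁ = swap z₁ z₂ * swap w z₂ := by
    ext u
    simp only [Perm.mul_apply, swap_apply_def]
    grind
  rw [hleft, hright, mul_assoc, swap_mul_self_mul]

theorem swap_mul_swap_of_bivalent {z₁ z₂ : Ω} (hyw : y ≠ w) (hz : z₁ ≠ z₂) (hyz₁ : y ≠ z₁)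
    (hyz₂ : y ≠ z₂) (hwz₁ : w ≠ z₁) (hwz₂ : w ≠ z₂) :
    swap z₂ z₁ * (swap y w * swap y z₂ * swap w z₁) = swap y z₁ * swap w z₂ := by
  ext u
  simp only [Perm.mul_apply, swap_apply_def]
  grind

section Merging

variable [Finite Ω]

theorem sameCycle_mul_swap_of_left (h : ¬ SameCycle τ x y) (hu : SameCycle τ x u) :
    SameCycle (τ * swap x y) y u := by
  have hpow (n : ℕ) : SameCycle (τ * swap x y) y ((τ ^ (n + 1)) x) := by
    induction n with
    | zero => exact ⟨1, by simp⟩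
    | succ n ih =>
      rw [pow_succ', Perm.mul_apply]
      obtain hx | hx := eq_or_ne ((τ ^ (n + 1)) x) x
      · rw [hx]
        exact ⟨1, by simp⟩
      · have hy : (τ ^ (n + 1)) x ≠ y := fun hy => h ⟨n + 1, by exact_mod_cast hy⟩
        have := sameCycle_apply_right.2 ih
        rwa [Perm.mul_apply, swap_apply_of_ne_of_ne hx hy] at this
  obtain ⟨n, hn, -, rfl⟩ := hu.exists_pow_eq''
  simpa only [Nat.sub_add_cancel hn] using hpow (n - 1)

theorem sameCycle_mul_swap_of_right (h : ¬ SameCycle τ x y) (hu : SameCycle τ y u) :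
    SameCycle (τ * swap x y) x u := by
  rw [swap_comm]
  exact sameCycle_mul_swap_of_left (mt SameCycle.symm h) hu

theorem sameCycle_mul_swap_self (h : ¬ SameCycle τ x y) : SameCycle (τ * swap x y) x y :=
  sameCycle_mul_swap_of_right h (SameCycle.refl τ y)

theorem sameCycle_mul_swap_of_sameCycle (h : ¬ SameCycle τ x y) (huv : SameCycle τ u v) :
    SameCycle (τ * swap x y) u v := by
  obtain ⟨n, rfl⟩ := huv.exists_nat_pow_eq
  induction n with
  | zero => exact SameCycle.refl _ _
  | succ n ih =>
    refine (ih ⟨n, rfl⟩).trans ?_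
    rw [pow_succ', Perm.mul_apply]
    generalize (τ ^ n) u = w
    obtain rfl | hx := eq_or_ne w x
    · exact (sameCycle_mul_swap_self h).trans
        (sameCycle_mul_swap_of_left h (sameCycle_apply_right.2 (SameCycle.refl _ _)))
    obtain rfl | hy := eq_or_ne w y
    · exact (sameCycle_mul_swap_self h).symm.trans
        (sameCycle_mul_swap_of_right h (sameCycle_apply_right.2 (SameCycle.refl _ _)))
    · exact ⟨1, by simp [swap_apply_of_ne_of_ne hx hy]⟩

theorem sameCycle_mul_swap_iff (h : ¬ SameCycle τ x y) :
    SameCycle (τ * swap x y) u v ↔ SameCycle τ u v ∨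
      (SameCycle τ x u ∨ SameCycle τ y u) ∧ (SameCycle τ x v ∨ SameCycle τ y v) := by
  constructor
  · intro huv
    obtain ⟨n, rfl⟩ := huv.exists_nat_pow_eq
    clear huv
    induction n with
    | zero => exact Or.inl (SameCycle.refl _ _)
    | succ n ih =>
      rw [pow_succ', Perm.mul_apply]
      generalize ((τ * swap x y) ^ n) u = w at ih ⊢
      obtain rfl | hx := eq_or_ne w x
      · have : SameCycle τ w u ∨ SameCycle τ y u := ih.elim (fun hu => .inl hu.symm) And.left
        simp [this, SameCycle.refl]
      obtain rfl | hy := eq_or_ne w y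
      · have : SameCycle τ x u ∨ SameCycle τ w u := ih.elim (fun hu => .inr hu.symm) And.left
        simp [this, SameCycle.refl]
      · simpa [swap_apply_of_ne_of_ne hx hy] using ih
  · have hx {a : Ω} (ha : SameCycle τ x a ∨ SameCycle τ y a) : SameCycle (τ * swap x y) x a :=
      ha.elim (sameCycle_mul_swap_of_sameCycle h) (sameCycle_mul_swap_of_right h)
    rintro (huv | ⟨hu, hv⟩)
    · exact sameCycle_mul_swap_of_sameCycle h huv
    · exact (hx hu).symm.trans (hx hv)

end Merging

/-! ### Cycle types on a subset -/

variable [Fintype Ω] {D P : Finset Ω}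

theorem support_mul_swap_subset (hsupp : τ.support ⊆ D) (hx : x ∈ D) (hy : y ∈ D) :
    (τ * swap x y).support ⊆ D := by
  refine (support_mul_le _ _).trans (union_subset hsupp fun u hu => ?_)
  obtain rfl | rfl := eq_or_eq_of_swap_apply_ne_self (mem_support.1 hu) <;> assumption

theorem mem_of_sameCycle (hsupp : τ.support ⊆ D) (hu : u ∈ D) (huv : SameCycle τ u v) :
    v ∈ D := by
  by_contra hv
  have := huv.eq_of_right (notMem_support.1 fun h => hv (hsupp h))
  exact hv (this ▸ hu)

theorem not_sameCycle (hsupp : τ.support ⊆ D) (hu : u ∈ D) (hv : v ∉ D) : ¬ SameCycle τ u v :=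
  fun huv => hv (mem_of_sameCycle hsupp hu huv)

theorem isCycleOn_of_support_subset (hsupp : τ.support ⊆ P)
    (hP : ∀ x ∈ P, ∀ y ∈ P, SameCycle τ x y) : τ.IsCycleOn P := by
  have hstep (x : Ω) : SameCycle τ x (τ x) := sameCycle_apply_right.2 (SameCycle.refl τ x)
  exact ⟨τ.bijOn fun x => ⟨fun h => mem_of_sameCycle hsupp h (hstep x).symm,
    fun h => mem_of_sameCycle hsupp h (hstep x)⟩, hP⟩

theorem isCycleOn_insert_mul_swap (hτ : τ.IsCycleOn P) (hsupp : τ.support ⊆ P) (hy : y ∈ P)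
    (hz : z ∉ P) : (τ * swap y z).IsCycleOn (insert z P : Finset Ω) := by
  have hyz := not_sameCycle hsupp hy hz
  refine isCycleOn_of_support_subset (support_mul_swap_subset
    (hsupp.trans (subset_insert z P)) (mem_insert_of_mem hy) (mem_insert_self z P)) ?_
  have hjoin {u : Ω} (hu : u ∈ insert z P) : SameCycle τ y u ∨ SameCycle τ z u := by
    obtain rfl | hu := mem_insert.1 hu
    exacts [.inr (SameCycle.refl _ _), .inl (hτ.2 hy hu)]
  exact fun u hu v hv => (sameCycle_mul_swap_iff hyz).2 (.inr ⟨hjoin hu, hjoin hv⟩)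

/-- The cycle of `τ` through `x`, as a set of points; a fixed point is a cycle of length one. -/
def cycleThrough (τ : Perm Ω) (x : Ω) : Finset Ω := {y | SameCycle τ x y}

theorem mem_cycleThrough : y ∈ cycleThrough τ x ↔ SameCycle τ x y := by
  simp [cycleThrough]

theorem mem_cycleThrough_self (τ : Perm Ω) (x : Ω) : x ∈ cycleThrough τ x :=
  mem_cycleThrough.2 (SameCycle.refl τ x)

theorem card_cycleThrough_pos (τ : Perm Ω) (x : Ω) : 0 < #(cycleThrough τ x) :=
  card_pos.2 ⟨x, mem_cycleThrough_self τ x⟩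

theorem cycleThrough_eq_iff : cycleThrough τ x = cycleThrough τ y ↔ SameCycle τ x y := by
  refine ⟨fun h => ?_, fun h => ?_⟩
  · rw [← mem_cycleThrough, h]
    exact mem_cycleThrough_self τ y
  · ext u
    rw [mem_cycleThrough, mem_cycleThrough]
    exact ⟨h.symm.trans, h.trans⟩

theorem cycleThrough_subset (hsupp : τ.support ⊆ D) (hx : x ∈ D) : cycleThrough τ x ⊆ D :=
  fun _ hu => mem_of_sameCycle hsupp hx (mem_cycleThrough.1 hu)

theorem isCycleOn_cycleThrough (τ : Perm Ω) (x : Ω) : τ.IsCycleOn (cycleThrough τ x) :=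
  ⟨τ.bijOn fun u => by simp only [mem_coe, mem_cycleThrough, sameCycle_apply_right],
    fun _ hu _ hv => (mem_cycleThrough.1 hu).symm.trans (mem_cycleThrough.1 hv)⟩

/-- The multiset of lengths of the cycles of `τ` that meet `D`, where a fixed point counts as a
cycle of length one. -/
def cycleTypeOn (D : Finset Ω) (τ : Perm Ω) : Multiset ℕ :=
  (D.image (cycleThrough τ)).val.map card

theorem cycleTypeOn_congr (h : ∀ x ∈ D, cycleThrough τ x = cycleThrough τ' x) :
    cycleTypeOn D τ = cycleTypeOn D τ' := by
  rw [cycleTypeOn, cycleTypeOn, image_congr h]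

theorem cycleTypeOn_union (h : ∀ x ∈ D, ∀ y ∈ E, ¬ SameCycle τ x y) :
    cycleTypeOn (D ∪ E) τ = cycleTypeOn D τ + cycleTypeOn E τ := by
  have hdisj : Disjoint (D.image (cycleThrough τ)) (E.image (cycleThrough τ)) := by
    simp only [disjoint_left, mem_image, not_exists, not_and]
    rintro _ ⟨x, hx, rfl⟩ y hy hxy
    exact h x hx y hy (cycleThrough_eq_iff.1 hxy.symm)
  rw [cycleTypeOn, image_union, ← disjUnion_eq_union _ _ hdisj, disjUnion_val, Multiset.map_add]
  rfl

theorem cycleTypeOn_cycleThrough (τ : Perm Ω) (x : Ω) :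
    cycleTypeOn (cycleThrough τ x) τ = {#(cycleThrough τ x)} := by
  have : (cycleThrough τ x).image (cycleThrough τ) = {cycleThrough τ x} := by
    rw [eq_singleton_iff_unique_mem]
    refine ⟨mem_image_of_mem _ (mem_cycleThrough_self τ x), fun C hC => ?_⟩
    obtain ⟨y, hy, rfl⟩ := mem_image.1 hC
    exact cycleThrough_eq_iff.2 (mem_cycleThrough.1 hy).symm
  rw [cycleTypeOn, this]
  rfl

theorem cycleTypeOn_eq_cons (hx : cycleThrough τ x ⊆ D) :
    cycleTypeOn D τ = #(cycleThrough τ x) ::ₘ cycleTypeOn (D \ cycleThrough τ x) τ := by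
  have hdisj : ∀ u ∈ cycleThrough τ x, ∀ v ∈ D \ cycleThrough τ x, ¬ SameCycle τ u v := by
    intro u hu v hv huv
    exact (mem_sdiff.1 hv).2 (mem_cycleThrough.2 ((mem_cycleThrough.1 hu).trans huv))
  rw [← Multiset.singleton_add, ← cycleTypeOn_cycleThrough, ← cycleTypeOn_union hdisj,
    union_sdiff_of_subset hx]

theorem cycleTypeOn_inv (D : Finset Ω) (τ : Perm Ω) : cycleTypeOn D τ⁻¹ = cycleTypeOn D τ :=
  cycleTypeOn_congr fun x _ => by ext y; rw [mem_cycleThrough, mem_cycleThrough, sameCycle_inv]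

theorem cycleThrough_of_notMem_support (hx : x ∉ τ.support) : cycleThrough τ x = {x} := by
  ext u
  rw [mem_cycleThrough, mem_singleton, eq_comm]
  exact ⟨fun h => h.eq_of_left (notMem_support.1 hx), fun h => h ▸ SameCycle.refl τ x⟩

theorem cycleTypeOn_insert (hsupp : τ.support ⊆ D) (hz : z ∉ D) :
    cycleTypeOn (insert z D) τ = 1 ::ₘ cycleTypeOn D τ := by
  have hcyc := cycleThrough_of_notMem_support (mt (@hsupp z) hz)
  rw [cycleTypeOn_eq_cons (x := z) (by simp [hcyc]), hcyc, card_singleton,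
    insert_sdiff_of_mem _ (mem_singleton_self z), sdiff_singleton_eq_erase,
    erase_eq_of_notMem hz]

theorem sum_cycleTypeOn (hsupp : τ.support ⊆ D) : (cycleTypeOn D τ).sum = #D := by
  have hfiber (C : Finset Ω) (hC : C ∈ D.image (cycleThrough τ)) :
      {x ∈ D | cycleThrough τ x = C} = C := by
    obtain ⟨x, hx, rfl⟩ := mem_image.1 hC
    ext y
    rw [mem_filter, cycleThrough_eq_iff, mem_cycleThrough]
    exact ⟨fun h => h.2.symm, fun h => ⟨mem_of_sameCycle hsupp hx h, h.symm⟩⟩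
  rw [card_eq_sum_card_image (cycleThrough τ) D, sum_congr rfl fun C hC => by rw [hfiber C hC]]
  rfl

theorem exists_of_cycleTypeOn_eq_cons {k : ℕ} {A : Multiset ℕ} (hA : cycleTypeOn D τ = k ::ₘ A) :
    ∃ x ∈ D, #(cycleThrough τ x) = k := by
  have hk : k ∈ cycleTypeOn D τ := hA ▸ Multiset.mem_cons_self k A
  obtain ⟨C, hC, rfl⟩ := Multiset.mem_map.1 hk
  obtain ⟨x, hx, rfl⟩ := mem_image.1 hC
  exact ⟨x, hx, rfl⟩

theorem exists_of_cycleTypeOn_eq_cons_cons {k l : ℕ} {A : Multiset ℕ} (hsupp : τ.support ⊆ D)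
    (hA : cycleTypeOn D τ = k ::ₘ l ::ₘ A) :
    ∃ x ∈ D, ∃ y ∈ D, ¬ SameCycle τ x y ∧
      #(cycleThrough τ x) = k ∧ #(cycleThrough τ y) = l := by
  obtain ⟨x, hx, rfl⟩ := exists_of_cycleTypeOn_eq_cons hA
  rw [cycleTypeOn_eq_cons (cycleThrough_subset hsupp hx), Multiset.cons_inj_right] at hA
  obtain ⟨y, hy, rfl⟩ := exists_of_cycleTypeOn_eq_cons hA
  rw [mem_sdiff, mem_cycleThrough] at hy
  exact ⟨x, hx, y, hy.1, hy.2, rfl, rfl⟩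

theorem cycleTypeOn_support (τ : Perm Ω) : cycleTypeOn τ.support τ = τ.cycleType := by
  have hcyc {x : Ω} (hx : x ∈ τ.support) : cycleThrough τ x = (τ.cycleOf x).support := by
    ext y
    rw [mem_cycleThrough, mem_support_cycleOf_iff' (mem_support.1 hx)]
  have himage : τ.support.image (cycleThrough τ) = τ.cycleFactorsFinset.image support := by
    ext C
    simp only [mem_image]
    constructor
    · rintro ⟨x, hx, rfl⟩
      exact ⟨τ.cycleOf x, cycleOf_mem_cycleFactorsFinset_iff.2 hx, (hcyc hx).symm⟩
    · rintro ⟨c, hc, rfl⟩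
      obtain ⟨x, hx⟩ := (mem_cycleFactorsFinset_iff.1 hc).1.nonempty_support
      have hxτ := mem_cycleFactorsFinset_support_le hc hx
      exact ⟨x, hxτ, by rw [hcyc hxτ, cycle_is_cycleOf hx hc]⟩
  have hinj : Set.InjOn support (τ.cycleFactorsFinset : Set (Perm Ω)) := by
    intro c hc c' hc' hsupp
    obtain ⟨x, hx⟩ := (mem_cycleFactorsFinset_iff.1 hc).1.nonempty_support
    rw [cycle_is_cycleOf hx hc, cycle_is_cycleOf (hsupp ▸ hx) hc']
  rw [cycleTypeOn, himage, image_val_of_injOn hinj, Multiset.map_map, cycleType_def]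

theorem cycleTypeOn_of_disjoint_support (h : Disjoint D τ.support) :
    cycleTypeOn D τ = Multiset.replicate #D 1 := by
  have himage : D.image (cycleThrough τ) = D.image singleton :=
    image_congr fun x hx => cycleThrough_of_notMem_support (disjoint_left.1 h hx)
  rw [cycleTypeOn, himage, image_val_of_injOn singleton_injective.injOn, Multiset.map_map]
  exact Multiset.map_const' D.val 1

theorem cycleTypeOn_univ (τ : Perm Ω) : cycleTypeOn univ τ = τ.partition.parts := by
  rw [← union_compl τ.support, cycleTypeOn_union, cycleTypeOn_support,
    cycleTypeOn_of_disjoint_support disjoint_compl_left, parts_partition, card_compl]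
  exact fun x hx y hy hxy => mem_compl.1 hy (mem_of_sameCycle subset_rfl hx hxy)

theorem cycleThrough_mul_swap_left (h : ¬ SameCycle τ x y) :
    cycleThrough (τ * swap x y) x = cycleThrough τ x ∪ cycleThrough τ y := by
  ext u
  simp only [mem_union, mem_cycleThrough]
  rw [sameCycle_mul_swap_iff h]
  exact ⟨fun hu => hu.elim Or.inl And.right, fun hu => .inr ⟨.inl (SameCycle.refl τ x), hu⟩⟩

theorem disjoint_cycleThrough (h : ¬ SameCycle τ x y) :
    Disjoint (cycleThrough τ x) (cycleThrough τ y) :=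
  disjoint_left.2 fun _ hx hy => h ((mem_cycleThrough.1 hx).trans (mem_cycleThrough.1 hy).symm)

theorem card_cycleThrough_mul_swap_left (h : ¬ SameCycle τ x y) :
    #(cycleThrough (τ * swap x y) x) = #(cycleThrough τ x) + #(cycleThrough τ y) := by
  rw [cycleThrough_mul_swap_left h, card_union_of_disjoint (disjoint_cycleThrough h)]

theorem exists_cycleTypeOn_mul_swap (hsupp : τ.support ⊆ D) (hx : x ∈ D) (hy : y ∈ D)
    (h : ¬ SameCycle τ x y) :
    ∃ A, cycleTypeOn D τ = #(cycleThrough τ x) ::ₘ #(cycleThrough τ y) ::ₘ A ∧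
      cycleTypeOn D (τ * swap x y) = (#(cycleThrough τ x) + #(cycleThrough τ y)) ::ₘ A := by
  have houtside : ∀ u ∈ D \ (cycleThrough τ x ∪ cycleThrough τ y),
      cycleThrough (τ * swap x y) u = cycleThrough τ u := by
    intro u hu
    have hu := (mem_sdiff.1 hu).2
    simp only [mem_union, mem_cycleThrough] at hu
    ext v
    simp only [mem_cycleThrough, sameCycle_mul_swap_iff h, hu, false_and, or_false]
  refine ⟨cycleTypeOn (D \ (cycleThrough τ x ∪ cycleThrough τ y)) τ, ?_, ?_⟩
  · have hy' : cycleThrough τ y ⊆ D \ cycleThrough τ x :=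
      subset_sdiff.2 ⟨cycleThrough_subset hsupp hy, (disjoint_cycleThrough h).symm⟩
    rw [cycleTypeOn_eq_cons (cycleThrough_subset hsupp hx), cycleTypeOn_eq_cons hy',
      sdiff_sdiff_left, sup_eq_union]
  · rw [cycleTypeOn_eq_cons (cycleThrough_subset (support_mul_swap_subset hsupp hx hy) hx),
      card_cycleThrough_mul_swap_left h, cycleThrough_mul_swap_left h, cycleTypeOn_congr houtside]

theorem cycleTypeOn_mul_swap {r s : ℕ} {A : Multiset ℕ} (hsupp : τ.support ⊆ D) (hx : x ∈ D)
    (hy : y ∈ D) (h : ¬ SameCycle τ x y) (hr : #(cycleThrough τ x) = r)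
    (hs : #(cycleThrough τ y) = s) :
    cycleTypeOn D (τ * swap x y) = (r + s) ::ₘ A ↔ cycleTypeOn D τ = r ::ₘ s ::ₘ A := by
  obtain ⟨A', hτ, hτ'⟩ := exists_cycleTypeOn_mul_swap hsupp hx hy h
  rw [hτ, hτ', hr, hs, Multiset.cons_inj_right, Multiset.cons_inj_right, Multiset.cons_inj_right]

theorem injOn_pow_apply (τ : Perm Ω) (x : Ω) :
    Set.InjOn (fun i => (τ ^ i) x) (Set.Iio #(cycleThrough τ x)) := fun _ hi _ hj hij =>
  ((isCycleOn_cycleThrough τ x).pow_apply_eq_pow_apply (mem_cycleThrough_self τ x)).1 hij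
    |>.eq_of_lt_of_lt hi hj

theorem cycleThrough_mul_swap_pow {s : ℕ} (hs : 0 < s) (hlt : s < #(cycleThrough τ x)) :
    cycleThrough (τ * swap x ((τ ^ s) x)) ((τ ^ s) x) = (Icc 1 s).image fun i => (τ ^ i) x := by
  set y := (τ ^ s) x with hy
  have hlast : (τ * swap x y) y = τ x := by rw [Perm.mul_apply, swap_apply_right]
  have hstep {i : ℕ} (hi : 0 < i) (his : i < s) :
      (τ * swap x y) ((τ ^ i) x) = (τ ^ (i + 1)) x := by
    have hx : (τ ^ i) x ≠ x := (injOn_pow_apply τ x).ne (his.trans hlt) (hs.trans hlt) hi.ne'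
    have hy : (τ ^ i) x ≠ y := (injOn_pow_apply τ x).ne (his.trans hlt) hlt his.ne
    rw [Perm.mul_apply, swap_apply_of_ne_of_ne hx hy, pow_succ', Perm.mul_apply]
  ext u
  simp only [mem_cycleThrough, mem_image, mem_Icc]
  constructor
  · intro hu
    obtain ⟨n, -, rfl⟩ := hu.exists_pow_eq'
    clear hu
    induction n with
    | zero => exact ⟨s, ⟨hs, le_rfl⟩, rfl⟩
    | succ n ih =>
      obtain ⟨i, ⟨hi, his⟩, hin⟩ := ih
      rw [pow_succ', Perm.mul_apply, ← hin]
      obtain rfl | his := his.eq_or_lt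
      · exact ⟨1, ⟨le_rfl, hs⟩, by rw [← hy, hlast, pow_one]⟩
      · exact ⟨i + 1, ⟨i.succ_pos, his⟩, (hstep hi his).symm⟩
  · rintro ⟨i, ⟨hi, his⟩, rfl⟩
    induction i, hi using Nat.le_induction with
    | base => exact ⟨1, by rw [zpow_one, hlast, pow_one]⟩
    | succ i hi ih =>
      rw [← hstep hi his]
      exact sameCycle_apply_right.2 (ih (Nat.le_of_lt his))

theorem not_sameCycle_mul_swap_pow {s : ℕ} (hs : 0 < s) (hlt : s < #(cycleThrough τ x)) :
    ¬ SameCycle (τ * swap x ((τ ^ s) x)) x ((τ ^ s) x) := by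
  rw [sameCycle_comm, ← mem_cycleThrough, cycleThrough_mul_swap_pow hs hlt, mem_image]
  rintro ⟨i, hi, hix⟩
  rw [mem_Icc] at hi
  have := injOn_pow_apply τ x (hi.2.trans_lt hlt) (hs.trans hlt) hix
  omega

theorem not_sameCycle_mul_swap (hne : x ≠ y) (h : cycleThrough τ x = cycleThrough τ y) :
    ¬ SameCycle (τ * swap x y) x y := by
  obtain ⟨s, hlt, rfl⟩ := (isCycleOn_cycleThrough τ x).exists_pow_eq
    (mem_cycleThrough_self τ x) (h ▸ mem_cycleThrough_self τ y)
  refine not_sameCycle_mul_swap_pow (Nat.pos_of_ne_zero ?_) hlt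
  rintro rfl
  exact hne rfl

theorem exists_card_cycleThrough_mul_swap {r s : ℕ} (hr : 0 < r) (hs : 0 < s)
    (hx : #(cycleThrough τ x) = r + s) :
    ∃ y, SameCycle τ x y ∧ ¬ SameCycle (τ * swap x y) x y ∧
      #(cycleThrough (τ * swap x y) x) = r ∧ #(cycleThrough (τ * swap x y) y) = s := by
  have hlt : s < #(cycleThrough τ x) := by omega
  have hsplit := not_sameCycle_mul_swap_pow hs hlt
  have hsy : #(cycleThrough (τ * swap x ((τ ^ s) x)) ((τ ^ s) x)) = s := by
    rw [cycleThrough_mul_swap_pow hs hlt, card_image_of_injOn, Nat.card_Icc, Nat.add_sub_cancel]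
    refine (injOn_pow_apply τ x).mono fun i hi => ?_
    exact (mem_Icc.1 (mem_coe.1 hi)).2.trans_lt hlt
  have hmerge := card_cycleThrough_mul_swap_left hsplit
  rw [mul_swap_mul_self, hx, hsy] at hmerge
  exact ⟨(τ ^ s) x, ⟨s, rfl⟩, hsplit, by omega, hsy⟩

/-! ### Inserting points into a cycle -/

/-- `τ'`, a permutation of `D'`, arises from `τ`, a permutation of `D`, by inserting the points of
`D' \ D` into the cycle through `y`. Only the partition into cycles is recorded, as this is all that
matters for cycle types. -/
structure Enlarges (D : Finset Ω) (τ : Perm Ω) (D' : Finset Ω) (τ' : Perm Ω) (y : Ω) : Prop where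
  support_subset : τ.support ⊆ D
  support_subset' : τ'.support ⊆ D'
  subset : D ⊆ D'
  mem : y ∈ D
  sameCycle_iff : ∀ u ∈ D, ∀ v ∈ D, SameCycle τ' u v ↔ SameCycle τ u v
  sameCycle_new : ∀ u ∈ D', u ∉ D → SameCycle τ' y u

namespace Enlarges

variable {D' D'' : Finset Ω} {τ'' : Perm Ω}

theorem refl (hsupp : τ.support ⊆ D) (hy : y ∈ D) : Enlarges D τ D τ y :=
  ⟨hsupp, hsupp, subset_rfl, hy, fun _ _ _ _ => Iff.rfl, fun _ hu hu' => absurd hu hu'⟩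

theorem trans (h : Enlarges D τ D' τ' y) (h' : Enlarges D' τ' D'' τ'' w)
    (hyw : SameCycle τ' y w) : Enlarges D τ D'' τ'' y where
  support_subset := h.support_subset
  support_subset' := h'.support_subset'
  subset := h.subset.trans h'.subset
  mem := h.mem
  sameCycle_iff u hu v hv :=
    (h'.sameCycle_iff u (h.subset hu) v (h.subset hv)).trans (h.sameCycle_iff u hu v hv)
  sameCycle_new u hu hu' := by
    have hy := h.subset h.mem
    by_cases huD' : u ∈ D'
    · exact (h'.sameCycle_iff y hy u huD').2 (h.sameCycle_new u huD' hu')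
    · exact ((h'.sameCycle_iff y hy w h'.mem).2 hyw).trans (h'.sameCycle_new u hu huD')

theorem of_sameCycle (h : Enlarges D τ D' τ' y) (hyw : SameCycle τ y w) :
    Enlarges D τ D' τ' w where
  __ := h
  mem := mem_of_sameCycle h.support_subset h.mem hyw
  sameCycle_new u hu hu' := by
    have hw := mem_of_sameCycle h.support_subset h.mem hyw
    exact ((h.sameCycle_iff y h.mem w hw).2 hyw).symm.trans (h.sameCycle_new u hu hu')

theorem exists_sameCycle (h : Enlarges D τ D' τ' y) (hP : ∀ u ∈ D, ∃ p ∈ P, SameCycle τ u p)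
    (hPD : P ⊆ D) (hu : u ∈ D') : ∃ p ∈ P, SameCycle τ' u p := by
  have hold {v : Ω} (hv : v ∈ D) : ∃ p ∈ P, SameCycle τ' v p := by
    obtain ⟨p, hp, hvp⟩ := hP v hv
    exact ⟨p, hp, (h.sameCycle_iff v hv p (hPD hp)).2 hvp⟩
  by_cases huD : u ∈ D
  · exact hold huD
  · obtain ⟨p, hp, hyp⟩ := hold h.mem
    exact ⟨p, hp, (h.sameCycle_new u hu huD).symm.trans hyp⟩

theorem cycleThrough_eq (h : Enlarges D τ D' τ' y) :
    cycleThrough τ' y = cycleThrough τ y ∪ (D' \ D) := by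
  ext u
  rw [mem_union, mem_cycleThrough, mem_cycleThrough, mem_sdiff]
  constructor
  · intro hu
    by_cases huD : u ∈ D
    · exact .inl ((h.sameCycle_iff y h.mem u huD).1 hu)
    · exact .inr ⟨mem_of_sameCycle h.support_subset' (h.subset h.mem) hu, huD⟩
  · rintro (hu | ⟨hu, huD⟩)
    · exact (h.sameCycle_iff y h.mem u (mem_of_sameCycle h.support_subset h.mem hu)).2 hu
    · exact h.sameCycle_new u hu huD

theorem card_cycleThrough (h : Enlarges D τ D' τ' y) {j : ℕ} (hj : #D' = #D + j) :
    #(cycleThrough τ' y) = #(cycleThrough τ y) + j := by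
  rw [h.cycleThrough_eq, card_union_of_disjoint, card_sdiff_of_subset h.subset, hj,
    Nat.add_sub_cancel_left]
  exact disjoint_sdiff.mono_left (cycleThrough_subset h.support_subset h.mem)

theorem card_cycleThrough_new (h : Enlarges D τ D' τ' y) {j : ℕ} (hj : #D' = #D + j)
    (hu : u ∈ D') (hu' : u ∉ D) : #(cycleThrough τ' u) = #(cycleThrough τ y) + j := by
  rw [← cycleThrough_eq_iff.2 (h.sameCycle_new u hu hu'), h.card_cycleThrough hj]

theorem cycleThrough_eq_of_not_sameCycle (h : Enlarges D τ D' τ' y) (hu : u ∈ D)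
    (hyu : ¬ SameCycle τ y u) : cycleThrough τ' u = cycleThrough τ u := by
  ext v
  rw [mem_cycleThrough, mem_cycleThrough]
  by_cases hv : v ∈ D
  · exact h.sameCycle_iff u hu v hv
  · refine iff_of_false (fun huv => hyu ?_) (not_sameCycle h.support_subset hu hv)
    have hvD' := mem_of_sameCycle h.support_subset' (h.subset hu) huv
    exact (h.sameCycle_iff y h.mem u hu).1 ((h.sameCycle_new v hvD' hv).trans huv.symm)

theorem cycleTypeOn_eq (h : Enlarges D τ D' τ' y) {j k : ℕ} {A : Multiset ℕ}
    (hj : #D' = #D + j) (hk : #(cycleThrough τ y) = k) (hA : cycleTypeOn D τ = k ::ₘ A) :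
    cycleTypeOn D' τ' = (k + j) ::ₘ A := by
  have hrest : D' \ cycleThrough τ' y = D \ cycleThrough τ y := by
    ext u
    have := @h.subset u
    simp only [h.cycleThrough_eq, mem_sdiff, mem_union]
    tauto
  rw [cycleTypeOn_eq_cons (cycleThrough_subset h.support_subset h.mem), hk,
    Multiset.cons_inj_right] at hA
  rw [cycleTypeOn_eq_cons (cycleThrough_subset h.support_subset' (h.subset h.mem)),
    h.card_cycleThrough hj, hk, hrest, ← hA]
  refine congrArg _ (cycleTypeOn_congr fun u hu => ?_)
  rw [mem_sdiff, mem_cycleThrough] at hu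
  exact h.cycleThrough_eq_of_not_sameCycle hu.1 hu.2

end Enlarges

theorem enlarges_mul_swap (hsupp : τ.support ⊆ D) (hy : y ∈ D) (hz : z ∉ D) :
    Enlarges D τ (insert z D) (τ * swap y z) y := by
  have hyz := not_sameCycle hsupp hy hz
  have hout {u : Ω} (hu : u ∈ D) : ¬ SameCycle τ z u := fun h =>
    not_sameCycle hsupp hu hz h.symm
  refine ⟨hsupp, support_mul_swap_subset (hsupp.trans (subset_insert z D)) (mem_insert_of_mem hy)
    (mem_insert_self z D), subset_insert z D, hy, fun u hu v hv => ?_, fun u hu hu' => ?_⟩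
  · simp only [sameCycle_mul_swap_iff hyz, hout hu, hout hv, or_false, or_iff_left_iff_imp]
    exact fun h => h.1.symm.trans h.2
  · obtain rfl := (mem_insert.1 hu).resolve_right hu'
    exact sameCycle_mul_swap_self hyz

theorem enlarges_swap_mul (hsupp : τ.support ⊆ D) (hy : y ∈ D) (hz : z ∉ D) :
    Enlarges D τ (insert z D) (swap y z * τ) y := by
  have hτz : τ⁻¹ z = z := by
    rw [Perm.inv_eq_iff_eq, eq_comm]
    exact notMem_support.1 fun h => hz (hsupp h)
  have hy' : SameCycle τ (τ⁻¹ y) y := ⟨1, by simp⟩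
  have hswap : swap y z * τ = τ * swap (τ⁻¹ y) z := by rw [swap_mul_eq_mul_swap, hτz]
  rw [hswap]
  exact (enlarges_mul_swap hsupp (mem_of_sameCycle hsupp hy hy'.symm) hz).of_sameCycle hy'

theorem enlarges_mul_swap_mul_swap {z₁ z₂ : Ω} (hsupp : τ.support ⊆ D) (hy : y ∈ D)
    (hw : w ∈ D) (hyw : SameCycle τ y w) (hz₂ : z₂ ∉ D) (hz₁ : z₁ ∉ insert z₂ D) :
    Enlarges D τ (insert z₁ (insert z₂ D)) (τ * swap y z₂ * swap w z₁) y := by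
  have h := enlarges_mul_swap hsupp hy hz₂
  exact h.trans (enlarges_mul_swap h.support_subset' (h.subset hw) hz₁)
    ((h.sameCycle_iff y hy w hw).2 hyw)

theorem cycleTypeOn_mul_swap_of_notMem {z₁ z₂ : Ω} (hsupp : τ.support ⊆ D) (hz₂ : z₂ ∉ D)
    (hz₁ : z₁ ∉ insert z₂ D) : #(cycleThrough (τ * swap z₂ z₁) z₁) = 2 ∧
      cycleTypeOn (insert z₁ (insert z₂ D)) (τ * swap z₂ z₁) = 2 ::ₘ cycleTypeOn D τ := by
  have h := enlarges_mul_swap (hsupp.trans (subset_insert z₂ D)) (mem_insert_self z₂ D) hz₁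
  have hcard := card_insert_of_notMem hz₁
  have hz₂τ : #(cycleThrough τ z₂) = 1 := by
    rw [cycleThrough_of_notMem_support (mt (@hsupp z₂) hz₂), card_singleton]
  exact ⟨by rw [h.card_cycleThrough_new hcard (mem_insert_self _ _) hz₁, hz₂τ],
    h.cycleTypeOn_eq hcard hz₂τ (cycleTypeOn_insert hsupp hz₂)⟩

theorem cycleTypeOn_mul_swap_mul_swap {z₁ z₂ : Ω} {r s : ℕ} {A : Multiset ℕ}
    (hsupp : τ.support ⊆ D) (hy : y ∈ D) (hw : w ∈ D) (hyw : ¬ SameCycle τ y w) (hz₂ : z₂ ∉ D)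
    (hz₁ : z₁ ∉ insert z₂ D) (hr : #(cycleThrough τ y) = r) (hs : #(cycleThrough τ w) = s)
    (hA : cycleTypeOn D τ = r ::ₘ s ::ₘ A) :
    ¬ SameCycle (τ * swap y z₂ * swap w z₁) z₂ z₁ ∧
      #(cycleThrough (τ * swap y z₂ * swap w z₁) z₂) = r + 1 ∧
      #(cycleThrough (τ * swap y z₂ * swap w z₁) z₁) = s + 1 ∧
      cycleTypeOn (insert z₁ (insert z₂ D)) (τ * swap y z₂ * swap w z₁) =
        (r + 1) ::ₘ (s + 1) ::ₘ A := by
  have hD₂ := card_insert_of_notMem hz₂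
  have hD₁ := card_insert_of_notMem hz₁
  have hz₂' := mem_insert_self z₂ D
  have hz₁' := mem_insert_self z₁ (insert z₂ D)
  have h := enlarges_mul_swap hsupp hy hz₂
  have hwD := h.subset hw
  have h' := enlarges_mul_swap h.support_subset' hwD hz₁
  have hwz₂ : ¬ SameCycle (τ * swap y z₂) w z₂ := fun hwz₂ =>
    hyw ((h.sameCycle_iff y hy w hw).1 ((h.sameCycle_new z₂ hz₂' hz₂).trans hwz₂.symm))
  have hws : #(cycleThrough (τ * swap y z₂) w) = s := by
    rw [h.cycleThrough_eq_of_not_sameCycle hw hyw, hs]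
  refine ⟨fun hz => hwz₂ ((h'.sameCycle_iff w hwD z₂ hz₂').1
    ((h'.sameCycle_new z₁ hz₁' hz₁).trans hz.symm)), ?_, ?_, ?_⟩
  · rw [h'.cycleThrough_eq_of_not_sameCycle hz₂' hwz₂, h.card_cycleThrough_new hD₂ hz₂' hz₂, hr]
  · rw [h'.card_cycleThrough_new hD₁ hz₁' hz₁, hws]
  · have htype := h.cycleTypeOn_eq hD₂ hr hA
    rw [Multiset.cons_swap] at htype ⊢
    exact h'.cycleTypeOn_eq hD₁ hws htype

/-! ### Pairs of permutations with cyclic product -/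

variable {τ₁ τ₂ : Perm Ω} {p z₁ z₂ : Ω}

theorem exists_notMem {α : Type*} [Fintype α] {s : Finset α} (h : #s < Fintype.card α) :
    ∃ a, a ∉ s := by
  obtain ⟨z, -, hz⟩ := exists_mem_notMem_of_card_lt_card (t := univ) h
  exact ⟨z, hz⟩

theorem exists_notMem_insert {α : Type*} [Fintype α] [DecidableEq α] {s : Finset α}
    (h : #s + 2 ≤ Fintype.card α) : ∃ a ∉ s, ∃ b, b ∉ insert a s := by
  obtain ⟨a, ha⟩ := exists_notMem (s := s) (by omega)
  exact ⟨a, ha, exists_notMem (by rw [card_insert_of_notMem ha]; omega)⟩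

theorem card_insert_insert_of_notMem {α : Type*} [DecidableEq α] {s : Finset α} {a b : α}
    (ha : a ∉ s) (hb : b ∉ insert a s) : #(insert b (insert a s)) = #s + 2 := by
  rw [card_insert_of_notMem hb, card_insert_of_notMem ha]

/-- `(τ₁, τ₂)` is a pair of permutations of `D` whose product is a cycle on `P ⊆ D` and fixes the
points outside `P`; every cycle of `τ₁` meets `P`, which makes the pair transitive on `D`. -/
structure CyclicPair (D P : Finset Ω) (τ₁ τ₂ : Perm Ω) : Prop where
  support_left : τ₁.support ⊆ D
  support_right : τ₂.support ⊆ D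
  support_mul : (τ₁ * τ₂).support ⊆ P
  isCycleOn : (τ₁ * τ₂).IsCycleOn P
  subset : P ⊆ D
  exists_sameCycle_left : ∀ x ∈ D, ∃ p ∈ P, SameCycle τ₁ x p

namespace CyclicPair

theorem exists_sameCycle_right (h : CyclicPair D P τ₁ τ₂) (hx : x ∈ D) :
    ∃ p ∈ P, SameCycle τ₂ x p := by
  -- Off `P` the product is trivial, so a cycle of `τ₂` avoiding `P` is also a cycle of `τ₁`.
  by_contra! hP
  have hpow (n : ℕ) : (τ₁⁻¹ ^ n) x = (τ₂ ^ n) x := by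
    induction n with
    | zero => rfl
    | succ n ih =>
      have hn : (τ₂ ^ n) x ∉ P := fun hn => hP _ hn ⟨n, rfl⟩
      have hfix : τ₁ (τ₂ ((τ₂ ^ n) x)) = (τ₂ ^ n) x :=
        notMem_support.1 fun hn' => hn (h.support_mul hn')
      rw [pow_succ', pow_succ', Perm.mul_apply, Perm.mul_apply, ih, Perm.inv_eq_iff_eq, hfix]
  obtain ⟨p, hp, hxp⟩ := h.exists_sameCycle_left x hx
  obtain ⟨n, rfl⟩ := (sameCycle_inv.2 hxp).exists_nat_pow_eq
  exact hP _ hp ⟨n, by rw [hpow]; rfl⟩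

theorem symm (h : CyclicPair D P τ₁ τ₂) : CyclicPair D P τ₂⁻¹ τ₁⁻¹ where
  support_left := by rw [support_inv]; exact h.support_right
  support_right := by rw [support_inv]; exact h.support_left
  support_mul := by rw [← mul_inv_rev, support_inv]; exact h.support_mul
  isCycleOn := by rw [← mul_inv_rev, isCycleOn_inv]; exact h.isCycleOn
  subset := h.subset
  exists_sameCycle_left x hx := by simpa only [sameCycle_inv] using h.exists_sameCycle_right hx

theorem exists_sameCycle_insert (h : CyclicPair D P τ₁ τ₂) (z : Ω) (hx : x ∈ insert z D) :
    ∃ p ∈ insert z P, SameCycle τ₁ x p := by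
  obtain rfl | hx := mem_insert.1 hx
  · exact ⟨x, mem_insert_self x P, SameCycle.refl τ₁ x⟩
  · obtain ⟨p, hp, hxp⟩ := h.exists_sameCycle_left x hx
    exact ⟨p, mem_insert_of_mem hp, hxp⟩

theorem exists_mem_apply_apply_eq (h : CyclicPair D P τ₁ τ₂) (hp : p ∈ P) :
    ∃ y ∈ P, τ₁ (τ₂ y) = p := h.isCycleOn.1.surjOn hp

theorem double (h : CyclicPair D P τ₁ τ₂) (hx : x ∈ D) (hz : z ∉ D) :
    CyclicPair (insert z D) P (τ₁ * swap x z) (swap x z * τ₂) := by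
  have h₁ := enlarges_mul_swap h.support_left hx hz
  have hmul : τ₁ * swap x z * (swap x z * τ₂) = τ₁ * τ₂ := by
    rw [mul_assoc, swap_mul_self_mul]
  exact {
    support_left := h₁.support_subset'
    support_right := (enlarges_swap_mul h.support_right hx hz).support_subset'
    support_mul := hmul ▸ h.support_mul
    isCycleOn := hmul ▸ h.isCycleOn
    subset := h.subset.trans (subset_insert z D)
    exists_sameCycle_left := fun _ => h₁.exists_sameCycle h.exists_sameCycle_left h.subset }

theorem exists_enlarges (h : CyclicPair D P τ₁ τ₂) (hx : x ∈ D) {j : ℕ}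
    (hj : #D + j ≤ Fintype.card Ω) : ∃ D' τ₁' τ₂', #D' = #D + j ∧ CyclicPair D' P τ₁' τ₂' ∧
      Enlarges D τ₁ D' τ₁' x ∧ Enlarges D τ₂ D' τ₂' x := by
  induction j with
  | zero =>
    exact ⟨D, τ₁, τ₂, rfl, h, Enlarges.refl h.support_left hx, Enlarges.refl h.support_right hx⟩
  | succ j ih =>
    obtain ⟨D', τ₁', τ₂', hD', h', h₁, h₂⟩ := ih (by omega)
    obtain ⟨z, hz⟩ := exists_notMem (s := D') (by omega)
    have hx' := h₁.subset hx
    refine ⟨insert z D', _, _, by rw [card_insert_of_notMem hz, hD', add_assoc], h'.double hx' hz,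
      h₁.trans (enlarges_mul_swap h'.support_left hx' hz) (SameCycle.refl _ _),
      h₂.trans (enlarges_swap_mul h'.support_right hx' hz) (SameCycle.refl _ _)⟩

theorem leaf (h : CyclicPair D P τ₁ τ₂) (hy : y ∈ P) (hz : z ∉ D) :
    CyclicPair (insert z D) (insert z P) τ₁ (τ₂ * swap y z) := by
  have hsub := subset_insert z D
  have hsubP := subset_insert z P
  exact {
    support_left := h.support_left.trans hsub
    support_right := (enlarges_mul_swap h.support_right (h.subset hy) hz).support_subset'
    support_mul := by
      rw [← mul_assoc]
      exact support_mul_swap_subset (h.support_mul.trans hsubP) (hsubP hy) (mem_insert_self z P)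
    isCycleOn := by
      rw [← mul_assoc]
      exact isCycleOn_insert_mul_swap h.isCycleOn h.support_mul hy (mt (@h.subset z) hz)
    subset := insert_subset_insert z h.subset
    exists_sameCycle_left := fun _ => h.exists_sameCycle_insert z }

theorem card_insert_insert (h : CyclicPair D P τ₁ τ₂) (hz₂ : z₂ ∉ D) (hz₁ : z₁ ∉ insert z₂ D) :
    #(insert z₁ (insert z₂ P)) = #P + 2 :=
  card_insert_insert_of_notMem (mt (@h.subset z₂) hz₂)
    (mt (@insert_subset_insert _ _ z₂ _ _ h.subset z₁) hz₁)

theorem of_mul_eq {τ₁' τ₂' : Perm Ω} (h : CyclicPair D P τ₁ τ₂) (hy : y ∈ P) (hw : w ∈ P)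
    (hz₂ : z₂ ∉ D) (hz₁ : z₁ ∉ insert z₂ D) (hsupp₁ : τ₁'.support ⊆ insert z₁ (insert z₂ D))
    (hsupp₂ : τ₂'.support ⊆ insert z₁ (insert z₂ D))
    (hmul : τ₁' * τ₂' = τ₁ * τ₂ * (swap y z₁ * swap w z₂))
    (hP : ∀ x ∈ insert z₁ (insert z₂ D), ∃ p ∈ insert z₁ (insert z₂ P), SameCycle τ₁' x p) :
    CyclicPair (insert z₁ (insert z₂ D)) (insert z₁ (insert z₂ P)) τ₁' τ₂' := by
  have hz₂P : z₂ ∉ insert z₁ P := fun hz => by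
    obtain rfl | hz := mem_insert.1 hz
    exacts [hz₁ (mem_insert_self _ _), hz₂ (h.subset hz)]
  have hz₁P : z₁ ∉ P := fun hz => hz₁ (mem_insert_of_mem (h.subset hz))
  have hsub₁ := subset_insert z₁ P
  have hsub₂ := subset_insert z₂ (insert z₁ P)
  have hsupp : (τ₁ * τ₂ * swap y z₁).support ⊆ insert z₁ P :=
    support_mul_swap_subset (h.support_mul.trans hsub₁) (hsub₁ hy) (mem_insert_self z₁ P)
  refine ⟨hsupp₁, hsupp₂, ?_, ?_,
    insert_subset_insert _ (insert_subset_insert _ h.subset), hP⟩ <;>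
    rw [hmul, ← mul_assoc, insert_comm]
  · exact support_mul_swap_subset (hsupp.trans hsub₂) (hsub₂ (hsub₁ hw)) (mem_insert_self z₂ _)
  · exact isCycleOn_insert_mul_swap (isCycleOn_insert_mul_swap h.isCycleOn h.support_mul hy hz₁P)
      hsupp (hsub₁ hw) hz₂P

theorem handle (h : CyclicPair D P τ₁ τ₂) (hy : y ∈ P) (hw : w ∈ P) (hz₂ : z₂ ∉ D)
    (hz₁ : z₁ ∉ insert z₂ D) :
    CyclicPair (insert z₁ (insert z₂ D)) (insert z₁ (insert z₂ P))
      (τ₁ * swap (τ₂ y) z₂ * swap (τ₂ y) z₁) (τ₂ * swap w z₂ * swap w z₁) := by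
  have hτ₂y : τ₂ y ∈ D := mem_of_sameCycle h.support_right (h.subset hy) ⟨1, rfl⟩
  have h₁ := enlarges_mul_swap_mul_swap h.support_left hτ₂y hτ₂y (SameCycle.refl _ _) hz₂ hz₁
  have h₂ := enlarges_mul_swap_mul_swap h.support_right (h.subset hw) (h.subset hw)
    (SameCycle.refl _ _) hz₂ hz₁
  have hcomm {z : Ω} (hz : z ∉ D) : swap (τ₂ y) z * τ₂ = τ₂ * swap y z := by
    rw [mul_swap_eq_swap_mul, notMem_support.1 fun hz' => hz (h.support_right hz')]
  refine h.of_mul_eq hy hw hz₂ hz₁ h₁.support_subset' h₂.support_subset' ?_ fun u hu => ?_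
  · have hyz₂ : y ≠ z₂ := fun hyz => hz₂ (hyz ▸ h.subset hy)
    have hwz₁ : w ≠ z₁ := fun hwz => hz₁ (mem_insert_of_mem (hwz ▸ h.subset hw))
    have hzz : z₁ ≠ z₂ := fun hzz => hz₁ (hzz ▸ mem_insert_self z₂ D)
    calc
      _ = τ₁ * (swap (τ₂ y) z₂ * (swap (τ₂ y) z₁ * τ₂)) * (swap w z₂ * swap w z₁) := by
        simp only [mul_assoc]
      _ = τ₁ * τ₂ * (swap y z₂ * swap y z₁ * (swap w z₂ * swap w z₁)) := by
        rw [hcomm fun hz => hz₁ (mem_insert_of_mem hz), ← mul_assoc (swap _ _), hcomm hz₂]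
        simp only [mul_assoc]
      _ = τ₁ * τ₂ * (swap y z₁ * swap w z₂) := by rw [swap_mul_swap_of_handle hzz hyz₂ hwz₁]
  · obtain ⟨p, hp, hup⟩ := h₁.exists_sameCycle h.exists_sameCycle_left h.subset hu
    exact ⟨p, mem_insert_of_mem (mem_insert_of_mem hp), hup⟩

theorem bivalent (h : CyclicPair D P τ₁ τ₂) (hy : y ∈ P) (hw : w ∈ P) (hyw : y ≠ w)
    (hz₂ : z₂ ∉ D) (hz₁ : z₁ ∉ insert z₂ D) :
    CyclicPair (insert z₁ (insert z₂ D)) (insert z₁ (insert z₂ P))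
      (τ₁ * swap z₂ z₁) (τ₂ * swap y w * swap y z₂ * swap w z₁) := by
  have hsub : D ⊆ insert z₁ (insert z₂ D) := (subset_insert _ _).trans (subset_insert _ _)
  have hz₁D := mem_insert_self z₁ (insert z₂ D)
  have hz₂D : z₂ ∈ insert z₁ (insert z₂ D) := mem_insert_of_mem (mem_insert_self z₂ D)
  have hyD := hsub (h.subset hy)
  have hwD := hsub (h.subset hw)
  have h₁ := enlarges_mul_swap (h.support_left.trans (subset_insert z₂ D))
    (mem_insert_self z₂ D) hz₁
  refine h.of_mul_eq hy hw hz₂ hz₁ h₁.support_subset'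
    (support_mul_swap_subset (support_mul_swap_subset (support_mul_swap_subset
      (h.support_right.trans hsub) hyD hwD) hyD hz₂D) hwD hz₁D) ?_ fun u hu => ?_
  · have hfix {z : Ω} (hz : z ∉ D) : τ₂ z = z :=
      notMem_support.1 fun hz' => hz (h.support_right hz')
    have hz₁' : z₁ ∉ D := fun hz => hz₁ (mem_insert_of_mem hz)
    have hne {u z : Ω} (hu : u ∈ P) (hz : z ∉ D) : u ≠ z := fun huz => hz (huz ▸ h.subset hu)
    have hzz : z₁ ≠ z₂ := fun hzz => hz₁ (hzz ▸ mem_insert_self z₂ D)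
    have hcomm : swap z₂ z₁ * τ₂ = τ₂ * swap z₂ z₁ := by
      rw [mul_swap_eq_swap_mul, hfix hz₁', hfix hz₂]
    calc
      _ = τ₁ * (swap z₂ z₁ * τ₂) * (swap y w * swap y z₂ * swap w z₁) := by
        simp only [mul_assoc]
      _ = τ₁ * τ₂ * (swap z₂ z₁ * (swap y w * swap y z₂ * swap w z₁)) := by
        rw [hcomm]
        simp only [mul_assoc]
      _ = τ₁ * τ₂ * (swap y z₁ * swap w z₂) := by
        rw [swap_mul_swap_of_bivalent hyw hzz (hne hy hz₁') (hne hy hz₂) (hne hw hz₁') (hne hw hz₂)]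
  · obtain ⟨p, hp, hup⟩ := h₁.exists_sameCycle (fun _ => h.exists_sameCycle_insert z₂)
      (insert_subset_insert z₂ h.subset) hu
    exact ⟨p, mem_insert_of_mem hp, hup⟩

end CyclicPair

/-! ### Realizable cycle types -/

variable {A B : Multiset ℕ} {a b g k l n r s : ℕ}

variable (Ω) in
/-- Some cyclic pair on a subset of `Ω`, with product an `n`-cycle, has cycle types `A` and `B`. -/
def Realizable (n : ℕ) (A B : Multiset ℕ) : Prop :=
  ∃ D P : Finset Ω, ∃ τ₁ τ₂ : Perm Ω, CyclicPair D P τ₁ τ₂ ∧ #P = n ∧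
    cycleTypeOn D τ₁ = A ∧ cycleTypeOn D τ₂ = B

theorem CyclicPair.realizable_add {j : ℕ} (h : CyclicPair D P τ₁ τ₂) (hx : x ∈ D)
    (hk : #(cycleThrough τ₁ x) = k) (hl : #(cycleThrough τ₂ x) = l)
    (hA : cycleTypeOn D τ₁ = k ::ₘ A) (hB : cycleTypeOn D τ₂ = l ::ₘ B)
    (hj : #D + j ≤ Fintype.card Ω) : Realizable Ω #P ((k + j) ::ₘ A) ((l + j) ::ₘ B) := by
  obtain ⟨D', τ₁', τ₂', hD', h', h₁, h₂⟩ := h.exists_enlarges hx hj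
  exact ⟨D', P, τ₁', τ₂', h', rfl, h₁.cycleTypeOn_eq hD' hk hA, h₂.cycleTypeOn_eq hD' hl hB⟩

theorem CyclicPair.realizable_add_add {i j : ℕ} (h : CyclicPair D P τ₁ τ₂) (hy : y ∈ D)
    (hw : w ∈ D) (hyw₁ : SameCycle τ₁ y w) (hyw₂ : ¬ SameCycle τ₂ y w)
    (hk : #(cycleThrough τ₁ y) = k) (hr : #(cycleThrough τ₂ y) = r)
    (hs : #(cycleThrough τ₂ w) = s) (hA : cycleTypeOn D τ₁ = k ::ₘ A)
    (hB : cycleTypeOn D τ₂ = r ::ₘ s ::ₘ B) (hij : #D + (i + j) ≤ Fintype.card Ω) :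
    Realizable Ω #P ((k + (i + j)) ::ₘ A) ((r + i) ::ₘ (s + j) ::ₘ B) := by
  obtain ⟨D', τ₁', τ₂', hD', h', h₁, h₂⟩ := h.exists_enlarges (j := i) hy (by omega)
  have hk' : #(cycleThrough τ₁' w) = k + i := by
    rw [← cycleThrough_eq_iff.2 ((h₁.sameCycle_iff y hy w hw).2 hyw₁), h₁.card_cycleThrough hD', hk]
  have hs' : #(cycleThrough τ₂' w) = s := by
    rw [h₂.cycleThrough_eq_of_not_sameCycle hw hyw₂, hs]
  have hB' := h₂.cycleTypeOn_eq hD' hr hB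
  rw [Multiset.cons_swap] at hB' ⊢
  rw [← add_assoc]
  exact h'.realizable_add (h₁.subset hw) hk' hs' (h₁.cycleTypeOn_eq hD' hk hA) hB' (by omega)

namespace Realizable

theorem symm (h : Realizable Ω n A B) : Realizable Ω n B A := by
  obtain ⟨D, P, τ₁, τ₂, h, hP, hA, hB⟩ := h
  exact ⟨D, P, τ₂⁻¹, τ₁⁻¹, h.symm, hP, by rw [cycleTypeOn_inv, hB], by rw [cycleTypeOn_inv, hA]⟩

theorem one [Nonempty Ω] : Realizable Ω 1 {1} {1} := by
  obtain ⟨x⟩ := ‹Nonempty Ω›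
  have htype : cycleTypeOn {x} (1 : Perm Ω) = {1} :=
    cycleTypeOn_of_disjoint_support (by simp)
  refine ⟨{x}, {x}, 1, 1, ⟨by simp, by simp, by simp, by simp, subset_rfl, fun y hy => ?_⟩, by simp,
    htype, htype⟩
  exact ⟨y, hy, SameCycle.refl _ y⟩

theorem leaf (h : Realizable Ω n A (b ::ₘ B)) (ha : 0 < a) (hcard : A.sum + a ≤ Fintype.card Ω) :
    Realizable Ω (n + 1) (a ::ₘ A) ((b + a) ::ₘ B) := by
  obtain ⟨D, P, τ₁, τ₂, h, hP, hA, hB⟩ := h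
  have hD : #D = A.sum := by rw [← hA, sum_cycleTypeOn h.support_left]
  obtain ⟨x, hx, hxb⟩ := exists_of_cycleTypeOn_eq_cons hB
  obtain ⟨p, hp, hxp⟩ := h.exists_sameCycle_right hx
  rw [cycleThrough_eq_iff.2 hxp] at hxb
  obtain ⟨z, hz⟩ := exists_notMem (s := D) (by omega)
  have hD' := card_insert_of_notMem hz
  have h₂ := enlarges_mul_swap h.support_right (h.subset hp) hz
  have hz₁ : #(cycleThrough τ₁ z) = 1 := by
    rw [cycleThrough_of_notMem_support (mt (@h.support_left z) hz), card_singleton]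
  have hz₂ : #(cycleThrough (τ₂ * swap p z) z) = b + 1 := by
    rw [h₂.card_cycleThrough_new hD' (mem_insert_self z D) hz, hxb]
  have hreal := (h.leaf hp hz).realizable_add (j := a - 1) (mem_insert_self z D) hz₁ hz₂
    (by rw [cycleTypeOn_insert h.support_left hz, hA]) (h₂.cycleTypeOn_eq hD' hxb hB) (by omega)
  rwa [card_insert_of_notMem (mt (@h.subset z) hz), hP, add_assoc, Nat.add_sub_cancel' ha] at hreal

theorem handle (h : Realizable Ω n (a ::ₘ A) (b ::ₘ B))
    (hcard : a + A.sum + (2 + k) ≤ Fintype.card Ω) :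
    Realizable Ω (n + 2) ((a + (2 + k)) ::ₘ A) ((b + (2 + k)) ::ₘ B) := by
  obtain ⟨D, P, τ₁, τ₂, h, hP, hA, hB⟩ := h
  have hD : #D = a + A.sum := by
    rw [← Multiset.sum_cons, ← hA, sum_cycleTypeOn h.support_left]
  obtain ⟨x, hx, hxa⟩ := exists_of_cycleTypeOn_eq_cons hA
  obtain ⟨p, hp, hxp⟩ := h.exists_sameCycle_left x hx
  obtain ⟨x', hx', hxb⟩ := exists_of_cycleTypeOn_eq_cons hB
  obtain ⟨q, hq, hxq⟩ := h.exists_sameCycle_right hx'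
  obtain ⟨y, hy, rfl⟩ := h.exists_mem_apply_apply_eq hp
  obtain ⟨z₂, hz₂, z₁, hz₁⟩ := exists_notMem_insert (s := D) (by omega)
  have hD' := card_insert_insert_of_notMem hz₂ hz₁
  have hτ₂y : τ₂ y ∈ D := mem_of_sameCycle h.support_right (h.subset hy) ⟨1, rfl⟩
  have hya : #(cycleThrough τ₁ (τ₂ y)) = a := by
    rw [← hxa, cycleThrough_eq_iff.2 (hxp.trans (sameCycle_apply_left.2 (SameCycle.refl _ _)))]
  rw [cycleThrough_eq_iff.2 hxq] at hxb
  have h₁ := enlarges_mul_swap_mul_swap h.support_left hτ₂y hτ₂y (SameCycle.refl _ _) hz₂ hz₁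
  have h₂ := enlarges_mul_swap_mul_swap h.support_right (h.subset hq) (h.subset hq)
    (SameCycle.refl _ _) hz₂ hz₁
  have hz := mem_insert_self z₁ (insert z₂ D)
  have hz' : z₁ ∉ D := fun hz => hz₁ (mem_insert_of_mem hz)
  rw [← hP, ← h.card_insert_insert hz₂ hz₁, ← add_assoc, ← add_assoc]
  exact (h.handle hy hq hz₂ hz₁).realizable_add hz
    (by rw [h₁.card_cycleThrough_new hD' hz hz', hya])
    (by rw [h₂.card_cycleThrough_new hD' hz hz', hxb])
    (h₁.cycleTypeOn_eq hD' hya hA) (h₂.cycleTypeOn_eq hD' hxb hB) (by omega)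

theorem merge (h : Realizable Ω n A (r ::ₘ s ::ₘ B)) (hk : 2 ≤ k)
    (hcard : A.sum + k ≤ Fintype.card Ω) :
    Realizable Ω (n + 2) (k ::ₘ A) ((r + s + k) ::ₘ B) := by
  obtain ⟨D, P, τ₁, τ₂, h, hP, hA, hB⟩ := h
  have hD : #D = A.sum := by rw [← hA, sum_cycleTypeOn h.support_left]
  obtain ⟨x, hx, x', hx', hxx, hxr, hxs⟩ :=
    exists_of_cycleTypeOn_eq_cons_cons h.support_right hB
  obtain ⟨y, hy, hxy⟩ := h.exists_sameCycle_right hx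
  obtain ⟨w, hw, hxw⟩ := h.exists_sameCycle_right hx'
  rw [cycleThrough_eq_iff.2 hxy] at hxr
  rw [cycleThrough_eq_iff.2 hxw] at hxs
  have hyw : ¬ SameCycle τ₂ y w := fun hyw => hxx (hxy.trans (hyw.trans hxw.symm))
  obtain ⟨z₂, hz₂, z₁, hz₁⟩ := exists_notMem_insert (s := D) (by omega)
  have hD' := card_insert_insert_of_notMem hz₂ hz₁
  have hyD := h.subset hy
  have hwD := h.subset hw
  have hmerged := (cycleTypeOn_mul_swap h.support_right hyD hwD hyw hxr hxs).2 hB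
  have hyrs : #(cycleThrough (τ₂ * swap y w) y) = r + s := by
    rw [card_cycleThrough_mul_swap_left hyw, hxr, hxs]
  have h₂ := enlarges_mul_swap_mul_swap (support_mul_swap_subset h.support_right hyD hwD) hyD hwD
    (sameCycle_mul_swap_self hyw) hz₂ hz₁
  have hz := mem_insert_self z₁ (insert z₂ D)
  have htype₁ := cycleTypeOn_mul_swap_of_notMem h.support_left hz₂ hz₁
  rw [hA] at htype₁
  have hz₁rs := h₂.card_cycleThrough_new hD' hz fun hz => hz₁ (mem_insert_of_mem hz)
  rw [hyrs] at hz₁rs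
  have hreal := (h.bivalent hy hw (fun hyw' => hyw (hyw' ▸ SameCycle.refl _ _)) hz₂
    hz₁).realizable_add (j := k - 2) hz htype₁.1 hz₁rs htype₁.2
    (h₂.cycleTypeOn_eq hD' hyrs hmerged) (by omega)
  rwa [h.card_insert_insert hz₂ hz₁, hP, Nat.add_sub_cancel' hk, add_assoc (r + s),
    Nat.add_sub_cancel' hk] at hreal

end Realizable

theorem CyclicPair.realizable_split {u v : ℕ} (h : CyclicPair D P τ₁ τ₂) (hy : y ∈ P) (hw : w ∈ P)
    (hyw : ¬ SameCycle (τ₂ * swap y w) y w) (hr : #(cycleThrough (τ₂ * swap y w) y) = r)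
    (hs : #(cycleThrough (τ₂ * swap y w) w) = s) (hA : cycleTypeOn D τ₁ = A)
    (hB : cycleTypeOn D τ₂ = (r + s) ::ₘ B) (hu : 0 < u) (hv : 0 < v)
    (huv : #D + (u + v) ≤ Fintype.card Ω) :
    Realizable Ω (#P + 2) ((u + v) ::ₘ A) ((r + u) ::ₘ (s + v) ::ₘ B) := by
  obtain ⟨z₂, hz₂, z₁, hz₁⟩ := exists_notMem_insert (s := D) (by omega)
  have hD' := card_insert_insert_of_notMem hz₂ hz₁
  have hyD := h.subset hy
  have hwD := h.subset hw
  have hsupp := support_mul_swap_subset h.support_right hyD hwD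
  have hsplit : cycleTypeOn D (τ₂ * swap y w) = r ::ₘ s ::ₘ B := by
    rwa [← cycleTypeOn_mul_swap hsupp hyD hwD hyw hr hs, mul_swap_mul_self]
  have htype₁ := cycleTypeOn_mul_swap_of_notMem h.support_left hz₂ hz₁
  rw [hA] at htype₁
  obtain ⟨hz₂₁, hz₂r, hz₁s, htype₂⟩ :=
    cycleTypeOn_mul_swap_mul_swap hsupp hyD hwD hyw hz₂ hz₁ hr hs hsplit
  have hz₂₁' : SameCycle (τ₁ * swap z₂ z₁) z₂ z₁ := sameCycle_mul_swap_self
    (not_sameCycle (h.support_left.trans (subset_insert z₂ D)) (mem_insert_self z₂ D) hz₁)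
  have hreal := (h.bivalent hy hw (fun hyw' => hyw (hyw' ▸ SameCycle.refl _ _)) hz₂
    hz₁).realizable_add_add (i := u - 1) (j := v - 1) (mem_insert_of_mem (mem_insert_self z₂ D))
    (mem_insert_self z₁ _) hz₂₁' hz₂₁ (by rw [cycleThrough_eq_iff.2 hz₂₁', htype₁.1]) hz₂r hz₁s
    htype₁.2 htype₂ (by omega)
  rwa [h.card_insert_insert hz₂ hz₁, show 2 + (u - 1 + (v - 1)) = u + v by omega,
    show r + 1 + (u - 1) = r + u by omega, show s + 1 + (v - 1) = s + v by omega] at hreal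

namespace Realizable

theorem split_of_eq_sum (h : Realizable Ω A.sum A ((r + s) ::ₘ B)) (hr : 0 < r) (hs : 0 < s)
    {u v : ℕ} (hu : 0 < u) (hv : 0 < v) (huv : A.sum + (u + v) ≤ Fintype.card Ω) :
    Realizable Ω (A.sum + 2) ((u + v) ::ₘ A) ((r + u) ::ₘ (s + v) ::ₘ B) := by
  obtain ⟨D, P, τ₁, τ₂, h, hP, hA, hB⟩ := h
  have hD : #D = A.sum := by rw [← hA, sum_cycleTypeOn h.support_left]
  obtain rfl : P = D := eq_of_subset_of_card_le h.subset (by rw [hP, hD])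
  obtain ⟨y, hy, hyrs⟩ := exists_of_cycleTypeOn_eq_cons hB
  obtain ⟨w, hyw, hyw', hyr, hws⟩ := exists_card_cycleThrough_mul_swap hr hs hyrs
  rw [← hD] at huv ⊢
  exact h.realizable_split hy (mem_of_sameCycle h.support_right hy hyw) hyw' hyr hws hA hB hu hv huv

theorem exists_split (h : Realizable Ω n A B) (hB : B.card < n) :
    ∃ r s B', 0 < r ∧ 0 < s ∧ B = (r + s) ::ₘ B' ∧ ∀ u v, 0 < u → 0 < v →
      A.sum + (u + v) ≤ Fintype.card Ω →
        Realizable Ω (n + 2) ((u + v) ::ₘ A) ((r + u) ::ₘ (s + v) ::ₘ B') := by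
  obtain ⟨D, P, τ₁, τ₂, h, rfl, hA, rfl⟩ := h
  have hD : #D = A.sum := by rw [← hA, sum_cycleTypeOn h.support_left]
  rw [cycleTypeOn, Multiset.card_map] at hB
  obtain ⟨y, hy, w, hw, hne, heq⟩ := exists_ne_map_eq_of_card_lt_of_maps_to hB
    fun x hx => mem_image_of_mem (cycleThrough τ₂) (h.subset hx)
  have hyw := not_sameCycle_mul_swap hne heq
  have hsupp := support_mul_swap_subset h.support_right (h.subset hy) (h.subset hw)
  obtain ⟨B', -, hB'⟩ := exists_cycleTypeOn_mul_swap hsupp (h.subset hy) (h.subset hw) hyw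
  rw [mul_swap_mul_self] at hB'
  rw [← hD]
  exact ⟨_, _, B', card_cycleThrough_pos _ y, card_cycleThrough_pos _ w,
    hB', fun u v hu hv huv => h.realizable_split hy hw hyw rfl rfl hA hB' hu hv huv⟩

end Realizable

/-! ### The numerical induction -/

/-- The numerical conditions on a pair of partitions `A`, `B` of the same number to be the cycle
types of a transitive pair whose product has an `n`-cycle and otherwise fixed points. The equation
for the cardinalities is the Euler formula for the genus `g` of the corresponding map. -/
structure Admissible (n g : ℕ) (A B : Multiset ℕ) : Prop where
  zero_notMem_left : 0 ∉ A
  zero_notMem_right : 0 ∉ B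
  sum_eq : A.sum = B.sum
  card_add_card : A.card + B.card + 2 * g = n + 1
  le_sum : n ≤ A.sum
  eq_sum : g = 0 → n = A.sum

namespace Admissible

theorem symm (h : Admissible n g A B) : Admissible n g B A where
  zero_notMem_left := h.zero_notMem_right
  zero_notMem_right := h.zero_notMem_left
  sum_eq := h.sum_eq.symm
  card_add_card := by rw [add_comm B.card, h.card_add_card]
  le_sum := h.sum_eq ▸ h.le_sum
  eq_sum := h.sum_eq ▸ h.eq_sum

theorem pos_of_mem (h : Admissible n g A B) (ha : a ∈ A) : 0 < a :=
  Nat.pos_of_ne_zero fun ha₀ => h.zero_notMem_left (ha₀ ▸ ha)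

theorem exists_mem (h : Admissible n g A B) : ∃ a, a ∈ A := by
  by_contra! hA
  obtain rfl := Multiset.eq_zero_of_forall_notMem hA
  have hn := h.le_sum
  have hcard := h.card_add_card
  have hB := Multiset.card_nsmul_le_sum (a := 1) fun _ hb => h.symm.pos_of_mem hb
  rw [← h.sum_eq] at hB
  simp only [Multiset.sum_zero, Multiset.card_zero, smul_eq_mul] at hn hB hcard
  omega

theorem sum_pos (h : Admissible n g A B) : 0 < A.sum := by
  obtain ⟨a, ha⟩ := h.exists_mem
  exact (h.pos_of_mem ha).trans_le (Multiset.le_sum_of_mem ha)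

theorem leaf (h : Admissible (n + 1) g (a ::ₘ A) ((b + a) ::ₘ B)) (hb : 0 < b) (hn : n ≤ A.sum) :
    Admissible n g A (b ::ₘ B) := by
  obtain ⟨hA, hB, hsum, hcard, hle, heq⟩ := h
  simp only [Multiset.mem_cons, Multiset.sum_cons, Multiset.card_cons, not_or] at *
  exact ⟨hA.2, by simpa using ⟨hb.ne, hB.2⟩, by simp; omega, by simp; omega, by omega, by omega⟩

theorem handle (h : Admissible (n + 2) (g + 1) ((a + (2 + k)) ::ₘ A) ((b + (2 + k)) ::ₘ B))
    (ha : 0 < a) (hb : 0 < b) (hn : n = a + A.sum) : Admissible n g (a ::ₘ A) (b ::ₘ B) := by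
  obtain ⟨hA, hB, hsum, hcard, -, -⟩ := h
  simp only [Multiset.mem_cons, Multiset.sum_cons, Multiset.card_cons, not_or] at *
  exact ⟨by simpa using ⟨ha.ne, hA.2⟩, by simpa using ⟨hb.ne, hB.2⟩, by simp; omega, by simp; omega,
    by simp [hn], by simp [hn]⟩

theorem merge (h : Admissible (n + 2) (g + 1) (k ::ₘ A) ((r + s + k) ::ₘ B)) (hr : 0 < r)
    (hs : 0 < s) (hn : n = A.sum) : Admissible n g A (r ::ₘ s ::ₘ B) := by
  obtain ⟨hA, hB, hsum, hcard, -, -⟩ := h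
  simp only [Multiset.mem_cons, Multiset.sum_cons, Multiset.card_cons, not_or] at *
  exact ⟨hA.2, by simpa using ⟨hr.ne, hs.ne, hB.2⟩, by simp; omega, by simp; omega, hn.le,
    fun _ => hn⟩

theorem split {u v : ℕ} (h : Admissible (n + 2) g ((u + v) ::ₘ A) ((r + u) ::ₘ (s + v) ::ₘ B))
    (hr : 0 < r) (hn : n = A.sum) : Admissible n g A ((r + s) ::ₘ B) := by
  obtain ⟨hA, hB, hsum, hcard, -, -⟩ := h
  simp only [Multiset.mem_cons, Multiset.sum_cons, Multiset.card_cons, not_or] at *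
  exact ⟨hA.2, by simpa using ⟨by omega, hB.2.2⟩, by simp; omega, by simp; omega,
    hn.le, fun _ => hn⟩

theorem of_cons_cons (h : Admissible (n + 2) g (a ::ₘ A) (a ::ₘ B)) (hg : 0 < g)
    (hn : n ≤ A.sum) : Admissible n g A B := by
  obtain ⟨hA, hB, hsum, hcard, -, -⟩ := h
  simp only [Multiset.mem_cons, Multiset.sum_cons, Multiset.card_cons, not_or] at *
  exact ⟨hA.2, hB.2, by omega, by omega, hn, fun h => absurd h hg.ne'⟩

end Admissible

variable (Ω) in
/-- The induction hypothesis in the proof that admissible data are realizable. -/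
def RealizableBelow (N : ℕ) : Prop :=
  ∀ ⦃n g : ℕ⦄ ⦃A B : Multiset ℕ⦄, Admissible n g A B → A.sum < N → Realizable Ω n A B

namespace Admissible

theorem realizable_of_lt (h : Admissible n g A B) (ih : RealizableBelow Ω A.sum)
    (hcard : A.sum ≤ Fintype.card Ω) (ha : a ∈ A) (hb : b ∈ B) (hab : a < b)
    (han : a + n ≤ A.sum + 1) : Realizable Ω n A B := by
  have ha₀ : 0 < a := h.pos_of_mem ha
  obtain ⟨A, rfl⟩ := Multiset.exists_cons_of_mem ha
  obtain ⟨B, rfl⟩ := Multiset.exists_cons_of_mem hb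
  obtain ⟨c, rfl⟩ := Nat.exists_eq_add_of_le' hab.le
  obtain ⟨n, rfl⟩ : ∃ n', n = n' + 1 := by
    have := h.card_add_card
    simp only [Multiset.card_cons] at this
    exact ⟨n - 1, by omega⟩
  rw [Multiset.sum_cons] at *
  exact (ih (h.leaf (by omega) (by omega)) (by omega)).leaf ha₀ (by omega)

theorem realizable_of_three_le (h : Admissible n g A B) (ih : RealizableBelow Ω A.sum)
    (hcard : A.sum ≤ Fintype.card Ω) (hg : 0 < g) (ha : a ∈ A) (hb : b ∈ B)
    (han : A.sum + 3 ≤ a + n) (hbn : A.sum + 3 ≤ b + n) : Realizable Ω n A B := by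
  obtain ⟨A, rfl⟩ := Multiset.exists_cons_of_mem ha
  obtain ⟨B, rfl⟩ := Multiset.exists_cons_of_mem hb
  have hcards := h.card_add_card
  have hle := h.le_sum
  simp only [Multiset.card_cons, Multiset.sum_cons] at *
  obtain ⟨k, hk⟩ := Nat.exists_eq_add_of_le hle
  obtain ⟨a, rfl⟩ := Nat.exists_eq_add_of_le' (show 2 + k ≤ a by omega)
  obtain ⟨b, rfl⟩ := Nat.exists_eq_add_of_le' (show 2 + k ≤ b by omega)
  obtain ⟨n, rfl⟩ := Nat.exists_eq_add_of_le' (show 2 ≤ n by omega)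
  obtain ⟨g, rfl⟩ := Nat.exists_eq_add_of_le' hg
  refine (ih (h.handle ?_ ?_ ?_) ?_).handle ?_ <;> (try rw [Multiset.sum_cons]) <;> omega

theorem realizable_of_forall_eq (h : Admissible n g A B) (ih : RealizableBelow Ω A.sum)
    (hcard : A.sum ≤ Fintype.card Ω) (hg : 0 < g) (hA : ∀ x ∈ A, x = a) (hB : ∀ x ∈ B, x = a)
    (han : a + n ≤ A.sum + 2) : Realizable Ω n A B := by
  obtain ⟨x, hx⟩ := h.exists_mem
  obtain ⟨y, hy⟩ := h.symm.exists_mem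
  have ha : 0 < a := h.pos_of_mem (hA x hx ▸ hx)
  obtain ⟨A, rfl⟩ := Multiset.exists_cons_of_mem (hA x hx ▸ hx)
  obtain ⟨B, rfl⟩ := Multiset.exists_cons_of_mem (hB y hy ▸ hy)
  obtain ⟨n, rfl⟩ : ∃ n', n = n' + 2 := by
    have := h.card_add_card
    simp only [Multiset.card_cons] at this
    exact ⟨n - 2, by omega⟩
  rw [Multiset.sum_cons] at *
  have h' := h.of_cons_cons hg (by omega)
  have hcards := h'.card_add_card
  obtain ⟨c, hc⟩ := h'.exists_mem
  have hAcard := Multiset.card_pos_iff_exists_mem.2 ⟨c, hc⟩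
  obtain ⟨r, s, B, hr, hs, rfl, hsplit⟩ := (ih h' (by omega)).exists_split (by omega)
  obtain rfl : r + s = a := hB _ (Multiset.mem_cons_of_mem (Multiset.mem_cons_self _ _))
  have hreal := hsplit s r hs hr (by omega)
  rwa [add_comm s r] at hreal

theorem realizable_of_forall_two_le (h : Admissible n g A B) (ih : RealizableBelow Ω A.sum)
    (hcard : A.sum ≤ Fintype.card Ω) (hg : 0 < g) (hA : ∀ a ∈ A, a + n = A.sum + 2)
    (hB : ∀ b ∈ B, A.sum + 2 ≤ b + n) : Realizable Ω n A B := by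
  obtain ⟨a, ha⟩ := h.exists_mem
  obtain ⟨b, hb⟩ := h.symm.exists_mem
  obtain ⟨A, rfl⟩ := Multiset.exists_cons_of_mem ha
  obtain ⟨B, rfl⟩ := Multiset.exists_cons_of_mem hb
  have hcards := h.card_add_card
  have hsum := h.sum_eq
  have hle := h.le_sum
  have han := hA a ha
  have hbn := hB b hb
  simp only [Multiset.card_cons, Multiset.sum_cons] at *
  obtain ⟨n, rfl⟩ := Nat.exists_eq_add_of_le' (show 2 ≤ n by omega)
  obtain rfl : n = A.sum := by omega
  obtain rfl | ⟨b', hb'⟩ := B.empty_or_exists_mem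
  · simp only [Multiset.card_zero, Multiset.sum_zero] at hcards hsum
    have hAcard : 0 < A.card := Nat.pos_of_ne_zero fun hA₀ => by
      rw [Multiset.card_eq_zero.1 hA₀, Multiset.card_zero, Multiset.sum_zero] at hcards
      omega
    obtain ⟨a', ha'⟩ := Multiset.card_pos_iff_exists_mem.1 hAcard
    have haa' := hA a' (Multiset.mem_cons_of_mem ha')
    have hle' := Multiset.le_sum_of_mem ha'
    obtain ⟨g, rfl⟩ := Nat.exists_eq_add_of_le' hg
    obtain rfl : b = 1 + (A.sum - 1) + a := by omega
    exact (ih (h.merge one_pos (by omega) rfl) (by omega)).merge (by omega) (by omega)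
  · obtain ⟨B, rfl⟩ := Multiset.exists_cons_of_mem hb'
    have hbn' := hB b' (Multiset.mem_cons_of_mem hb')
    obtain ⟨u, rfl⟩ := Nat.exists_eq_add_of_le' (show 1 ≤ a by omega)
    obtain ⟨r, rfl⟩ := Nat.exists_eq_add_of_le' (show u ≤ b by omega)
    obtain ⟨s, rfl⟩ := Nat.exists_eq_add_of_le' (show 1 ≤ b' by omega)
    exact (ih (h.split (by omega) rfl) (by omega)).split_of_eq_sum (by omega) (by omega)
      (by omega) one_pos (by omega)

theorem eq_one_of_genus_zero (h : Admissible n 0 A B) (hA : 1 ∈ A) (hB : ∀ b ∈ B, b ≤ 1) :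
    n = 1 ∧ A = {1} ∧ B = {1} := by
  have hB₁ : ∀ b ∈ B, b = 1 := fun b hb => (hB b hb).antisymm (h.symm.pos_of_mem hb)
  have hBrep := Multiset.eq_replicate_card.2 hB₁
  have hBsum : B.sum = B.card := by rw [hBrep]; simp
  have hn := h.eq_sum rfl
  have hsum := h.sum_eq
  have hcard := h.card_add_card
  obtain ⟨c, rfl⟩ := Multiset.card_eq_one.1 (show A.card = 1 by omega)
  obtain rfl := Multiset.mem_singleton.1 hA
  rw [Multiset.sum_singleton] at hn hsum
  exact ⟨hn, rfl, by rw [hBrep, ← hBsum, ← hsum, Multiset.replicate_one]⟩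

theorem exists_one_mem (h : Admissible n 0 A B) : 1 ∈ A ∨ 1 ∈ B := by
  by_contra! hAB
  have hA : A.card * 2 ≤ A.sum := Multiset.card_nsmul_le_sum fun a ha =>
    lt_of_le_of_ne (h.pos_of_mem ha) fun ha₁ : 1 = a => hAB.1 (ha₁ ▸ ha)
  have hB : B.card * 2 ≤ B.sum := Multiset.card_nsmul_le_sum fun b hb =>
    lt_of_le_of_ne (h.symm.pos_of_mem hb) fun hb₁ : 1 = b => hAB.2 (hb₁ ▸ hb)
  have hn := h.eq_sum rfl
  have hsum := h.sum_eq
  have hcard := h.card_add_card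
  omega

theorem realizable_of_genus_zero [Nonempty Ω] (h : Admissible n 0 A B)
    (hle : ∀ a ∈ A, ∀ b ∈ B, a + n ≤ A.sum + 1 → b ≤ a)
    (hle' : ∀ a ∈ A, ∀ b ∈ B, b + n ≤ A.sum + 1 → a ≤ b) : Realizable Ω n A B := by
  have hn := h.eq_sum rfl
  obtain hA | hB := h.exists_one_mem
  · obtain ⟨rfl, rfl, rfl⟩ := h.eq_one_of_genus_zero hA fun b hb => hle 1 hA b hb (by omega)
    exact Realizable.one
  · obtain ⟨rfl, rfl, rfl⟩ := h.symm.eq_one_of_genus_zero hB fun a ha => hle' a ha 1 hB (by omega)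
    exact Realizable.one

theorem realizable_of_forall_le_two (h : Admissible n g A B) (ih : RealizableBelow Ω A.sum)
    (hcard : A.sum ≤ Fintype.card Ω) (hg : 0 < g) (hA : ∀ a ∈ A, a + n ≤ A.sum + 2)
    (hle : ∀ a ∈ A, ∀ b ∈ B, a + n ≤ A.sum + 1 → b ≤ a)
    (hle' : ∀ a ∈ A, ∀ b ∈ B, b + n ≤ A.sum + 1 → a ≤ b) : Realizable Ω n A B := by
  obtain ⟨a₀, ha₀⟩ := h.exists_mem
  obtain ⟨b₀, hb₀⟩ := h.symm.exists_mem
  by_cases hsmall : ∃ a ∈ A, a + n ≤ A.sum + 1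
  · obtain ⟨a, ha, han⟩ := hsmall
    have hB : ∀ b ∈ B, b = a := fun b hb => by
      have := hle a ha b hb han
      exact this.antisymm (hle' a ha b hb (by omega))
    refine h.realizable_of_forall_eq ih hcard hg (fun x hx => ?_) hB (hA a ha)
    rw [← hB b₀ hb₀] at han ⊢
    have := hle' x hx b₀ hb₀ han
    exact this.antisymm (hle x hx b₀ hb₀ (by omega))
  · push Not at hsmall
    refine h.realizable_of_forall_two_le ih hcard hg (fun a ha => ?_) fun b hb => ?_
    · exact (hA a ha).antisymm (hsmall a ha)
    · by_contra! hb'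
      have := hle' a₀ ha₀ b hb (by omega)
      have := hsmall a₀ ha₀
      omega

theorem realizable (h : Admissible n g A B) (hcard : A.sum ≤ Fintype.card Ω) :
    Realizable Ω n A B := by
  induction hN : A.sum using Nat.strong_induction_on generalizing n g A B with
  | _ N ih =>
  subst hN
  have ih : RealizableBelow Ω A.sum := fun _ _ _ _ h' hlt => ih _ hlt h' (by omega) rfl
  have ih' : RealizableBelow Ω B.sum := h.sum_eq ▸ ih
  have hcard' : B.sum ≤ Fintype.card Ω := h.sum_eq ▸ hcard
  have hsum := h.sum_eq
  by_cases hlt : ∃ a ∈ A, ∃ b ∈ B, a + n ≤ A.sum + 1 ∧ a < b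
  · obtain ⟨a, ha, b, hb, han, hab⟩ := hlt
    exact h.realizable_of_lt ih hcard ha hb hab han
  by_cases hgt : ∃ a ∈ A, ∃ b ∈ B, b + n ≤ A.sum + 1 ∧ b < a
  · obtain ⟨a, ha, b, hb, hbn, hba⟩ := hgt
    exact (h.symm.realizable_of_lt ih' hcard' hb ha hba (hsum ▸ hbn)).symm
  push Not at hlt hgt
  obtain rfl | hg := g.eq_zero_or_pos
  · have : Nonempty Ω := Fintype.card_pos_iff.1 (h.sum_pos.trans_le hcard)
    exact h.realizable_of_genus_zero hlt hgt
  by_cases hA : ∀ a ∈ A, a + n ≤ A.sum + 2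
  · exact h.realizable_of_forall_le_two ih hcard hg hA hlt hgt
  by_cases hB : ∀ b ∈ B, b + n ≤ A.sum + 2
  · rw [hsum] at hlt hgt hB
    exact (h.symm.realizable_of_forall_le_two ih' hcard' hg hB (fun b hb a ha => hgt a ha b hb)
      fun b hb a ha => hlt a ha b hb).symm
  push Not at hA hB
  obtain ⟨a, ha, han⟩ := hA
  obtain ⟨b, hb, hbn⟩ := hB
  exact h.realizable_of_three_le ih hcard hg ha hb han hbn

end Admissible

theorem CyclicPair.isPretransitive_closure (h : CyclicPair univ P τ₁ τ₂) {S : Set (Perm Ω)}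
    (h₁ : τ₁ ∈ S) (h₂ : τ₂ ∈ S) : MulAction.IsPretransitive (Subgroup.closure S) Ω := by
  refine MulAction.IsPretransitive.mk fun x y => ?_
  have hτ₁ := Subgroup.subset_closure h₁
  obtain ⟨p, hp, i, hi⟩ := h.exists_sameCycle_left x (mem_univ x)
  obtain ⟨q, hq, j, hj⟩ := h.exists_sameCycle_left y (mem_univ y)
  obtain ⟨k, hk⟩ := h.isCycleOn.2 hp hq
  refine ⟨⟨τ₁ ^ (-j) * (τ₁ * τ₂) ^ k * τ₁ ^ i, mul_mem (mul_mem (zpow_mem hτ₁ _)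
    (zpow_mem (mul_mem hτ₁ (Subgroup.subset_closure h₂)) k)) (zpow_mem hτ₁ i)⟩, ?_⟩
  simp [Subgroup.smul_def, hi, hk, ← hj]

theorem CyclicPair.support_mul_eq (h : CyclicPair D P τ₁ τ₂) (hP : 1 < #P) :
    (τ₁ * τ₂).support = P :=
  h.support_mul.antisymm fun _ hp => mem_support.2 (h.isCycleOn.apply_ne
    (one_lt_card_iff_nontrivial.1 hP) hp)

theorem CyclicPair.isCycle_mul (h : CyclicPair D P τ₁ τ₂) (hP : 1 < #P) : (τ₁ * τ₂).IsCycle :=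
  isCycle_iff_exists_isCycleOn.2 ⟨P, one_lt_card_iff_nontrivial.1 hP, h.isCycleOn,
    fun _ hx => h.support_mul (mem_support.2 hx)⟩

end Boccara

theorem prop_2_1_general {Ω : Type*} [Fintype Ω] [DecidableEq Ω] {m g : ℕ} {A B : Multiset ℕ}
    (hA₀ : 0 ∉ A) (hB₀ : 0 ∉ B) (hA : A.sum = Fintype.card Ω) (hB : B.sum = Fintype.card Ω)
    (hm : 0 < m) (hcard : A.card + B.card + 2 * g = m + 2) (hle : m + 1 ≤ Fintype.card Ω)
    (hg : g = 0 → m + 1 = Fintype.card Ω) :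
    ∃ τ₁ τ₂ σ₁ : Equiv.Perm Ω, τ₁ * τ₂ * σ₁ = 1 ∧ τ₁.partition.parts = A ∧
      τ₂.partition.parts = B ∧ σ₁.IsCycle ∧ σ₁.support.card = m + 1 ∧
      MulAction.IsPretransitive (Subgroup.closure {τ₁, τ₂, σ₁}) Ω := by
  have h : Boccara.Admissible (m + 1) g A B :=
    ⟨hA₀, hB₀, by rw [hA, hB], by rw [hcard], hA ▸ hle, hA ▸ hg⟩
  obtain ⟨D, P, τ₁, τ₂, hpair, hP, rfl, rfl⟩ := h.realizable (Ω := Ω) hA.le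
  rw [Boccara.sum_cycleTypeOn hpair.support_left, Finset.card_eq_iff_eq_univ] at hA
  subst hA
  refine ⟨τ₁, τ₂, (τ₁ * τ₂)⁻¹, mul_inv_cancel _, (Boccara.cycleTypeOn_univ τ₁).symm,
    (Boccara.cycleTypeOn_univ τ₂).symm, (hpair.isCycle_mul (by omega)).inv, ?_,
    hpair.isPretransitive_closure (by simp) (by simp)⟩
  rw [Equiv.Perm.support_inv, hpair.support_mul_eq (by omega), hP]

/-- Proposition 2.1 (the case `ℓ = 1` of Proposition 1.4, due to Boccara):
for positive integers `d, g`, partitions `(a₁,…,a_p)`, `(b₁,…,b_q)` of `d`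
and `m₁ = p + q - 2 + 2g` with `m₁ + 1 ≤ d`, there exist permutations
`τ₁, τ₂, σ₁ ∈ S_d` with `τ₁ τ₂ σ₁ = id`, prescribed cycle types, `σ₁` an
`(m₁+1)`-cycle, generating a transitive subgroup. -/
theorem prop_2_1 (d g p q m₁ : ℕ) (hd : 0 < d) (hg : 0 < g)
    (hp : 0 < p) (hq : 0 < q)
    (a : Fin p → ℕ) (b : Fin q → ℕ)
    (ha : ∀ i, 0 < a i) (hb : ∀ i, 0 < b i) (hm : 0 < m₁)
    (hsa : ∑ i, a i = d) (hsb : ∑ i, b i = d)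
    (hsm : m₁ = p + q - 2 + 2 * g)
    (hmd : m₁ + 1 ≤ d) :
    ∃ (τ₁ τ₂ σ₁ : Equiv.Perm (Fin d)),
      τ₁ * τ₂ * σ₁ = 1 ∧
      fullCycleType τ₁ = Finset.univ.val.map a ∧
      fullCycleType τ₂ = Finset.univ.val.map b ∧
      σ₁.IsCycle ∧ σ₁.support.card = m₁ + 1 ∧
      (∀ x y : Fin d,
        ∃ π ∈ Subgroup.closure ({τ₁, τ₂, σ₁} : Set (Equiv.Perm (Fin d))),
          π x = y) := by
  have htype (τ : Equiv.Perm (Fin d)) : τ.partition.parts = fullCycleType τ := by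
    rw [Equiv.Perm.parts_partition, Fintype.card_fin, fullCycleType]
  obtain ⟨τ₁, τ₂, σ₁, hmul, hτ₁, hτ₂, hσ₁, hcard, htrans⟩ :=
    prop_2_1_general (Ω := Fin d) (m := m₁) (g := g) (A := Finset.univ.val.map a)
      (B := Finset.univ.val.map b) (by simpa using fun i => (ha i).ne')
      (by simpa using fun i => (hb i).ne') (hsa.trans (Fintype.card_fin d).symm)
      (hsb.trans (Fintype.card_fin d).symm) hm
      (by simp; omega) (by simpa using hmd) fun h => absurd h hg.ne'
  refine ⟨τ₁, τ₂, σ₁, hmul, htype τ₁ ▸ hτ₁, htype τ₂ ▸ hτ₂, hσ₁, hcard, fun x y => ?_⟩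
  obtain ⟨π, hπ⟩ := htrans.exists_smul_eq x y
  exact ⟨π, π.2, hπ⟩
end

section
/- Let d be a positive integer and p a positive integer with p + 1 ≤ d. Suppose a : {1,...,p} → ℤ>0 and b : {1,...,p} → ℤ>0 are partitions of d, each with exactly p parts (i.e. a₁ + ⋯ + a_p = d and b₁ + ⋯ + b_p = d). Then there exist permutations τ₁, τ₂, σ₁, σ₂ in the symmetric group S_d such that: (1) τ₁ τ₂ σ₁ σ₂ = id; (2) the cycle type of τ₁ (as a partition of d, counting each fixed point as a part equal to 1) is (a₁, …, a_p), the cycle type of τ₂ is (b₁, …, b_p), and σ₁ and σ₂ are each a single cycle of length p + 1; (3) the subgroup of S_d generated by τ₁, τ₂, σ₁, σ₂ acts transitively on {1, 2, …, d}. -/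
/-!
If the words of a list `L` are concatenated to a word without repetitions, then
`L.flatten.formPerm = heads.formPerm * (L.map List.formPerm).prod`, where `heads` lists the first
letters of the words: a long cycle is the product of the cycles along its blocks and of one cycle
through their starting points. If the first block starts with `x, z`, then multiplying by
`swap z x` on the left deletes `x` from the long cycle and adds `z` to `heads`; some block has two
letters as soon as there are fewer blocks than letters, and we may put it first. Hence the
`(d - 1)`-cycle on a word `l` that misses only `x` is `σ * τ`, with `τ` of any prescribed cycle type
with `p < d` parts and `σ` a `(p + 1)`-cycle moving `x`. Doing this for `l` and for `l.reverse`,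
whose cycles are inverse to each other, gives `σ * τ * (σ' * τ') = 1`, which is rearranged to the
desired order by a conjugation. The group generated is transitive because it contains the
`(d - 1)`-cycle on `l` and an element moving `x`.
-/

open Equiv Equiv.Perm

section Flatten

variable {α : Type*}

theorem filterMap_head?_sublist_flatten (L : List (List α)) :
    (L.filterMap List.head?).Sublist L.flatten := by
  induction L with
  | nil => simp
  | cons l L ih =>
    cases l with
    | nil => simpa [List.filterMap_cons] using ih
    | cons x l => simpa using ih.trans (List.sublist_append_right l _)

theorem length_filterMap_head? {L : List (List α)} (h : [] ∉ L) :
    (L.filterMap List.head?).length = L.length := by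
  induction L with
  | nil => rfl
  | cons l L ih => cases l <;> simp_all

theorem exists_flatten_eq_map_length_eq {l : List α} {A : List ℕ} (h : A.sum = l.length) :
    ∃ L : List (List α), L.flatten = l ∧ L.map List.length = A :=
  ⟨A.splitLengths l, List.flatten_splitLengths _ _ h.ge, List.map_splitLengths_length _ _ h.le⟩

end Flatten

section FormPerm

variable {α : Type*} [DecidableEq α]

theorem formPerm_append_cons (l : List α) (x : α) (m : List α) :
    (l ++ x :: m).formPerm = (l ++ [x]).formPerm * (x :: m).formPerm := by
  induction l with
  | nil => simp
  | cons y l ih => cases l <;> simp_all [mul_assoc]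

theorem formPerm_cons_append_cons {x : α} {l : List α} {y : α} (h : (x :: l ++ [y]).Nodup)
    (m : List α) :
    (x :: l ++ y :: m).formPerm = swap x y * (x :: l).formPerm * (y :: m).formPerm := by
  have hrot : (x :: l ++ [y]).formPerm = (y :: x :: l).formPerm :=
    List.formPerm_eq_of_isRotated h List.isRotated_append
  rw [formPerm_append_cons, hrot, List.formPerm_cons_cons, swap_comm]

theorem disjoint_formPerm {l m : List α} (h : l.Disjoint m) :
    Perm.Disjoint l.formPerm m.formPerm := fun a ↦ by
  by_cases ha : a ∈ l
  · exact .inr (List.formPerm_apply_of_notMem (h ha))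
  · exact .inl (List.formPerm_apply_of_notMem ha)

theorem formPerm_flatten : ∀ {L : List (List α)}, L.flatten.Nodup →
    L.flatten.formPerm = (L.filterMap List.head?).formPerm * (L.map List.formPerm).prod
  | [], _ => by simp
  | [] :: L, h => by simpa [List.filterMap_cons] using formPerm_flatten (L := L) h
  | [x :: l], _ => by simp
  | (x :: l) :: [] :: L, h => by
    simpa [List.filterMap_cons] using formPerm_flatten (L := (x :: l) :: L) h
  | (x :: l) :: (y :: m) :: L, h => by
    have hrest := formPerm_flatten (L := (y :: m) :: L) (List.nodup_append.1 h).2.1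
    set heads := ((y :: m) :: L).filterMap List.head? with hheads
    have hcomm : Commute (x :: l).formPerm heads.formPerm :=
      (disjoint_formPerm <| List.disjoint_of_subset_right
        (filterMap_head?_sublist_flatten _).subset (List.disjoint_of_nodup_append h)).commute
    have hxy : (x :: l ++ [y]).Nodup := h.sublist (by simp)
    calc ((x :: l) :: (y :: m) :: L).flatten.formPerm
        = swap x y * (x :: l).formPerm * ((y :: m) :: L).flatten.formPerm := by
          simpa using formPerm_cons_append_cons hxy (m ++ L.flatten)
      _ = swap x y * heads.formPerm *
            ((x :: l).formPerm * (((y :: m) :: L).map List.formPerm).prod) := by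
          rw [hrest, mul_assoc, ← mul_assoc _ heads.formPerm, hcomm.eq]
          simp only [mul_assoc]
      _ = _ := by simp [hheads]
  termination_by L => L.length

theorem formPerm_cons_append_flatten {x z : α} {u : List α} {L : List (List α)}
    (h : (x :: z :: u ++ L.flatten).Nodup) :
    (z :: u ++ L.flatten).formPerm = (z :: x :: L.filterMap List.head?).formPerm *
      (((x :: z :: u) :: L).map List.formPerm).prod :=
  calc (z :: u ++ L.flatten).formPerm
      = swap z x * (x :: z :: u ++ L.flatten).formPerm := by simp [swap_comm z x]
    _ = swap z x * ((x :: L.filterMap List.head?).formPerm *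
          (((x :: z :: u) :: L).map List.formPerm).prod) := by
      simpa using formPerm_flatten (L := (x :: z :: u) :: L) h
    _ = _ := by rw [List.formPerm_cons_cons, mul_assoc]

variable [Fintype α]

theorem cycleType_formPerm {l : List α} (h : l.Nodup) :
    l.formPerm.cycleType = Multiset.filter (2 ≤ ·) {l.length} := by
  by_cases hl : 2 ≤ l.length
  · have hne : ∀ x, l ≠ [x] := by rintro x rfl; simp at hl
    rw [(List.isCycle_formPerm h hl).cycleType, List.support_formPerm_of_nodup l h hne,
      List.toFinset_card_of_nodup h, Multiset.filter_singleton, if_pos hl]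
  · rw [Multiset.filter_singleton, if_neg hl, (List.formPerm_eq_one_iff l h).2 (by lia),
      cycleType_one, Multiset.empty_eq_zero]

theorem cycleType_prod_map_formPerm {L : List (List α)} (h : L.flatten.Nodup) :
    (L.map List.formPerm).prod.cycleType =
      Multiset.filter (2 ≤ ·) (L.map List.length : Multiset ℕ) := by
  induction L with
  | nil => simp
  | cons l L ih =>
    obtain ⟨hl, hL, -⟩ := List.nodup_append.1 h
    have hdisj : Perm.Disjoint l.formPerm (L.map List.formPerm).prod := by
      refine disjoint_prod_right _ (List.forall_mem_map.2 fun m hm ↦ disjoint_formPerm ?_)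
      exact List.disjoint_of_subset_right (List.sublist_flatten_of_mem hm).subset
        (List.disjoint_of_nodup_append h)
    rw [List.map_cons, List.prod_cons, hdisj.cycleType_mul, cycleType_formPerm hl, ih hL,
      ← Multiset.filter_add, List.map_cons, ← Multiset.cons_coe, Multiset.singleton_add]

end FormPerm

theorem exists_two_le_of_card_lt_sum {m : Multiset ℕ} (h : m.card < m.sum) : ∃ n ∈ m, 2 ≤ n := by
  by_contra! hm
  exact h.not_ge (by simpa using Multiset.sum_le_card_nsmul m 1 fun n hn ↦ by grind)

theorem exists_isCycle_mul_eq_formPerm {α : Type*} [Fintype α] [DecidableEq α] {x : α} {l : List α}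
    (hl : (x :: l).Nodup) {m : Multiset ℕ} (hm : 0 ∉ m) (hsum : m.sum = (x :: l).length)
    (hcard : m.card < m.sum) :
    ∃ σ τ : Perm α, σ * τ = l.formPerm ∧ τ.cycleType = m.filter (2 ≤ ·) ∧
      σ.IsCycle ∧ σ.support.card = m.card + 1 ∧ σ x ≠ x := by
  obtain ⟨n, hnm, hn⟩ := exists_two_le_of_card_lt_sum hcard
  obtain ⟨m, rfl⟩ := Multiset.exists_cons_of_mem hnm
  induction m using Quotient.inductionOn with | _ A
  obtain ⟨L, hL, hLA⟩ := exists_flatten_eq_map_length_eq (l := x :: l) (A := n :: A)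
    (by simpa using hsum)
  obtain ⟨w, L, rfl, rfl, rfl⟩ := List.map_eq_cons_iff.1 hLA
  match w, hn with
  | y :: z :: u, _ =>
  obtain ⟨rfl, rfl⟩ : y = x ∧ z :: u ++ L.flatten = l := by simpa using hL
  set heads := L.filterMap List.head?
  have hnodup : (z :: y :: heads).Nodup := by
    refine (List.Perm.swap z y heads).nodup (hl.sublist ?_)
    simpa using (filterMap_head?_sublist_flatten L).trans (List.sublist_append_right u _)
  have hlength : heads.length = L.length :=
    length_filterMap_head? fun h ↦ hm (by simpa using h)
  have hsupport : (z :: y :: heads).formPerm.support = (z :: y :: heads).toFinset :=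
    List.support_formPerm_of_nodup _ hnodup (by simp)
  refine ⟨(z :: y :: heads).formPerm, (((y :: z :: u) :: L).map List.formPerm).prod,
    (formPerm_cons_append_flatten hl).symm, cycleType_prod_map_formPerm hl,
    List.isCycle_formPerm hnodup (by simp), ?_, ?_⟩
  · rw [hsupport, List.toFinset_card_of_nodup hnodup]
    simp [hlength]
  · rw [← mem_support, hsupport]
    simp

theorem fullCycleType_eq_of_cycleType_eq {n : ℕ} {τ : Perm (Fin n)} {m : Multiset ℕ} (hm : 0 ∉ m)
    (hsum : m.sum = n) (hτ : τ.cycleType = m.filter (2 ≤ ·)) : fullCycleType τ = m := by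
  have hsplit := Multiset.filter_add_not (2 ≤ ·) m
  obtain ⟨k, hones⟩ : ∃ k, m.filter (¬ 2 ≤ ·) = Multiset.replicate k 1 :=
    ⟨_, Multiset.eq_replicate_card.2 fun i hi ↦ by grind [Multiset.mem_filter]⟩
  have hcard : τ.support.card + k = n := by
    simpa only [Multiset.sum_add, hones, ← hτ, sum_cycleType, Multiset.sum_replicate, smul_eq_mul,
      mul_one, hsum] using congrArg Multiset.sum hsplit
  rw [fullCycleType, Nat.sub_eq_of_eq_add' hcard.symm, hτ, ← hones, hsplit]

theorem exists_isCycle_mul_fullCycleType_eq {d p : ℕ} {x : Fin d} {l : List (Fin d)}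
    (hl : (x :: l).Nodup) (hlen : (x :: l).length = d) (hpd : p < d) {a : Fin p → ℕ}
    (ha : ∀ i, 0 < a i) (hsum : ∑ i, a i = d) :
    ∃ σ τ : Perm (Fin d), σ * τ = l.formPerm ∧ fullCycleType τ = Finset.univ.val.map a ∧
      σ.IsCycle ∧ σ.support.card = p + 1 ∧ σ x ≠ x := by
  set m := Finset.univ.val.map a with hm
  have hm0 : 0 ∉ m := by simpa [hm] using fun i ↦ (ha i).ne'
  have hmsum : m.sum = d := hsum
  have hmcard : m.card = p := by simp [hm]
  obtain ⟨σ, τ, hστ, hτ, hσ⟩ :=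
    exists_isCycle_mul_eq_formPerm hl hm0 (hmsum.trans hlen.symm) (by lia)
  exact ⟨σ, τ, hστ, fullCycleType_eq_of_cycleType_eq hm0 hmsum hτ, hmcard ▸ hσ⟩

theorem isPretransitive_of_formPerm_mem {α : Type*} [DecidableEq α] {G : Subgroup (Perm α)} {x : α}
    {l : List α} (hl : l.Nodup) (hxl : ∀ y, y ∈ x :: l) (hlG : l.formPerm ∈ G) {σ : Perm α}
    (hσ : σ ∈ G) (hσx : σ x ≠ x) : MulAction.IsPretransitive G α := by
  refine (MulAction.isPretransitive_iff_base x).2 fun y ↦ ?_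
  rcases List.mem_cons.1 (hxl y) with rfl | hy
  · exact ⟨1, one_smul _ _⟩
  · have hσxl : σ x ∈ l := (List.mem_cons.1 (hxl (σ x))).resolve_left hσx
    obtain ⟨k, hk⟩ := hl.isCycleOn_formPerm.2 hσxl hy
    exact ⟨⟨l.formPerm ^ k * σ, mul_mem (zpow_mem hlG k) hσ⟩, hk⟩

/-- Lemma 2.3 (case `ℓ = 2`, `p = q = m₁ = m₂` of Proposition 1.4):
for a positive integer `d` and partitions `(a₁,…,a_p)`, `(b₁,…,b_p)` of `d`,
each with exactly `p` parts, with `p + 1 ≤ d`, there exist permutations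
`τ₁, τ₂, σ₁, σ₂ ∈ S_d` with `τ₁ τ₂ σ₁ σ₂ = id`, prescribed cycle types,
`σ₁, σ₂` cycles of length `p + 1`, generating a transitive subgroup. -/
theorem lem_2_3 (d p : ℕ) (hd : 0 < d) (hp : 0 < p) (hpd : p + 1 ≤ d)
    (a : Fin p → ℕ) (b : Fin p → ℕ)
    (ha : ∀ i, 0 < a i) (hb : ∀ i, 0 < b i)
    (hsa : ∑ i, a i = d) (hsb : ∑ i, b i = d) :
    ∃ (τ₁ τ₂ σ₁ σ₂ : Equiv.Perm (Fin d)),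
      τ₁ * τ₂ * σ₁ * σ₂ = 1 ∧
      fullCycleType τ₁ = Finset.univ.val.map a ∧
      fullCycleType τ₂ = Finset.univ.val.map b ∧
      σ₁.IsCycle ∧ σ₁.support.card = p + 1 ∧
      σ₂.IsCycle ∧ σ₂.support.card = p + 1 ∧
      (∀ x y : Fin d,
        ∃ π ∈ Subgroup.closure ({τ₁, τ₂, σ₁, σ₂} : Set (Equiv.Perm (Fin d))),
          π x = y) := by
  obtain ⟨x, l, hxl⟩ : ∃ x l, List.finRange d = x :: l :=
    List.exists_cons_of_length_pos (by simpa using hd)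
  have hl : (x :: l).Nodup := hxl ▸ List.nodup_finRange d
  have hlen : (x :: l).length = d := hxl ▸ List.length_finRange
  obtain ⟨σ, τ, hστ, hτ, hσ, hσp, hσx⟩ := exists_isCycle_mul_fullCycleType_eq hl hlen hpd ha hsa
  obtain ⟨σ', τ', hστ', hτ', hσ', hσp', -⟩ :=
    exists_isCycle_mul_fullCycleType_eq (l := l.reverse) (by simpa using hl)
      (by simpa using hlen) hpd hb hsb
  refine ⟨τ, τ', τ'⁻¹ * σ' * τ'⁻¹⁻¹, σ, ?_, hτ, hτ', hσ'.conj, ?_, hσ, hσp, fun y z ↦ ?_⟩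
  · calc τ * τ' * (τ'⁻¹ * σ' * τ'⁻¹⁻¹) * σ = σ⁻¹ * ((σ * τ) * (σ' * τ')) * σ := by group
      _ = 1 := by simp [hστ, hστ', List.formPerm_reverse]
  · rw [card_support_conj, hσp']
  · set G := Subgroup.closure {τ, τ', τ'⁻¹ * σ' * τ'⁻¹⁻¹, σ}
    have hτG : τ ∈ G := Subgroup.subset_closure (by simp)
    have hσG : σ ∈ G := Subgroup.subset_closure (by simp)
    have := isPretransitive_of_formPerm_mem (List.nodup_cons.1 hl).2
      (fun y ↦ hxl ▸ List.mem_finRange y) (hστ ▸ mul_mem hσG hτG) hσG hσx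
    obtain ⟨⟨π, hπ⟩, hyz⟩ := MulAction.exists_smul_eq G y z
    exact ⟨π, hπ, hyz⟩
end
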